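/- arXiv:2509.25432 — 2 statements merged into one kernel-verified Lean document; each statement's English description precedes it below -/
import Mathlib

section
/- Let $k$ be an algebraically closed field and let $C \subset \mathbb{P}^2_k$ be a smooth plane curve of degree $d \geq 4$. Then $C$ has no $g^1_m$ for any $m \leq d-2$: that is, every line bundle $\mathcal{L}$ on $C$ of degree $m \leq d-2$ satisfies $h^0(C, \mathcal{L}) \leq 1$. Equivalently, every divisor $D$ on $C$ of degree at most $d-2$ satisfies $\ell(D) \leq 1$. (In particular, $C$ admits no dominant morphism to $\mathbb{P}^1_k$ of degree at most $d-2$; this holds in every characteristic.) -/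
/-!
Framework: a smooth plane curve of degree `d` over an algebraically closed field `k` is
`C = V(f) ⊆ ℙ²_k` for `f ∈ k[X₀,X₁,X₂]` homogeneous of degree `d` whose only common zero
with its partial derivatives is the origin.  We realize the points of `C`, the order of
vanishing at a point of `C` of a homogeneous polynomial, Riemann–Roch spaces `L(D)` of
divisors on `C` (inside the fraction field `F` of the homogeneous coordinate ring of `C`,
as the degree-zero fractions `g/h` with `div(g/h) + D ≥ 0`), and `h⁰(C, O_C(D)) = dim L(D)`.
-/

noncomputable section PlaneCurve

variable {k : Type*} [Field k]

/-- The points of the plane curve `V(f) ⊆ ℙ²_k`: points of the projectivization of `k³`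
whose (fixed) representative vector is a zero of `f`.  (For homogeneous `f` this is
independent of the representative.) -/
def PlanePoint (f : MvPolynomial (Fin 3) k) : Type _ :=
  { p : Projectivization k (Fin 3 → k) // MvPolynomial.eval p.rep f = 0 }

open Classical in
/-- The inhomogeneous polynomial `ℓ - 1`, where `ℓ` is a linear form with `ℓ(v) = 1`;
the hyperplane `ℓ = 1` is an affine chart of `ℙ²` containing the point `[v]`. -/
def slicePoly (v : Fin 3 → k) : MvPolynomial (Fin 3) k :=
  if hv : ∃ i, v i ≠ 0 then
    MvPolynomial.C (v hv.choose)⁻¹ * MvPolynomial.X hv.choose - 1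
  else 0

/-- The order of vanishing, at the point `p` of the curve `C = V(f)`, of the restriction
to `C` of a homogeneous polynomial `g`: in the affine chart `ℓ = 1` of `ℙ²` containing `p`,
it is the largest `n` such that, locally at `p` (i.e., after multiplying by some polynomial
not vanishing at `p`), `g` lies in the `n`-th power of the maximal ideal of `p` on the
affine curve `{f = 0, ℓ = 1}`. -/
def ordAt (f : MvPolynomial (Fin 3) k) (p : PlanePoint f) (g : MvPolynomial (Fin 3) k) : ℕ :=
  sSup { n : ℕ | ∃ h : MvPolynomial (Fin 3) k, MvPolynomial.eval p.1.rep h ≠ 0 ∧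
    h * g ∈ Ideal.span {f, slicePoly p.1.rep} +
      (RingHom.ker (MvPolynomial.eval p.1.rep)) ^ n }

variable (F : Type*) [CommRing F]

/-- The Riemann–Roch space `L(D) = H⁰(C, O_C(D))` of a divisor `D` on the smooth plane
curve `C = V(f)`, realized inside the fraction field `F` of the homogeneous coordinate ring
`k[X₀,X₁,X₂]/(f)` of `C`: it consists of `0` together with all degree-zero fractions `g/h`
(`g`, `h` homogeneous of the same degree, neither divisible by `f`) with `div(g/h) + D ≥ 0`. -/
def RRspace (f : MvPolynomial (Fin 3) k)
    [Algebra (MvPolynomial (Fin 3) k ⧸ Ideal.span {f}) F]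
    (D : PlanePoint f → ℤ) : Set F :=
  {φ | φ = 0 ∨ ∃ (e : ℕ) (g h : MvPolynomial (Fin 3) k),
    g.IsHomogeneous e ∧ h.IsHomogeneous e ∧ ¬ f ∣ g ∧ ¬ f ∣ h ∧
    φ * algebraMap (MvPolynomial (Fin 3) k ⧸ Ideal.span {f}) F
          (Ideal.Quotient.mk (Ideal.span {f}) h)
      = algebraMap (MvPolynomial (Fin 3) k ⧸ Ideal.span {f}) F
          (Ideal.Quotient.mk (Ideal.span {f}) g) ∧
    ∀ p : PlanePoint f, 0 ≤ (ordAt f p g : ℤ) - (ordAt f p h : ℤ) + D p}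

/-- `h⁰(C, O_C(D))`: the dimension over `k` of the Riemann–Roch space of the divisor `D`. -/
def h0 (f : MvPolynomial (Fin 3) k)
    [Algebra (MvPolynomial (Fin 3) k ⧸ Ideal.span {f}) F] [Algebra k F]
    (D : PlanePoint f → ℤ) : ℕ :=
  Module.finrank k (Submodule.span k (RRspace F f D))

end PlaneCurve

/-!
Let `φ = g/h` be a nonzero element of `L(D)`. By Bézout's theorem the effective divisor
`E = div φ + D` has the same degree as `D`, hence degree at most `d - 2`, and any `ψ = g'/h'` in
`L(D)` satisfies `div (h' g) ≤ div (g' h) + E`. For each point `p` of `E`, counted with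
multiplicity, multiply `g' h` by a line through `p` that is not tangent to the curve and avoids the
other points of `E`. By Noether's theorem (the ideal `(f, h' g)` is saturated, because of the Koszul
relations among the coordinates) the product is, modulo `f`, equal to `h' g` times a form `u` of
degree `deg E`. The lines are then removed one at a time: if `ℓ` is the line through `p`, then `u`
contains the divisor of `ℓ` except perhaps for the point `p`; multiplying by the tangent at `p`
repairs this, and as all degrees are smaller than `d`, it follows that `ℓ` divides `u`. In the end
`u` is a constant `c`, and `ψ = c φ`.
-/

namespace PlanePoint

open Matrix

variable {k : Type*} [Field k] {f : MvPolynomial (Fin 3) k} (p : PlanePoint f)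

/-- The fixed vector of homogeneous coordinates of a point of the curve. -/
noncomputable def rep : Fin 3 → k :=
  p.1.rep

lemma rep_ne_zero : p.rep ≠ 0 :=
  p.1.rep_nonzero

lemma eval_rep : MvPolynomial.eval p.rep f = 0 :=
  p.2

lemma cross_rep_ne_zero {p q : PlanePoint f} (hpq : p ≠ q) : p.rep ⨯₃ q.rep ≠ 0 := by
  rw [crossProduct_ne_zero_iff_linearIndependent]
  have hindep := (Projectivization.independent_pair_iff_ne p.1 q.1).2 (Subtype.coe_injective.ne hpq)
  rw [Projectivization.independent_iff] at hindep
  have hrep : ![p.rep, q.rep] = Projectivization.rep ∘ ![p.1, q.1] := by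
    ext i : 1
    fin_cases i <;> rfl
  rwa [hrep]

end PlanePoint

namespace PlaneCurve

open MvPolynomial Matrix

section Divisors

variable {ι : Type*}

lemma finsupp_nat_induction {motive : (ι →₀ ℕ) → Prop} (Z : ι →₀ ℕ) (zero : motive 0)
    (add_single : ∀ Z i, motive Z → motive (Z + Finsupp.single i 1)) : motive Z := by
  suffices ∀ Y, motive Y → motive (Y + Z) from zero_add Z ▸ this 0 zero
  induction Z using Finsupp.induction_linear with
  | zero => simp
  | add Z₁ Z₂ h₁ h₂ => exact fun Y hY => add_assoc Y Z₁ Z₂ ▸ h₂ _ (h₁ Y hY)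
  | single i m =>
    induction m with
    | zero => simp
    | succ m ih =>
      intro Y hY
      rw [Finsupp.single_add, ← add_assoc]
      exact add_single _ _ (ih Y hY)

lemma degree_mapRange_natCast (Z : ι →₀ ℕ) :
    (Z.mapRange (Nat.cast : ℕ → ℤ) Nat.cast_zero).degree = Z.degree := by
  have h : (Z.mapRange (Nat.cast : ℕ → ℤ) Nat.cast_zero).sum (fun _ n => n) =
      Z.sum fun _ n => (n : ℤ) := Finsupp.sum_mapRange_index fun _ => rfl
  exact h.trans (Nat.cast_sum Z.support Z).symm

end Divisors

section Homogeneous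

variable {σ R : Type*}

section CommSemiring

variable [CommSemiring R] {d n : ℕ} {g : MvPolynomial σ R}

lemma eval_smul_of_isHomogeneous (hg : g.IsHomogeneous n) (c : R) (w : σ → R) :
    eval (c • w) g = c ^ n * eval w g := by
  rw [eval_eq, eval_eq, Finset.mul_sum]
  refine Finset.sum_congr rfl fun m hm => ?_
  have hdeg : ∑ i ∈ m.support, m i = n := by
    simpa [Finsupp.weight_apply, Finsupp.sum] using hg (mem_support_iff.1 hm)
  simp only [Pi.smul_apply, smul_eq_mul, mul_pow, Finset.prod_mul_distrib,
    Finset.prod_pow_eq_pow_sum, hdeg]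
  ring

lemma homogeneousComponent_mul (hg : g.IsHomogeneous d) (n : ℕ) (a : MvPolynomial σ R) :
    homogeneousComponent n (a * g) =
      ∑ j ∈ Finset.range (a.totalDegree + 1), if n = j + d then homogeneousComponent j a * g
        else 0 := by
  conv_lhs => rw [← sum_homogeneousComponent a, Finset.sum_mul, map_sum]
  exact Finset.sum_congr rfl fun j _ =>
    homogeneousComponent_of_mem ((homogeneousComponent_isHomogeneous j a).mul hg)

lemma homogeneousComponent_add_mul (hg : g.IsHomogeneous d) (n : ℕ) (a : MvPolynomial σ R) :
    homogeneousComponent (n + d) (a * g) = homogeneousComponent n a * g := by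
  simp only [homogeneousComponent_mul hg, add_left_inj, Finset.sum_ite_eq, Finset.mem_range]
  split_ifs with h
  · rfl
  · rw [homogeneousComponent_eq_zero n a (by lia), zero_mul]

lemma homogeneousComponent_mul_of_lt (hg : g.IsHomogeneous d) (h : n < d) (a : MvPolynomial σ R) :
    homogeneousComponent n (a * g) = 0 := by
  rw [homogeneousComponent_mul hg]
  exact Finset.sum_eq_zero fun j _ => if_neg (by lia)

lemma dvd_homogeneousComponent {f : MvPolynomial σ R} (hf : f.IsHomogeneous d) (hfg : f ∣ g)
    (n : ℕ) : f ∣ homogeneousComponent n g := by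
  obtain ⟨a, rfl⟩ := hfg
  rw [mul_comm]
  rcases lt_or_ge n d with h | h
  · rw [homogeneousComponent_mul_of_lt hf h]
    exact dvd_zero f
  · obtain ⟨m, rfl⟩ := Nat.exists_eq_add_of_le' h
    rw [homogeneousComponent_add_mul hf]
    exact dvd_mul_left f _

lemma eq_zero_of_dvd_of_isHomogeneous {f : MvPolynomial σ R} (hf : f.IsHomogeneous d)
    (hg : g.IsHomogeneous n) (h : n < d) (hfg : f ∣ g) : g = 0 := by
  obtain ⟨a, rfl⟩ := hfg
  rw [← homogeneousComponent_eq_self hg, mul_comm, homogeneousComponent_mul_of_lt hf h]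

lemma exists_C_eq_of_isHomogeneous_zero (hg : g.IsHomogeneous 0) : ∃ c : R, C c = g :=
  ⟨_, (totalDegree_eq_zero_iff_eq_C.1 (Nat.le_zero.1 hg.totalDegree_le)).symm⟩

lemma exists_isHomogeneous_mul_eq_of_dvd {f : MvPolynomial σ R} (hf : f.IsHomogeneous d)
    (hg : g.IsHomogeneous (n + d)) (hfg : f ∣ g) :
    ∃ a : MvPolynomial σ R, a.IsHomogeneous n ∧ a * f = g := by
  obtain ⟨a, rfl⟩ := hfg
  refine ⟨homogeneousComponent n a, homogeneousComponent_isHomogeneous n a, ?_⟩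
  rw [← homogeneousComponent_add_mul hf, mul_comm, homogeneousComponent_eq_self hg]

/-- The homogenization of degree `N` of a polynomial with respect to a linear form `y`:
the component of degree `j` is multiplied by `y ^ (N - j)`, and the components of degree greater
than `N` are discarded. -/
noncomputable def homogenize (y : MvPolynomial σ R) (N : ℕ) :
    MvPolynomial σ R →ₗ[R] MvPolynomial σ R :=
  ∑ j ∈ Finset.range (N + 1), LinearMap.mulLeft R (y ^ (N - j)) ∘ₗ homogeneousComponent j

lemma homogenize_apply (y : MvPolynomial σ R) (N : ℕ) (P : MvPolynomial σ R) :
    homogenize y N P = ∑ j ∈ Finset.range (N + 1), y ^ (N - j) * homogeneousComponent j P := by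
  simp [homogenize]

lemma isHomogeneous_homogenize {y : MvPolynomial σ R} (hy : y.IsHomogeneous 1) (N : ℕ)
    (P : MvPolynomial σ R) : (homogenize y N P).IsHomogeneous N := by
  rw [homogenize_apply]
  refine IsHomogeneous.sum _ _ _ fun j hj => ?_
  have := (hy.pow (N - j)).mul (homogeneousComponent_isHomogeneous j P)
  rwa [one_mul, Nat.sub_add_cancel (Finset.mem_range_succ_iff.1 hj)] at this

lemma map_homogenize {A : Type*} [Semiring A] (φ : MvPolynomial σ R →+* A) {y : MvPolynomial σ R}
    (hy : φ y = 1) {P : MvPolynomial σ R} {N : ℕ} (hN : P.totalDegree ≤ N) :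
    φ (homogenize y N P) = φ P := by
  have hP : ∑ j ∈ Finset.range (N + 1), homogeneousComponent j P = P := by
    conv_rhs => rw [← sum_homogeneousComponent P]
    refine (Finset.sum_subset (Finset.range_subset_range.2 (by lia)) fun j _ hj => ?_).symm
    exact homogeneousComponent_eq_zero j P (by simpa using hj)
  conv_rhs => rw [← hP]
  simp [homogenize_apply, hy]

lemma homogenize_mul (y : MvPolynomial σ R) (hg : g.IsHomogeneous d) (N : ℕ)
    (P : MvPolynomial σ R) : homogenize y (N + d) (P * g) = homogenize y N P * g := by
  rw [homogenize_apply, homogenize_apply, add_right_comm, add_comm (N + 1) d,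
    Finset.sum_range_add, Finset.sum_eq_zero, zero_add, Finset.sum_mul]
  · refine Finset.sum_congr rfl fun j _ => ?_
    rw [add_comm d j, homogeneousComponent_add_mul hg, Nat.add_sub_add_right, mul_assoc]
  · intro j hj
    rw [homogeneousComponent_mul_of_lt hg (Finset.mem_range.1 hj), mul_zero]

end CommSemiring

section CommRing

variable [CommRing R]

lemma homogenize_mul_sub_one {y : MvPolynomial σ R} (hy : y.IsHomogeneous 1)
    {P : MvPolynomial σ R} {N : ℕ} (hN : P.totalDegree ≤ N) :
    homogenize y (N + 1) (P * (y - 1)) = 0 := by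
  have hlast : homogenize y (N + 1) P = homogenize y N P * y := by
    rw [homogenize_apply, Finset.sum_range_succ, homogeneousComponent_eq_zero (N + 1) P (by lia),
      mul_zero, add_zero, homogenize_apply, Finset.sum_mul]
    refine Finset.sum_congr rfl fun j hj => ?_
    rw [Nat.sub_add_comm (Finset.mem_range_succ_iff.1 hj), pow_succ]
    ring
  rw [mul_sub, mul_one, map_sub, homogenize_mul y hy, hlast, sub_self]

lemma exists_isHomogeneous_mul_mem_span_pair {A : Type*} [Semiring A]
    (φ : MvPolynomial σ R →+* A) {y f h g s : MvPolynomial σ R} {d e n : ℕ}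
    (hy : y.IsHomogeneous 1) (hφy : φ y = 1) (hf : f.IsHomogeneous d) (hh : h.IsHomogeneous e)
    (hg : g.IsHomogeneous n) (hs : s * g ∈ Ideal.span {f, h, y - 1}) :
    ∃ (m : ℕ) (t : MvPolynomial σ R),
      t.IsHomogeneous m ∧ φ t = φ s ∧ t * g ∈ Ideal.span {f, h} := by
  obtain ⟨a, b, c, habc⟩ := Submodule.mem_span_triple.1 hs
  simp only [smul_eq_mul] at habc
  set N := s.totalDegree + c.totalDegree
  have key := congrArg (homogenize y (N + d + e + n + 1)) habc
  refine ⟨N + d + e + 1, homogenize y _ s, isHomogeneous_homogenize hy _ s,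
    map_homogenize φ hφy (by lia), Ideal.mem_span_pair.2
      ⟨homogenize y (N + e + n + 1) a, homogenize y (N + d + n + 1) b, ?_⟩⟩
  rw [map_add, map_add, homogenize_mul_sub_one hy (by lia), add_zero] at key
  rw [← homogenize_mul y hf, ← homogenize_mul y hh, ← homogenize_mul y hg]
  convert key using 3 <;> ring_nf

lemma isPrime_span_pair_sub_one [IsDomain R] {y f : MvPolynomial σ R} {d : ℕ}
    (hy : y.IsHomogeneous 1) (hf : f.IsHomogeneous d) (hfp : Prime f) {v : σ → R}
    (hyv : eval v y = 1) (hfv : eval v f = 0) : (Ideal.span {f, y - 1}).IsPrime := by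
  set I := Ideal.span {f, y - 1}
  have hI : I ≤ RingHom.ker (eval v) := by
    rw [Ideal.span_le]
    rintro x (rfl | rfl) <;> simp [RingHom.mem_ker, hfv, hyv]
  have hy1 : Ideal.Quotient.mk I y = 1 :=
    Ideal.Quotient.eq.2 (Ideal.subset_span (by simp))
  have hfI : ∀ {P : MvPolynomial σ R}, f ∣ homogenize y P.totalDegree P → P ∈ I := by
    intro P hP
    rw [← Ideal.Quotient.eq_zero_iff_mem, ← map_homogenize _ hy1 le_rfl,
      Ideal.Quotient.eq_zero_iff_mem]
    exact I.mem_of_dvd hP (Ideal.subset_span (by simp))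
  refine ⟨fun h => one_ne_zero ((map_one (eval v)).symm.trans (hI (h ▸ Submodule.mem_top))),
    fun {P Q} hPQ => ?_⟩
  obtain ⟨m, t, -, htv, ht⟩ := exists_isHomogeneous_mul_mem_span_pair (eval v) hy hyv hf
    (isHomogeneous_zero σ R 0) (s := 1)
    ((isHomogeneous_homogenize hy P.totalDegree P).mul
      (isHomogeneous_homogenize hy Q.totalDegree Q)) (by
      rw [one_mul, Set.insert_comm, Ideal.span_insert_zero, ← Ideal.Quotient.eq_zero_iff_mem,
        map_mul, map_homogenize _ hy1 le_rfl, map_homogenize _ hy1 le_rfl, ← map_mul,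
        Ideal.Quotient.eq_zero_iff_mem]
      exact hPQ)
  rw [Set.pair_comm, Ideal.span_insert_zero, Ideal.mem_span_singleton] at ht
  have hft : ¬ f ∣ t := fun hft => by
    have htv0 : eval v t = 0 := zero_dvd_iff.1 (hfv ▸ map_dvd (eval v) hft)
    exact one_ne_zero ((map_one (eval v)).symm.trans (htv.symm.trans htv0))
  exact (hfp.dvd_or_dvd ((hfp.dvd_or_dvd ht).resolve_left hft)).imp hfI hfI

end CommRing

end Homogeneous

section Koszul

variable {A : Type*} [CommRing A] {x y z : A}

lemma exists_koszul_of_syzygy (hx : IsLeftRegular x) (hy : ∀ a, x ∣ y * a → x ∣ a)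
    (hz : ∀ a, z * a ∈ Ideal.span {x, y} → a ∈ Ideal.span {x, y}) {a b c : A}
    (h : x * a + y * b + z * c = 0) :
    ∃ r s t, a = z * r - y * t ∧ b = z * s + x * t ∧ c = -(x * r) - y * s := by
  obtain ⟨r, s, hc⟩ := Ideal.mem_span_pair.1
    (hz c (Ideal.mem_span_pair.2 ⟨-a, -b, by linear_combination -h⟩))
  obtain ⟨t, hb⟩ := hy (b + z * s) ⟨-(a + z * r), by linear_combination h + z * hc⟩
  refine ⟨-r, -s, t, hx ?_, by linear_combination hb, by linear_combination -hc⟩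
  linear_combination h + z * hc - y * hb

lemma exists_eq_mul_of_mul_eq_mul (hx : IsLeftRegular x) (hy : ∀ a, x ∣ y * a → x ∣ a) {a b c : A}
    (hab : y * a = x * b) (hac : z * a = x * c) : ∃ w, a = x * w ∧ b = y * w ∧ c = z * w := by
  obtain ⟨w, rfl⟩ := hy a ⟨b, hab⟩
  exact ⟨w, rfl, hx (by linear_combination -hab), hx (by linear_combination -hac)⟩

lemma mem_span_pair_of_mul_mem (hx : IsLeftRegular x) (hy : ∀ a, x ∣ y * a → x ∣ a)
    (hz : ∀ a, z * a ∈ Ideal.span {x, y} → a ∈ Ideal.span {x, y}) {f h g : A}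
    (hf : IsLeftRegular f) (hh : ∀ a, f ∣ a * h → f ∣ a) (hxg : x * g ∈ Ideal.span {f, h})
    (hyg : y * g ∈ Ideal.span {f, h}) (hzg : z * g ∈ Ideal.span {f, h}) :
    g ∈ Ideal.span {f, h} := by
  obtain ⟨α₀, β₀, e₀⟩ := Ideal.mem_span_pair.1 hxg
  obtain ⟨α₁, β₁, e₁⟩ := Ideal.mem_span_pair.1 hyg
  obtain ⟨α₂, β₂, e₂⟩ := Ideal.mem_span_pair.1 hzg
  obtain ⟨t₀₁, h₀₁⟩ := hh (y * β₀ - x * β₁)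
    ⟨x * α₁ - y * α₀, by linear_combination y * e₀ - x * e₁⟩
  obtain ⟨t₁₂, h₁₂⟩ := hh (z * β₁ - y * β₂)
    ⟨y * α₂ - z * α₁, by linear_combination z * e₁ - y * e₂⟩
  obtain ⟨t₂₀, h₂₀⟩ := hh (x * β₂ - z * β₀)
    ⟨z * α₀ - x * α₂, by linear_combination x * e₂ - z * e₀⟩
  obtain ⟨r, s, t, rfl, rfl, rfl⟩ := exists_koszul_of_syzygy hx hy hz
    (a := t₁₂) (b := t₂₀) (c := t₀₁) (hf (by linear_combination -x * h₁₂ - y * h₂₀ - z * h₀₁))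
  -- Subtracting the Koszul relations makes the coefficients of `h` proportional to `x, y, z`.
  obtain ⟨w, hw₀, hw₁, hw₂⟩ := exists_eq_mul_of_mul_eq_mul (z := z) hx hy
    (a := β₀ + f * s) (b := β₁ - f * r) (c := β₂ - f * t)
    (by linear_combination h₀₁) (by linear_combination -h₂₀)
  obtain ⟨q, hq, -, -⟩ := exists_eq_mul_of_mul_eq_mul (z := z) hx hy
    (a := α₀ - s * h) (b := α₁ + r * h) (c := α₂ + t * h)
    (hf (by linear_combination y * e₀ - x * e₁ + h * (x * hw₁ - y * hw₀)))
    (hf (by linear_combination z * e₀ - x * e₂ + h * (x * hw₂ - z * hw₀)))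
  exact Ideal.mem_span_pair.2 ⟨q, w, hx (by linear_combination e₀ - h * hw₀ - f * hq)⟩

lemma mem_span_pair_of_pow_le_colon (hx : IsLeftRegular x) (hy : ∀ a, x ∣ y * a → x ∣ a)
    (hz : ∀ a, z * a ∈ Ideal.span {x, y} → a ∈ Ideal.span {x, y}) {f h : A}
    (hf : IsLeftRegular f) (hh : ∀ a, f ∣ a * h → f ∣ a) (n : ℕ) {g : A}
    (hg : ∀ u ∈ Ideal.span {x, y, z} ^ n, u * g ∈ Ideal.span {f, h}) : g ∈ Ideal.span {f, h} := by
  induction n generalizing g with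
  | zero => simpa using hg 1 (by simp)
  | succ n ih =>
    have hmul : ∀ u ∈ Ideal.span {x, y, z}, u * g ∈ Ideal.span {f, h} := fun u hu =>
      ih fun w hw => mul_assoc w u g ▸ hg (w * u) (Ideal.mul_mem_mul hw hu)
    exact mem_span_pair_of_mul_mem hx hy hz hf hh (hmul x (Ideal.subset_span (by simp)))
      (hmul y (Ideal.subset_span (by simp))) (hmul z (Ideal.subset_span (by simp)))

end Koszul

section Saturation

variable {R : Type*} [CommRing R]

lemma X_dvd_of_X_dvd_X_mul [IsDomain R] {σ : Type*} {i j : σ} (hij : i ≠ j) {a : MvPolynomial σ R}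
    (h : (X i : MvPolynomial σ R) ∣ X j * a) : X i ∣ a :=
  (X_prime.dvd_or_dvd h).resolve_left fun hd => hij (X_dvd_X.1 hd)

lemma mem_span_X_of_X_mul_mem {σ : Type*} {s : Set σ} {i : σ} (hi : i ∉ s) {a : MvPolynomial σ R}
    (h : X i * a ∈ Ideal.span (X '' s)) : a ∈ Ideal.span (X '' s) := by
  classical
  rw [mem_ideal_span_X_image] at h ⊢
  intro m hm
  obtain ⟨j, hj, hmj⟩ := h (Finsupp.single i 1 + m) (by
    rwa [mem_support_iff, coeff_X_mul, ← mem_support_iff])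
  refine ⟨j, hj, ?_⟩
  rwa [Finsupp.add_apply, Finsupp.single_eq_of_ne (ne_of_mem_of_not_mem hj hi), zero_add] at hmj

lemma mem_span_pair_of_irrelevant_pow_le [IsDomain R] {f h g : MvPolynomial (Fin 3) R}
    (hf : Prime f) (hfh : ¬ f ∣ h) (n : ℕ)
    (hg : ∀ u ∈ Ideal.span (Set.range X) ^ n, u * g ∈ Ideal.span {f, h}) :
    g ∈ Ideal.span {f, h} := by
  have hpair : ({X 0, X 1} : Set (MvPolynomial (Fin 3) R)) = X '' {0, 1} :=
    (Set.image_pair X 0 1).symm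
  have hrange : Set.range (X : Fin 3 → MvPolynomial (Fin 3) R) = {X 0, X 1, X 2} := by
    ext
    simp [Fin.exists_fin_succ, eq_comm]
  exact mem_span_pair_of_pow_le_colon (x := X 0) (IsRegular.of_ne_zero (X_ne_zero (0 : Fin 3))).left
    (fun a => X_dvd_of_X_dvd_X_mul (by decide))
    (fun a ha => hpair ▸ mem_span_X_of_X_mul_mem (by decide) (hpair ▸ ha))
    (IsRegular.of_ne_zero hf.ne_zero).left (fun a ha => (hf.dvd_or_dvd ha).resolve_right hfh) n
    (hrange ▸ hg)

end Saturation

section Dimension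

lemma finrank_span_le_one {K V : Type*} [DivisionRing K] [AddCommGroup V] [Module K V] {s : Set V}
    (hs : ∀ x ∈ s, x ≠ 0 → ∀ y ∈ s, ∃ c : K, c • x = y) :
    Module.finrank K (Submodule.span K s) ≤ 1 := by
  by_cases hx : ∃ x ∈ s, x ≠ 0
  · obtain ⟨x, hxs, hx0⟩ := hx
    rw [← finrank_span_singleton (K := K) hx0]
    exact Submodule.finrank_mono
      (Submodule.span_le.2 fun y hy => Submodule.mem_span_singleton.2 (hs x hxs hx0 y hy))
  · push Not at hx
    rw [Submodule.span_eq_bot.2 hx, finrank_bot]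
    exact zero_le_one

lemma finrank_homogeneousSubmodule (σ K : Type*) [Fintype σ] [CommRing K] [StrongRankCondition K]
    (n : ℕ) :
    Module.finrank K (homogeneousSubmodule σ K n) = (Fintype.card σ + n - 1).choose n := by
  classical
  have hdeg : {m : σ →₀ ℕ | m.degree = n} =
      ((Finset.univ : Finset σ).finsuppAntidiag n : Set _) := by
    ext m
    simp [Finset.mem_finsuppAntidiag, Finsupp.degree_eq_sum]
  rw [homogeneousSubmodule_eq_finsupp_supported,
    (AddMonoidAlgebra.supportedEquivFinsupp (R := K) _).finrank_eq, hdeg,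
    Module.finrank_finsupp_self]
  simpa using Finset.card_finsuppAntidiag_nat_eq_choose (s := (Finset.univ : Finset σ)) n

lemma finrank_homogeneousSubmodule_fin_three (K : Type*) [CommRing K] [StrongRankCondition K]
    (n : ℕ) :
    Module.finrank K (homogeneousSubmodule (Fin 3) K n) = (n + 2).choose 2 := by
  rw [finrank_homogeneousSubmodule, Fintype.card_fin, ← Nat.choose_symm_add]
  congr 1
  lia

variable {σ K : Type*} [Field K] {d e : ℕ} {f h : MvPolynomial σ K}

instance [Finite σ] (n : ℕ) : Module.Finite K (homogeneousSubmodule σ K n) :=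
  Module.Finite.of_fg (homogeneousSubmodule_fg σ K n)

/-- The space `h · K[X]ₙ` of the multiples of `h` by forms of degree `n`. -/
noncomputable def multiples (h : MvPolynomial σ K) (n : ℕ) : Submodule K (MvPolynomial σ K) :=
  (homogeneousSubmodule σ K n).map (LinearMap.mulLeft K h)

instance [Finite σ] (h : MvPolynomial σ K) (n : ℕ) : Module.Finite K (multiples h n) := by
  unfold multiples
  infer_instance

lemma mem_multiples {g : MvPolynomial σ K} :
    g ∈ multiples h n ↔ ∃ a : MvPolynomial σ K, a.IsHomogeneous n ∧ h * a = g := by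
  simp [multiples]

lemma multiples_le_homogeneousSubmodule (hh : h.IsHomogeneous d) (n : ℕ) :
    multiples h n ≤ homogeneousSubmodule σ K (n + d) := by
  intro g hg
  obtain ⟨a, ha, rfl⟩ := mem_multiples.1 hg
  rw [mul_comm]
  exact ha.mul hh

lemma finrank_multiples (hh : h ≠ 0) (n : ℕ) :
    Module.finrank K (multiples h n) = Module.finrank K (homogeneousSubmodule σ K n) :=
  (Submodule.equivMapOfInjective (LinearMap.mulLeft K h) (mul_right_injective₀ hh)
    (homogeneousSubmodule σ K n)).finrank_eq.symm

lemma multiples_inf_multiples (hfp : Prime f) (hfh : ¬ f ∣ h) (hf : f.IsHomogeneous d)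
    (hh : h.IsHomogeneous e) (n : ℕ) :
    multiples f (n + e) ⊓ multiples h (n + d) = multiples (f * h) n := by
  ext g
  simp only [Submodule.mem_inf, mem_multiples]
  constructor
  · rintro ⟨⟨a, -, rfl⟩, b, hb, hba⟩
    obtain ⟨c, hc, rfl⟩ := exists_isHomogeneous_mul_eq_of_dvd hf hb
      ((hfp.dvd_or_dvd ⟨a, hba⟩).resolve_left hfh)
    exact ⟨c, hc, by rw [← hba]; ring⟩
  · rintro ⟨a, ha, rfl⟩
    exact ⟨⟨a * h, ha.mul hh, by ring⟩, a * f, ha.mul hf, by ring⟩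

lemma finrank_multiples_sup_multiples {f h : MvPolynomial (Fin 3) K} (hfp : Prime f)
    (hfh : ¬ f ∣ h) (hf : f.IsHomogeneous d) (hh : h.IsHomogeneous e) (n : ℕ) :
    Module.finrank K ↥(multiples f (n + e) ⊔ multiples h (n + d)) + d * e =
      (n + d + e + 2).choose 2 := by
  have hh0 : h ≠ 0 := fun h0 => hfh (h0 ▸ dvd_zero f)
  have hsum := Submodule.finrank_sup_add_finrank_inf_eq (multiples f (n + e)) (multiples h (n + d))
  rw [multiples_inf_multiples hfp hfh hf hh, finrank_multiples hfp.ne_zero, finrank_multiples hh0,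
    finrank_multiples (mul_ne_zero hfp.ne_zero hh0)] at hsum
  simp only [finrank_homogeneousSubmodule_fin_three] at hsum
  have two_mul_choose (m : ℕ) : (m + 2).choose 2 * 2 = (m + 2) * (m + 1) := by
    rw [Nat.choose_two_right, Nat.div_mul_cancel (Nat.even_mul_pred_self _).two_dvd]
    rfl
  have hn := two_mul_choose n
  have hne := two_mul_choose (n + e)
  have hnd := two_mul_choose (n + d)
  have hnde := two_mul_choose (n + d + e)
  nlinarith

end Dimension

section LinearForm

variable {σ R : Type*}

section CommSemiring

variable [CommSemiring R]

/-- The vector of the partial derivatives of a polynomial at the point `v`. -/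
noncomputable def gradient (x : MvPolynomial σ R) (v : σ → R) : σ → R :=
  fun i => eval v (pderiv i x)

lemma gradient_mul (x y : MvPolynomial σ R) (v : σ → R) :
    gradient (x * y) v = eval v x • gradient y v + eval v y • gradient x v := by
  ext i
  simp [gradient, Derivation.leibniz]

variable [Fintype σ]

/-- The linear form `∑ i, bᵢ Xᵢ` with coefficient vector `b`. -/
noncomputable def linearForm : (σ → R) →ₗ[R] MvPolynomial σ R :=
  Fintype.linearCombination R X

lemma linearForm_apply (b : σ → R) : linearForm b = ∑ i, C (b i) * X i := by
  simp [linearForm, Fintype.linearCombination_apply, smul_eq_C_mul]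

lemma isHomogeneous_linearForm (b : σ → R) : (linearForm b).IsHomogeneous 1 := by
  rw [linearForm_apply]
  exact IsHomogeneous.sum _ _ _ fun i _ => isHomogeneous_C_mul_X _ _

lemma eval_linearForm (w b : σ → R) : eval w (linearForm b) = b ⬝ᵥ w := by
  simp [linearForm_apply, dotProduct]

lemma gradient_linearForm (b v : σ → R) : gradient (linearForm b) v = b := by
  classical
  ext i
  simp [gradient, linearForm_apply, Derivation.leibniz, pderiv_X, Pi.single_apply]

lemma gradient_dotProduct_self {f : MvPolynomial σ R} {d : ℕ} (hf : f.IsHomogeneous d)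
    (v : σ → R) : gradient f v ⬝ᵥ v = d • eval v f := by
  simpa [dotProduct, gradient, mul_comm] using congrArg (eval v) hf.sum_X_mul_pderiv

end CommSemiring

variable [Fintype σ] [CommRing R]

/-- The linear form `∑ i, bᵢ (Xᵢ - vᵢ)` in coordinates centred at `v`. -/
noncomputable def centeredLinearForm (v : σ → R) : (σ → R) →ₗ[R] MvPolynomial σ R :=
  Fintype.linearCombination R fun i => X i - C (v i)

lemma centeredLinearForm_eq (v b : σ → R) :
    centeredLinearForm v b = linearForm b - C (b ⬝ᵥ v) := by
  simp [centeredLinearForm, Fintype.linearCombination_apply, linearForm_apply, dotProduct,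
    smul_eq_C_mul, mul_sub]

lemma centeredLinearForm_mem_ker_eval (v b : σ → R) :
    centeredLinearForm v b ∈ RingHom.ker (eval v) := by
  simp [RingHom.mem_ker, centeredLinearForm_eq, eval_linearForm]

lemma sub_centeredLinearForm_gradient_mem_ker_eval_sq (v : σ → R) (x : MvPolynomial σ R) :
    x - C (eval v x) - centeredLinearForm v (gradient x v) ∈ RingHom.ker (eval v) ^ 2 := by
  classical
  induction x using MvPolynomial.induction_on with
  | C a =>
    have : gradient (C a) v = 0 := by ext; simp [gradient]
    simp [this]
  | add p q hp hq =>
    have : gradient (p + q) v = gradient p v + gradient q v := by ext; simp [gradient]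
    rw [this, map_add, map_add, map_add]
    convert Ideal.add_mem _ hp hq using 1
    ring
  | mul_X p j hp =>
    have hX : gradient (X j) v = Pi.single j 1 := by
      ext i
      simp [gradient, pderiv_X, Pi.single_apply, eq_comm]
    have hsingle : centeredLinearForm v (Pi.single j 1) = X j - C (v j) := by
      simp [centeredLinearForm]
    have hmul := Ideal.mul_mem_mul (centeredLinearForm_mem_ker_eval v (gradient p v))
      (centeredLinearForm_mem_ker_eval v (Pi.single j 1))
    rw [gradient_mul, hX, map_add, map_smul, map_smul]
    rw [hsingle, ← pow_two] at *
    convert Ideal.add_mem _ (Ideal.mul_mem_right (X j) _ hp) hmul using 1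
    simp only [map_mul, eval_X, smul_eq_C_mul]
    ring

lemma prime_linearForm {k : Type*} [Field k] {b : σ → k} (hb : linearForm b ≠ 0) :
    Prime (linearForm b) := by
  refine (irreducible_of_totalDegree_eq_one ((isHomogeneous_linearForm b).totalDegree hb)
    fun x hx => ?_).prime
  obtain ⟨i, hi⟩ := ne_zero_iff.1 hb
  exact isUnit_iff_ne_zero.2 (ne_zero_of_dvd_ne_zero hi (hx i))

end LinearForm

section TangentSpace

variable {k : Type*} [Field k]

lemma linearIndependent_vecCons_of_dotProduct_ne_zero {ι : Type*} [Fintype ι] {n : ℕ}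
    {a : Fin n → ι → k} {e v : ι → k} (ha : LinearIndependent k a) (hav : ∀ i, a i ⬝ᵥ v = 0)
    (hev : e ⬝ᵥ v ≠ 0) : LinearIndependent k (vecCons e a) := by
  suffices hspan : ∀ w ∈ Submodule.span k (Set.range a), w ⬝ᵥ v = 0 from
    linearIndependent_finCons.2 ⟨ha, fun he => hev (hspan e he)⟩
  intro w hw
  induction hw using Submodule.span_induction with
  | mem x hx => obtain ⟨i, rfl⟩ := hx; exact hav i
  | zero => exact zero_dotProduct v
  | add x y _ _ hx hy => rw [add_dotProduct, hx, hy, add_zero]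
  | smul c x _ hx => rw [smul_dotProduct, hx, smul_zero]

lemma ker_eval_le_span_sup_sq {f : MvPolynomial (Fin 3) k} {d : ℕ} {v b e : Fin 3 → k}
    (hf : f.IsHomogeneous d) (hfv : eval v f = 0) (hbv : b ⬝ᵥ v = 0) (hev : e ⬝ᵥ v = 1)
    (hfb : LinearIndependent k ![gradient f v, b]) :
    RingHom.ker (eval v) ≤
      Ideal.span {linearForm b, f, linearForm e - 1} ⊔ RingHom.ker (eval v) ^ 2 := by
  set J := Ideal.span {linearForm b, f, linearForm e - 1} ⊔ RingHom.ker (eval v) ^ 2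
  have hspan : Submodule.span k (Set.range ![e, gradient f v, b]) = ⊤ := by
    refine (linearIndependent_vecCons_of_dotProduct_ne_zero (v := v) hfb ?_
      (by simp [hev])).span_eq_top_of_card_eq_finrank (by simp)
    simp [Fin.forall_fin_succ, gradient_dotProduct_self hf, hfv, hbv]
  have hmem (c : Fin 3 → k) : centeredLinearForm v c ∈ J := by
    have hc : c ∈ Submodule.span k (Set.range ![e, gradient f v, b]) := hspan ▸ Submodule.mem_top
    suffices h : ∀ i, centeredLinearForm v (![e, gradient f v, b] i) ∈ J from
      (Submodule.span_le (p := (J.restrictScalars k).comap (centeredLinearForm v))).2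
        (Set.range_subset_iff.2 h) hc
    have hsq := sub_centeredLinearForm_gradient_mem_ker_eval_sq v f
    rw [hfv, C_0, sub_zero] at hsq
    refine Fin.forall_fin_succ.2 ⟨?_, Fin.forall_fin_two.2 ⟨?_, ?_⟩⟩
    · rw [cons_val_zero, centeredLinearForm_eq, hev, C_1]
      exact Ideal.mem_sup_left (Ideal.subset_span (by simp))
    · exact (J.sub_mem_iff_right (Ideal.mem_sup_left (Ideal.subset_span (by simp)))).1
        (Ideal.mem_sup_right hsq)
    · rw [centeredLinearForm_eq, show (![e, gradient f v, b] (Fin.succ 1)) = b from rfl, hbv, C_0,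
        sub_zero]
      exact Ideal.mem_sup_left (Ideal.subset_span (by simp))
  intro x hx
  have hsq := sub_centeredLinearForm_gradient_mem_ker_eval_sq v x
  rw [RingHom.mem_ker.1 hx, C_0, sub_zero] at hsq
  exact (J.sub_mem_iff_left (hmem _)).1 (Ideal.mem_sup_right hsq)

end TangentSpace

section LocalRing

variable {k : Type*} [Field k] {f : MvPolynomial (Fin 3) k} (p : PlanePoint f)

lemma exists_slicePoly_eq {v : Fin 3 → k} (hv : v ≠ 0) :
    ∃ e : Fin 3 → k, e ⬝ᵥ v = 1 ∧ slicePoly v = linearForm e - 1 := by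
  have hi : ∃ i, v i ≠ 0 := Function.ne_iff.1 hv
  refine ⟨Pi.single hi.choose (v hi.choose)⁻¹, ?_, ?_⟩
  · rw [single_dotProduct, inv_mul_cancel₀ hi.choose_spec]
  · rw [slicePoly, dif_pos hi, linearForm, Fintype.linearCombination_apply_single, smul_eq_C_mul]

/-- The ideal of the affine curve `{f = 0, ℓ = 1}`, where `ℓ = 1` is the chart used at `p`. -/
noncomputable def chartIdeal : Ideal (MvPolynomial (Fin 3) k) :=
  Ideal.span {f, slicePoly p.rep}

lemma chartIdeal_le_ker_eval : chartIdeal p ≤ RingHom.ker (eval p.rep) := by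
  obtain ⟨e, hev, he⟩ := exists_slicePoly_eq p.rep_ne_zero
  rw [chartIdeal, he, Ideal.span_le]
  rintro x (rfl | rfl)
  · exact p.eval_rep
  · simp [RingHom.mem_ker, eval_linearForm, hev]

/-- Evaluation at `p` on the coordinate ring of the affine curve `{f = 0, ℓ = 1}`. -/
noncomputable def chartEval : MvPolynomial (Fin 3) k ⧸ chartIdeal p →+* k :=
  Ideal.Quotient.lift (chartIdeal p) (eval p.rep) fun _ ha =>
    RingHom.mem_ker.1 (chartIdeal_le_ker_eval p ha)

instance : (RingHom.ker (chartEval p)).IsPrime :=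
  RingHom.ker_isPrime _

/-- The local ring `𝒪_{C,p}` of the curve `C = V(f)` at `p`, computed in the chart `ℓ = 1`. -/
def LocalRing : Type _ :=
  Localization.AtPrime (RingHom.ker (chartEval p))

noncomputable instance : CommRing (LocalRing p) :=
  inferInstanceAs (CommRing (Localization.AtPrime (RingHom.ker (chartEval p))))

noncomputable instance : Algebra (MvPolynomial (Fin 3) k ⧸ chartIdeal p) (LocalRing p) :=
  inferInstanceAs (Algebra _ (Localization.AtPrime (RingHom.ker (chartEval p))))

instance : IsLocalization.AtPrime (LocalRing p) (RingHom.ker (chartEval p)) :=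
  inferInstanceAs (IsLocalization.AtPrime (Localization.AtPrime (RingHom.ker (chartEval p))) _)

instance : IsLocalRing (LocalRing p) :=
  IsLocalization.AtPrime.isLocalRing _ (RingHom.ker (chartEval p))

instance : IsNoetherianRing (LocalRing p) :=
  IsLocalization.isNoetherianRing (RingHom.ker (chartEval p)).primeCompl _ inferInstance

/-- The germ at `p` of a polynomial, restricted to the chart `ℓ = 1`. -/
noncomputable def germ : MvPolynomial (Fin 3) k →+* LocalRing p :=
  (algebraMap _ (LocalRing p)).comp (Ideal.Quotient.mk (chartIdeal p))

lemma mk_mem_ker_chartEval {s : MvPolynomial (Fin 3) k} :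
    Ideal.Quotient.mk (chartIdeal p) s ∈ RingHom.ker (chartEval p) ↔ eval p.rep s = 0 := by
  rw [RingHom.mem_ker, chartEval, Ideal.Quotient.lift_mk]

lemma germ_mem_map_iff {J : Ideal (MvPolynomial (Fin 3) k)} {g : MvPolynomial (Fin 3) k} :
    germ p g ∈ J.map (germ p) ↔ ∃ s, eval p.rep s ≠ 0 ∧ s * g ∈ chartIdeal p ⊔ J := by
  rw [germ, ← Ideal.map_map, RingHom.comp_apply, IsLocalization.algebraMap_mem_map_algebraMap_iff
    (RingHom.ker (chartEval p)).primeCompl, Ideal.Quotient.mk_surjective.exists]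
  refine exists_congr fun s => and_congr (mk_mem_ker_chartEval p).not ?_
  rw [← map_mul, Ideal.mem_quotient_iff_mem_sup, sup_comm]

lemma exists_mul_germ_eq_germ (x : LocalRing p) :
    ∃ r s, eval p.rep s ≠ 0 ∧ x * germ p s = germ p r := by
  obtain ⟨⟨r, s⟩, h⟩ := IsLocalization.surj (RingHom.ker (chartEval p)).primeCompl x
  obtain ⟨r, rfl⟩ := Ideal.Quotient.mk_surjective r
  obtain ⟨s, hs⟩ := s
  obtain ⟨s, rfl⟩ := Ideal.Quotient.mk_surjective s
  exact ⟨r, s, fun h0 => hs ((mk_mem_ker_chartEval p).2 h0), h⟩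

lemma map_germ_ker_eval :
    (RingHom.ker (eval p.rep)).map (germ p) = IsLocalRing.maximalIdeal (LocalRing p) := by
  rw [← IsLocalization.AtPrime.map_eq_maximalIdeal (RingHom.ker (chartEval p)), germ,
    ← Ideal.map_map]
  congr 1
  ext x
  obtain ⟨s, rfl⟩ := Ideal.Quotient.mk_surjective x
  rw [Ideal.mem_quotient_iff_mem (chartIdeal_le_ker_eval p), mk_mem_ker_chartEval, RingHom.mem_ker]

lemma germ_mem_maximalIdeal_iff {g : MvPolynomial (Fin 3) k} :
    germ p g ∈ IsLocalRing.maximalIdeal (LocalRing p) ↔ eval p.rep g = 0 := by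
  rw [← mk_mem_ker_chartEval]
  exact IsLocalization.AtPrime.to_map_mem_maximal_iff (LocalRing p) (RingHom.ker (chartEval p)) _

lemma exists_sub_germ_C_mem_maximalIdeal (x : LocalRing p) :
    ∃ c : k, x - germ p (C c) ∈ IsLocalRing.maximalIdeal (LocalRing p) := by
  obtain ⟨r, s, hs, hx⟩ := exists_mul_germ_eq_germ p x
  have hmem : (x - germ p (C (eval p.rep r / eval p.rep s))) * germ p s ∈
      IsLocalRing.maximalIdeal (LocalRing p) := by
    rw [sub_mul, hx, ← map_mul, ← map_sub, germ_mem_maximalIdeal_iff]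
    simp [hs]
  exact ⟨_, (Ideal.IsPrime.mem_or_mem inferInstance hmem).resolve_right
    ((germ_mem_maximalIdeal_iff p).not.2 hs)⟩

lemma germ_self : germ p f = 0 := by
  have : Ideal.Quotient.mk (chartIdeal p) f = 0 :=
    Ideal.Quotient.eq_zero_iff_mem.2 (Ideal.subset_span (by simp))
  rw [germ, RingHom.comp_apply, this, map_zero]

lemma germ_slicePoly : germ p (slicePoly p.rep) = 0 := by
  have : Ideal.Quotient.mk (chartIdeal p) (slicePoly p.rep) = 0 :=
    Ideal.Quotient.eq_zero_iff_mem.2 (Ideal.subset_span (by simp))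
  rw [germ, RingHom.comp_apply, this, map_zero]

/-- `V(f)` is a smooth integral plane curve. Its degree is recorded as the total degree of `f`. -/
class IsSmoothPlaneCurve (f : MvPolynomial (Fin 3) k) : Prop where
  prime : Prime f
  isHomogeneous : f.IsHomogeneous f.totalDegree
  gradient_ne_zero : ∀ v : Fin 3 → k, v ≠ 0 → eval v f = 0 → gradient f v ≠ 0

lemma not_dvd_of_eval_rep_ne_zero {p : PlanePoint f} {g : MvPolynomial (Fin 3) k}
    (hg : eval p.rep g ≠ 0) : ¬ f ∣ g := fun h =>
  hg (zero_dvd_iff.1 (p.eval_rep ▸ map_dvd (eval p.rep) h))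

variable [IsSmoothPlaneCurve f]

open IsSmoothPlaneCurve

lemma germ_mem_span_singleton_iff {g h : MvPolynomial (Fin 3) k} {d e : ℕ}
    (hg : g.IsHomogeneous d) (hh : h.IsHomogeneous e) :
    germ p g ∈ Ideal.span {germ p h} ↔
      ∃ (m : ℕ) (s : MvPolynomial (Fin 3) k), s.IsHomogeneous m ∧ eval p.rep s ≠ 0 ∧
        s * g ∈ Ideal.span {f, h} := by
  obtain ⟨e, hev, he⟩ := exists_slicePoly_eq p.rep_ne_zero
  rw [← Set.image_singleton, ← Ideal.map_span, germ_mem_map_iff, chartIdeal, he, ← Ideal.span_union]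
  constructor
  · rintro ⟨s, hs, hsg⟩
    obtain ⟨m, t, ht, hts, htg⟩ := exists_isHomogeneous_mul_mem_span_pair (eval p.rep)
      (isHomogeneous_linearForm e) (by rw [eval_linearForm, hev])
      (isHomogeneous (f := f)) hh hg
      (Ideal.span_mono (by grind) hsg)
    exact ⟨m, t, ht, hts ▸ hs, htg⟩
  · rintro ⟨m, s, -, hs, hsg⟩
    exact ⟨s, hs, Ideal.span_mono (by grind) hsg⟩

lemma germ_eq_zero_iff {g : MvPolynomial (Fin 3) k} {d : ℕ} (hg : g.IsHomogeneous d) :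
    germ p g = 0 ↔ f ∣ g := by
  refine ⟨fun h => ?_, fun h => zero_dvd_iff.1 (germ_self p ▸ map_dvd (germ p) h)⟩
  obtain ⟨m, s, -, hs, hsg⟩ := (germ_mem_span_singleton_iff p hg
    (isHomogeneous_zero (Fin 3) k 0)).1 (by rw [h]; exact Ideal.zero_mem _)
  rw [Set.pair_comm, Ideal.span_insert_zero, Ideal.mem_span_singleton] at hsg
  exact (prime.dvd_or_dvd hsg).resolve_left (not_dvd_of_eval_rep_ne_zero hs)

instance : IsDomain (LocalRing p) := by
  obtain ⟨e, hev, he⟩ := exists_slicePoly_eq p.rep_ne_zero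
  have : (chartIdeal p).IsPrime := by
    rw [chartIdeal, he]
    exact isPrime_span_pair_sub_one (isHomogeneous_linearForm e) isHomogeneous prime
      (by rw [eval_linearForm, hev]) p.eval_rep
  exact IsLocalization.isDomain_localization (Ideal.primeCompl_le_nonZeroDivisors _)

lemma gradient_dotProduct_rep : gradient f p.rep ⬝ᵥ p.rep = 0 := by
  rw [gradient_dotProduct_self isHomogeneous, p.eval_rep, smul_zero]

lemma gradient_rep_ne_zero : gradient f p.rep ≠ 0 :=
  gradient_ne_zero _ p.rep_ne_zero p.eval_rep

variable {p} {b : Fin 3 → k}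

lemma maximalIdeal_eq_span_germ_linearForm (hb : b ⬝ᵥ p.rep = 0)
    (hfb : LinearIndependent k ![gradient f p.rep, b]) :
    IsLocalRing.maximalIdeal (LocalRing p) = Ideal.span {germ p (linearForm b)} := by
  obtain ⟨e, hev, he⟩ := exists_slicePoly_eq p.rep_ne_zero
  apply le_antisymm
  · have hle := Ideal.map_mono (f := germ p)
      (ker_eval_le_span_sup_sq isHomogeneous p.eval_rep hb hev hfb)
    rw [← he, Ideal.map_sup, Ideal.map_span, Ideal.map_pow, map_germ_ker_eval, Set.image_insert_eq,
      Set.image_pair, germ_self, germ_slicePoly, Set.pair_eq_singleton, Set.pair_comm,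
      Ideal.span_insert_zero, pow_two, ← smul_eq_mul] at hle
    exact Submodule.le_of_le_smul_of_le_jacobson_bot (IsNoetherian.noetherian _)
      (IsLocalRing.maximalIdeal_le_jacobson ⊥) hle
  · rw [Ideal.span_singleton_le_iff_mem, germ_mem_maximalIdeal_iff, eval_linearForm, hb]

lemma germ_linearForm_ne_zero (hfb : LinearIndependent k ![gradient f p.rep, b]) :
    germ p (linearForm b) ≠ 0 := by
  rw [Ne, germ_eq_zero_iff p (isHomogeneous_linearForm b)]
  rintro ⟨u, hu⟩
  have hgrad := congrArg (gradient · p.rep) hu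
  simp only [gradient_linearForm, gradient_mul, p.eval_rep, zero_smul, zero_add] at hgrad
  have := (LinearIndependent.pair_iff.1 hfb (eval p.rep u) (-1) (by simp [hgrad])).2
  simp at this

lemma linearIndependent_gradient_cross {c : Fin 3 → k} (hc : gradient f p.rep ⬝ᵥ c ≠ 0) :
    LinearIndependent k ![gradient f p.rep, p.rep ⨯₃ c] := by
  rw [← crossProduct_ne_zero_iff_linearIndependent, cross_cross_eq_smul_sub_smul',
    dotProduct_comm p.rep, gradient_dotProduct_rep, zero_smul, sub_zero]
  exact smul_ne_zero hc p.rep_ne_zero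

instance : IsDiscreteValuationRing (LocalRing p) := by
  obtain ⟨i, hi⟩ := Function.ne_iff.1 (gradient_rep_ne_zero p)
  have hfb : LinearIndependent k ![gradient f p.rep, p.rep ⨯₃ Pi.single i 1] :=
    linearIndependent_gradient_cross (by rwa [dotProduct_single_one])
  have hb : p.rep ⨯₃ Pi.single i 1 ⬝ᵥ p.rep = 0 := by rw [dotProduct_comm, dot_self_cross]
  have hmax := maximalIdeal_eq_span_germ_linearForm hb hfb
  have hprincipal : (IsLocalRing.maximalIdeal (LocalRing p)).IsPrincipal := ⟨_, hmax⟩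
  refine ((IsDiscreteValuationRing.TFAE (LocalRing p) fun hfield => ?_).out 0 4).2 hprincipal
  rw [IsLocalRing.isField_iff_maximalIdeal_eq, hmax, Ideal.span_singleton_eq_bot] at hfield
  exact germ_linearForm_ne_zero hfb hfield

end LocalRing

section Order

variable {k : Type*} [Field k] {f : MvPolynomial (Fin 3) k} [IsSmoothPlaneCurve f]
  (p : PlanePoint f)

/-- The order of vanishing at `p` as an additive valuation on polynomials. Unlike `ordAt`, it takes
the value `⊤` on the multiples of `f`. -/
noncomputable def ord : AddValuation (MvPolynomial (Fin 3) k) ℕ∞ :=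
  (IsDiscreteValuationRing.addVal (LocalRing p)).comap (germ p)

variable {p} {g h : MvPolynomial (Fin 3) k} {d e n : ℕ}

lemma ord_le_ord_iff : ord p h ≤ ord p g ↔ germ p h ∣ germ p g :=
  IsDiscreteValuationRing.addVal_le_iff_dvd

lemma natCast_le_ord_iff : n ≤ ord p g ↔ germ p g ∈ IsLocalRing.maximalIdeal (LocalRing p) ^ n := by
  obtain ⟨ϖ, hϖ⟩ := IsDiscreteValuationRing.exists_irreducible (LocalRing p)
  rw [hϖ.maximalIdeal_eq, Ideal.span_singleton_pow, Ideal.mem_span_singleton, ← hϖ.addVal_pow,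
    ← IsDiscreteValuationRing.addVal_le_iff_dvd]
  rfl

lemma one_le_ord_iff : 1 ≤ ord p g ↔ eval p.rep g = 0 := by
  rw [← germ_mem_maximalIdeal_iff, ← pow_one (IsLocalRing.maximalIdeal _), ← natCast_le_ord_iff,
    Nat.cast_one]

lemma ord_eq_zero_iff : ord p g = 0 ↔ eval p.rep g ≠ 0 := by
  rw [← Order.lt_one_iff, ← not_le, one_le_ord_iff]

lemma ord_eq_top_iff (hg : g.IsHomogeneous d) : ord p g = ⊤ ↔ f ∣ g := by
  rw [← germ_eq_zero_iff p hg]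
  exact IsDiscreteValuationRing.addVal_eq_top_iff

lemma ordAt_eq_toNat_ord (g : MvPolynomial (Fin 3) k) : ordAt f p g = (ord p g).toNat := by
  have hset : {n : ℕ | ∃ s, eval p.rep s ≠ 0 ∧ s * g ∈ Ideal.span {f, slicePoly p.rep} +
      RingHom.ker (eval p.rep) ^ n} = {n : ℕ | (n : ℕ∞) ≤ ord p g} := by
    ext n
    simp only [Set.mem_ofPred_eq]
    rw [natCast_le_ord_iff, ← map_germ_ker_eval, ← Ideal.map_pow,
      germ_mem_map_iff]
    rfl
  rw [ordAt, ← PlanePoint.rep, hset]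
  generalize ord p g = m
  cases m with
  | top => simp
  | coe m =>
    simp only [Nat.cast_le, ENat.toNat_natCast]
    exact csSup_Iic

lemma coe_ordAt (hg : g.IsHomogeneous d) (hfg : ¬ f ∣ g) : (ordAt f p g : ℕ∞) = ord p g := by
  rw [ordAt_eq_toNat_ord, ENat.natCast_toNat ((ord_eq_top_iff hg).not.2 hfg)]

lemma exists_add_one_le_ord_sub_C_mul (hg : n ≤ ord p g) (hh : ord p h = n) :
    ∃ c : k, n + 1 ≤ ord p (g - C c * h) := by
  obtain ⟨x, hx⟩ := ord_le_ord_iff.1 (hh.trans_le hg)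
  obtain ⟨c, hc⟩ := exists_sub_germ_C_mem_maximalIdeal p x
  refine ⟨c, ?_⟩
  rw [← Nat.cast_one, ← Nat.cast_add, natCast_le_ord_iff, map_sub, map_mul, hx, mul_comm,
    ← sub_mul, pow_succ']
  exact Ideal.mul_mem_mul hc (natCast_le_ord_iff.1 hh.ge)

end Order

section Lines

variable {k : Type*} [Field k] {f : MvPolynomial (Fin 3) k} [IsSmoothPlaneCurve f]
  {p : PlanePoint f} {b : Fin 3 → k}

lemma ord_linearForm_eq_one (hb : b ⬝ᵥ p.rep = 0)
    (hfb : LinearIndependent k ![gradient f p.rep, b]) : ord p (linearForm b) = 1 :=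
  IsDiscreteValuationRing.addVal_uniformizer <|
    IsDiscreteValuationRing.irreducible_of_span_eq_maximalIdeal _
    (germ_linearForm_ne_zero hfb) (maximalIdeal_eq_span_germ_linearForm hb hfb)

lemma two_le_ord_linearForm_gradient (p : PlanePoint f) :
    2 ≤ ord p (linearForm (gradient f p.rep)) := by
  have hgerm : germ p (f - C (eval p.rep f) - centeredLinearForm p.rep (gradient f p.rep)) =
      -germ p (linearForm (gradient f p.rep)) := by
    rw [centeredLinearForm_eq, gradient_dotProduct_rep, p.eval_rep, map_zero, sub_zero, sub_zero,
      map_sub, germ_self, zero_sub]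
  have htaylor := Ideal.mem_map_of_mem (germ p)
    (sub_centeredLinearForm_gradient_mem_ker_eval_sq p.rep f)
  rw [hgerm, neg_mem_iff, Ideal.map_pow, map_germ_ker_eval, ← natCast_le_ord_iff] at htaylor
  exact htaylor

lemma exists_linearForm_ord_eq_one [Infinite k] (p : PlanePoint f) (T : Finset (PlanePoint f)) :
    ∃ b : Fin 3 → k, ord p (linearForm b) = 1 ∧ ∀ q ∈ T, q ≠ p → ord q (linearForm b) = 0 := by
  let u : Option {q : PlanePoint f // q ∈ T ∧ q ≠ p} → Fin 3 → k :=
    Option.rec (gradient f p.rep) fun q => q.1.rep ⨯₃ p.rep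
  have hu : ∀ i, u i ≠ 0
    | none => gradient_rep_ne_zero p
    | some q => PlanePoint.cross_rep_ne_zero q.2.2
  have : Finite {q : PlanePoint f // q ∈ T ∧ q ≠ p} := T.finite_toSet.subset fun q hq => hq.1
  obtain ⟨c, hc⟩ := Module.Dual.exists_forall_ne_zero_of_forall_exists
    (fun i => dotProductBilin k k (u i)) fun i => by
      simpa using! mt (dotProduct_eq_zero (u i)) (hu i)
  refine ⟨p.rep ⨯₃ c, ord_linearForm_eq_one (by rw [dotProduct_comm, dot_self_cross])
    (linearIndependent_gradient_cross (hc none)), fun q hq hqp => ?_⟩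
  rw [ord_eq_zero_iff, eval_linearForm, dotProduct_comm, triple_product_permutation,
    triple_product_permutation, dotProduct_comm]
  exact hc (some ⟨q, hq, hqp⟩)

end Lines

section Noether

lemma exists_irrelevant_pow_le {σ k : Type*} [Finite σ] [Field k] [IsAlgClosed k]
    {I : Ideal (MvPolynomial σ k)} (hI : ∀ w : σ → k, w ≠ 0 → ∃ s ∈ I, eval w s ≠ 0) :
    ∃ N : ℕ, Ideal.span (Set.range X) ^ N ≤ I := by
  refine Ideal.exists_pow_le_of_le_radical_of_fg ?_ (IsNoetherian.noetherian _)
  rw [← vanishingIdeal_zeroLocus_eq_radical (K := k), Ideal.span_le]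
  rintro _ ⟨i, rfl⟩
  rw [SetLike.mem_coe, mem_vanishingIdeal_iff]
  intro w hw
  suffices w = 0 by simp [this]
  by_contra hw0
  obtain ⟨s, hs, hws⟩ := hI w hw0
  exact hws (mem_zeroLocus_iff.1 hw s hs)

variable {k : Type*} [Field k] {f : MvPolynomial (Fin 3) k} [IsSmoothPlaneCurve f]
  {g h : MvPolynomial (Fin 3) k} {m e n : ℕ}

open IsSmoothPlaneCurve

variable [IsAlgClosed k]

lemma mem_span_pair_of_ord_le (hg : g.IsHomogeneous n) (hh : h.IsHomogeneous e) (hfh : ¬ f ∣ h)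
    (hord : ∀ p : PlanePoint f, ord p h ≤ ord p g) : g ∈ Ideal.span {f, h} := by
  obtain ⟨N, hN⟩ := exists_irrelevant_pow_le (I := Submodule.colon (Ideal.span {f, h}) {g})
    fun w hw => by
      simp only [Submodule.mem_colon_singleton, smul_eq_mul]
      by_cases hfw : eval w f = 0
      · obtain ⟨c, hc⟩ := Projectivization.exists_smul_eq_mk_rep k w hw
        let p : PlanePoint f := ⟨Projectivization.mk k w hw, by
          rw [← hc, Units.smul_def, eval_smul_of_isHomogeneous isHomogeneous, hfw, mul_zero]⟩
        obtain ⟨m, s, hs, hps, hsg⟩ := (germ_mem_span_singleton_iff p hg hh).1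
          (Ideal.mem_span_singleton.2 (ord_le_ord_iff.1 (hord p)))
        have hrep : p.rep = (c : k) • w := hc.symm
        rw [hrep, eval_smul_of_isHomogeneous hs] at hps
        exact ⟨s, hsg, right_ne_zero_of_mul hps⟩
      · exact ⟨f, Ideal.mul_mem_right _ _ (Ideal.subset_span (by simp)), hfw⟩
  exact mem_span_pair_of_irrelevant_pow_le prime hfh N fun u hu =>
    Submodule.mem_colon_singleton.1 (hN hu)

/-- Max Noether's theorem. -/
theorem exists_isHomogeneous_dvd_sub_mul (hg : g.IsHomogeneous (m + e)) (hh : h.IsHomogeneous e)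
    (hfh : ¬ f ∣ h) (hord : ∀ p : PlanePoint f, ord p h ≤ ord p g) :
    ∃ b : MvPolynomial (Fin 3) k, b.IsHomogeneous m ∧ f ∣ g - h * b := by
  obtain ⟨a, b, hab⟩ := Ideal.mem_span_pair.1 (mem_span_pair_of_ord_le hg hh hfh hord)
  have hcomp := congrArg (homogeneousComponent (m + e)) hab
  rw [homogeneousComponent_eq_self hg, map_add, homogeneousComponent_add_mul hh] at hcomp
  refine ⟨homogeneousComponent m b, homogeneousComponent_isHomogeneous m b, ?_⟩
  rw [← hcomp, mul_comm h, add_sub_cancel_right]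
  exact dvd_homogeneousComponent isHomogeneous ⟨a, mul_comm a f⟩ _

end Noether

section FormsThrough

variable {k : Type*} [Field k] {f : MvPolynomial (Fin 3) k} [IsSmoothPlaneCurve f]
  {g h : MvPolynomial (Fin 3) k} {e n : ℕ}

/-- The forms of degree `n` whose divisor on the curve is at least `Z`. -/
noncomputable def formsThrough (Z : PlanePoint f →₀ ℕ) (n : ℕ) :
    Submodule k (MvPolynomial (Fin 3) k) where
  carrier := {g | g.IsHomogeneous n ∧ ∀ p, Z p ≤ ord p g}
  add_mem' hg hh := ⟨hg.1.add hh.1, fun p => (ord p).map_le_add (hg.2 p) (hh.2 p)⟩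
  zero_mem' := ⟨isHomogeneous_zero _ _ _, fun p => by simp⟩
  smul_mem' c g hg := by
    rw [smul_eq_C_mul]
    refine ⟨hg.1.C_mul c, fun p => ?_⟩
    rw [AddValuation.map_mul]
    exact le_add_left (hg.2 p)

lemma mem_formsThrough {Z : PlanePoint f →₀ ℕ} :
    g ∈ formsThrough Z n ↔ g.IsHomogeneous n ∧ ∀ p, Z p ≤ ord p g :=
  Iff.rfl

lemma formsThrough_le_homogeneousSubmodule (Z : PlanePoint f →₀ ℕ) (n : ℕ) :
    formsThrough Z n ≤ homogeneousSubmodule (Fin 3) k n :=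
  fun _ hg => hg.1

instance (Z : PlanePoint f →₀ ℕ) (n : ℕ) : Module.Finite k (formsThrough Z n) :=
  Submodule.finiteDimensional_of_le (formsThrough_le_homogeneousSubmodule Z n)

lemma formsThrough_zero (n : ℕ) :
    formsThrough (0 : PlanePoint f →₀ ℕ) n = homogeneousSubmodule (Fin 3) k n := by
  ext g
  simp [mem_formsThrough]

lemma formsThrough_anti {Y Z : PlanePoint f →₀ ℕ} (hYZ : Y ≤ Z) (n : ℕ) :
    formsThrough Z n ≤ formsThrough Y n :=
  fun _ hg => ⟨hg.1, fun p => (Nat.cast_le.2 (hYZ p)).trans (hg.2 p)⟩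

lemma exists_isHomogeneous_ord_eq_zero (p : PlanePoint f) (n : ℕ) :
    ∃ g : MvPolynomial (Fin 3) k, g.IsHomogeneous n ∧ ord p g = 0 := by
  obtain ⟨i, hi⟩ := Function.ne_iff.1 p.rep_ne_zero
  refine ⟨X i ^ n, isHomogeneous_X_pow i n, ?_⟩
  rw [ord_eq_zero_iff, map_pow, eval_X]
  exact pow_ne_zero n hi

lemma exists_mem_formsThrough_ord_eq [Infinite k] (p : PlanePoint f) {Z : PlanePoint f →₀ ℕ}
    (hZ : Z.degree ≤ n) : ∃ g ∈ formsThrough Z n, ord p g = Z p := by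
  classical
  induction Z using finsupp_nat_induction generalizing n with
  | zero =>
    obtain ⟨g, hg, hpg⟩ := exists_isHomogeneous_ord_eq_zero p n
    exact ⟨g, ⟨hg, by simp⟩, by simpa using hpg⟩
  | add_single Z q ih =>
    rw [map_add, Finsupp.degree_single] at hZ
    obtain ⟨m, rfl⟩ := Nat.exists_eq_add_of_le' (Nat.le_of_add_left_le hZ)
    obtain ⟨g, ⟨hg, hZg⟩, hpg⟩ := ih (Nat.le_of_add_le_add_right hZ)
    obtain ⟨b, hqb, hpb⟩ := exists_linearForm_ord_eq_one q {p}
    refine ⟨g * linearForm b, ⟨hg.mul (isHomogeneous_linearForm b), fun r => ?_⟩, ?_⟩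
    · rw [AddValuation.map_mul, Finsupp.add_apply, Nat.cast_add]
      refine add_le_add (hZg r) ?_
      by_cases hr : q = r
      · simp [← hr, hqb]
      · simp [Finsupp.single_eq_of_ne' hr]
    · rw [AddValuation.map_mul, Finsupp.add_apply, Nat.cast_add, hpg]
      by_cases hp : p = q
      · simp [hp, hqb]
      · simp [hpb p (Finset.mem_singleton_self p) hp, Finsupp.single_eq_of_ne hp]

lemma formsThrough_eq_sup_span_singleton {p : PlanePoint f} {Z : PlanePoint f →₀ ℕ}
    (hg : g ∈ formsThrough Z n) (hpg : ord p g = Z p) :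
    formsThrough Z n = formsThrough (Z + Finsupp.single p 1) n ⊔ Submodule.span k {g} := by
  refine le_antisymm (fun x hx => ?_) (sup_le (formsThrough_anti le_self_add n)
    ((Submodule.span_singleton_le_iff_mem _ _).2 hg))
  obtain ⟨c, hc⟩ := exists_add_one_le_ord_sub_C_mul (hx.2 p) hpg
  have hxg : x - c • g ∈ formsThrough (Z + Finsupp.single p 1) n := by
    have hmem := sub_mem hx ((formsThrough Z n).smul_mem c hg)
    refine ⟨hmem.1, fun q => ?_⟩
    by_cases hq : q = p
    · simpa [hq, smul_eq_C_mul] using hc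
    · simpa [Finsupp.single_eq_of_ne hq] using hmem.2 q
  exact sub_add_cancel x (c • g) ▸ Submodule.add_mem_sup hxg
    (Submodule.smul_mem _ c (Submodule.mem_span_singleton_self g))

lemma finrank_formsThrough_add_degree [Infinite k] {Z : PlanePoint f →₀ ℕ} (hZ : Z.degree ≤ n) :
    Module.finrank k (formsThrough Z n) + Z.degree = (n + 2).choose 2 := by
  induction Z using finsupp_nat_induction with
  | zero => rw [formsThrough_zero, finrank_homogeneousSubmodule_fin_three, map_zero, add_zero]
  | add_single Z p ih =>
    rw [map_add, Finsupp.degree_single] at hZ ⊢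
    obtain ⟨g, hg, hpg⟩ := exists_mem_formsThrough_ord_eq p (Nat.le_of_succ_le hZ)
    have hgp : g ∉ formsThrough (Z + Finsupp.single p 1) n := fun hmem => by
      have := hmem.2 p
      rw [hpg, Nat.cast_le] at this
      simp at this
    have hdim := Submodule.finrank_sup_add_finrank_inf_eq (formsThrough (Z + Finsupp.single p 1) n)
      (Submodule.span k {g})
    have hg0 : g ≠ 0 := fun h0 => hgp (h0 ▸ zero_mem _)
    rw [← formsThrough_eq_sup_span_singleton hg hpg,
      ((Submodule.disjoint_span_singleton' hg0).2 hgp).eq_bot, finrank_bot,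
      finrank_span_singleton hg0] at hdim
    have := ih (Nat.le_of_succ_le hZ)
    lia

end FormsThrough

section Bezout

variable {k : Type*} [Field k] {f : MvPolynomial (Fin 3) k} [IsSmoothPlaneCurve f]
  {g h : MvPolynomial (Fin 3) k} {e : ℕ}

open IsSmoothPlaneCurve

lemma multiples_sup_multiples_le_formsThrough (hh : h.IsHomogeneous e) {Z : PlanePoint f →₀ ℕ}
    (hZ : ∀ p, Z p ≤ ord p h) (n : ℕ) :
    multiples f (n + e) ⊔ multiples h (n + f.totalDegree) ≤
      formsThrough Z (n + f.totalDegree + e) := by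
  refine sup_le (fun g hg => ?_) fun g hg => ?_
  · refine ⟨add_right_comm n e _ ▸ multiples_le_homogeneousSubmodule isHomogeneous _ hg, ?_⟩
    obtain ⟨a, -, rfl⟩ := mem_multiples.1 hg
    intro p
    simp [(ord_eq_top_iff (p := p) isHomogeneous).2 (dvd_refl f)]
  · refine ⟨multiples_le_homogeneousSubmodule hh _ hg, ?_⟩
    obtain ⟨a, -, rfl⟩ := mem_multiples.1 hg
    intro p
    rw [AddValuation.map_mul]
    exact le_add_right (hZ p)

lemma formsThrough_le_multiples_sup_multiples [IsAlgClosed k] (hh : h.IsHomogeneous e)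
    (hfh : ¬ f ∣ h) {Z : PlanePoint f →₀ ℕ} (hZ : ∀ p, ord p h ≤ Z p) (n : ℕ) :
    formsThrough Z (n + f.totalDegree + e) ≤
      multiples f (n + e) ⊔ multiples h (n + f.totalDegree) := by
  intro g hg
  obtain ⟨b, hb, hfb⟩ := exists_isHomogeneous_dvd_sub_mul hg.1 hh hfh
    fun p => (hZ p).trans (hg.2 p)
  have hgb : (g - h * b).IsHomogeneous (n + e + f.totalDegree) := by
    rw [add_right_comm, mul_comm]
    exact hg.1.sub (hb.mul hh)
  obtain ⟨a, ha, hab⟩ := exists_isHomogeneous_mul_eq_of_dvd isHomogeneous hgb hfb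
  rw [← sub_add_cancel g (h * b), ← hab, mul_comm]
  exact Submodule.add_mem_sup (mem_multiples.2 ⟨a, ha, rfl⟩) (mem_multiples.2 ⟨b, hb, rfl⟩)

lemma degree_le_totalDegree_mul [Infinite k] (hh : h.IsHomogeneous e) (hfh : ¬ f ∣ h)
    {Z : PlanePoint f →₀ ℕ} (hZ : ∀ p, Z p ≤ ord p h) : Z.degree ≤ f.totalDegree * e := by
  have hle := Submodule.finrank_mono (multiples_sup_multiples_le_formsThrough hh hZ Z.degree)
  have hsup := finrank_multiples_sup_multiples prime hfh isHomogeneous hh Z.degree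
  have hforms := finrank_formsThrough_add_degree (n := Z.degree + f.totalDegree + e) (Z := Z)
    (by lia)
  lia

lemma finite_setOf_one_le_ord [Infinite k] (hh : h.IsHomogeneous e) (hfh : ¬ f ∣ h) :
    {p : PlanePoint f | 1 ≤ ord p h}.Finite := by
  classical
  by_contra hinf
  obtain ⟨T, hT, hcard⟩ := Set.Infinite.exists_subset_card_eq hinf (f.totalDegree * e + 1)
  have hle := degree_le_totalDegree_mul hh hfh (Z := ∑ p ∈ T, Finsupp.single p 1) fun p => by
    by_cases hp : p ∈ T
    · simpa [Finsupp.finsetSum_apply, Finsupp.single_apply, hp] using hT hp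
    · simp [Finsupp.finsetSum_apply, Finsupp.single_apply, hp]
  simp only [map_sum, Finsupp.degree_single, Finset.sum_const, smul_eq_mul, mul_one, hcard] at hle
  exact Nat.not_succ_le_self _ hle

lemma exists_finsupp_eq_ord [Infinite k] (hh : h.IsHomogeneous e) (hfh : ¬ f ∣ h) :
    ∃ Z : PlanePoint f →₀ ℕ, ∀ p, Z p = ord p h :=
  ⟨Finsupp.onFinset (finite_setOf_one_le_ord hh hfh).toFinset (fun p => ordAt f p h) fun p hp => by
      rw [Set.Finite.mem_toFinset, Set.mem_ofPred_eq, ← coe_ordAt hh hfh]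
      exact_mod_cast Nat.one_le_iff_ne_zero.2 hp,
    fun _ => coe_ordAt hh hfh⟩

/-- Bézout's theorem. -/
theorem degree_eq_totalDegree_mul [IsAlgClosed k] (hh : h.IsHomogeneous e) (hfh : ¬ f ∣ h)
    {Z : PlanePoint f →₀ ℕ} (hZ : ∀ p, Z p = ord p h) : Z.degree = f.totalDegree * e := by
  have : Infinite k := IsAlgClosed.instInfinite
  refine (degree_le_totalDegree_mul hh hfh fun p => (hZ p).le).antisymm ?_
  have hle := Submodule.finrank_mono
    (formsThrough_le_multiples_sup_multiples hh hfh (fun p => (hZ p).ge) Z.degree)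
  have hsup := finrank_multiples_sup_multiples prime hfh isHomogeneous hh Z.degree
  have hforms := finrank_formsThrough_add_degree (n := Z.degree + f.totalDegree + e) (Z := Z)
    (by lia)
  lia

end Bezout

section Residuation

variable {k : Type*} [Field k] {f : MvPolynomial (Fin 3) k} [IsSmoothPlaneCurve f]
  {p : PlanePoint f} {b : Fin 3 → k} {g h u : MvPolynomial (Fin 3) k} {m n : ℕ}

open IsSmoothPlaneCurve

lemma ord_eq_ord_of_dvd_sub (hgh : f ∣ g - h) : ord p g = ord p h := by
  have hgerm : germ p g = germ p h := by
    rw [← sub_eq_zero, ← map_sub]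
    exact zero_dvd_iff.1 (germ_self p ▸ map_dvd (germ p) hgh)
  exact le_antisymm (ord_le_ord_iff.2 hgerm.dvd) (ord_le_ord_iff.2 hgerm.symm.dvd)

lemma not_dvd_linearForm_of_ord_eq_one (hb : ord p (linearForm b) = 1) : ¬ f ∣ linearForm b := by
  rw [← ord_eq_top_iff (p := p) (isHomogeneous_linearForm b), hb]
  exact ENat.one_ne_top

lemma not_linearForm_dvd_linearForm_gradient (hb : ord p (linearForm b) = 1) :
    ¬ linearForm b ∣ linearForm (gradient f p.rep) := by
  intro hdvd
  obtain ⟨a, ha, ht⟩ := exists_isHomogeneous_mul_eq_of_dvd (n := 0) (isHomogeneous_linearForm b)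
    (by simpa using isHomogeneous_linearForm (gradient f p.rep)) hdvd
  obtain ⟨c, rfl⟩ := exists_C_eq_of_isHomogeneous_zero ha
  have hc := two_le_ord_linearForm_gradient p
  rw [← ht, AddValuation.map_mul, hb, ← one_add_one_eq_two,
    ENat.add_le_add_iff_right ENat.one_ne_top, one_le_ord_iff, eval_C] at hc
  rw [hc, C_0, zero_mul] at ht
  have hgrad := gradient_linearForm (gradient f p.rep) p.rep
  rw [← ht] at hgrad
  exact gradient_rep_ne_zero p (hgrad.symm.trans (by ext; simp [gradient]))

variable [IsAlgClosed k]

/- The tangent at `p` supplies the vanishing at `p` that `u` may lack. -/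
lemma linearForm_dvd_of_ord_le (hb : ord p (linearForm b) = 1) (hu : u.IsHomogeneous m)
    (hm : m + 1 < f.totalDegree) (hord : ∀ q ≠ p, ord q (linearForm b) ≤ ord q u) :
    linearForm b ∣ u := by
  set t := linearForm (gradient f p.rep)
  have htu : (t * u).IsHomogeneous (m + 1) :=
    add_comm 1 m ▸ (isHomogeneous_linearForm _).mul hu
  have hfb := not_dvd_linearForm_of_ord_eq_one hb
  obtain ⟨y, hy, hfy⟩ := exists_isHomogeneous_dvd_sub_mul htu (isHomogeneous_linearForm b) hfb
    fun q => by
      rw [AddValuation.map_mul]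
      by_cases hq : q = p
      · rw [hq, hb]
        exact (one_le_two.trans (two_le_ord_linearForm_gradient p)).trans le_self_add
      · exact (hord q hq).trans le_add_self
  have heq : t * u - linearForm b * y = 0 := eq_zero_of_dvd_of_isHomogeneous isHomogeneous
    (htu.sub (add_comm 1 m ▸ (isHomogeneous_linearForm b).mul hy)) hm hfy
  have hprime := prime_linearForm fun hb0 => hfb (hb0 ▸ dvd_zero f)
  exact (hprime.dvd_or_dvd ⟨y, sub_eq_zero.1 heq⟩).resolve_left
    (not_linearForm_dvd_linearForm_gradient hb)

theorem exists_isHomogeneous_dvd_sub_mul_of_ord_le_add {E : PlanePoint f →₀ ℕ}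
    (hg : g.IsHomogeneous (m + n)) (hh : h.IsHomogeneous n) (hfh : ¬ f ∣ h)
    (hord : ∀ p, ord p h ≤ ord p g + E p) (hE : E.degree + m + 2 ≤ f.totalDegree) :
    ∃ b : MvPolynomial (Fin 3) k, b.IsHomogeneous m ∧ f ∣ g - h * b := by
  have : Infinite k := IsAlgClosed.instInfinite
  induction E using finsupp_nat_induction generalizing g m with
  | zero => exact exists_isHomogeneous_dvd_sub_mul hg hh hfh (by simpa using hord)
  | add_single E p ih =>
    rw [map_add, Finsupp.degree_single] at hE
    obtain ⟨b, hpb, hqb⟩ := exists_linearForm_ord_eq_one p E.support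
    obtain ⟨u, hu, hfu⟩ := ih (m := m + 1) (g := g * linearForm b)
      (add_right_comm m n 1 ▸ hg.mul (isHomogeneous_linearForm b))
      (fun q => by
        rw [AddValuation.map_mul, add_right_comm]
        by_cases hq : q = p
        · simpa [hq, hpb, add_assoc] using hord p
        · exact (by simpa [Finsupp.single_eq_of_ne hq] using hord q : ord q h ≤ ord q g + E q).trans
            le_self_add)
      (by lia)
    have hbu : linearForm b ∣ u := linearForm_dvd_of_ord_le hpb hu (by lia) fun q hq => by
      by_cases hqE : q ∈ E.support
      · simp [hqb q hqE hq]
      · have hgq : ord q h ≤ ord q g := by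
          simpa [Finsupp.single_eq_of_ne hq, Finsupp.notMem_support_iff.1 hqE] using hord q
        have hcancel := ord_eq_ord_of_dvd_sub (p := q) hfu
        rw [AddValuation.map_mul, AddValuation.map_mul] at hcancel
        rw [← ENat.add_le_add_iff_left ((ord_eq_top_iff hh).not.2 hfh), ← hcancel]
        gcongr
    obtain ⟨v, hv, rfl⟩ := exists_isHomogeneous_mul_eq_of_dvd (isHomogeneous_linearForm b) hu hbu
    refine ⟨v, hv, (prime.dvd_or_dvd ?_).resolve_right
      (not_dvd_linearForm_of_ord_eq_one hpb)⟩
    rwa [sub_mul, mul_assoc]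

end Residuation

section RiemannRoch

variable {k : Type*} [Field k] [IsAlgClosed k] {f : MvPolynomial (Fin 3) k} [IsSmoothPlaneCurve f]
  {g h g' h' : MvPolynomial (Fin 3) k} {e e' : ℕ} {D : PlanePoint f →₀ ℤ}

open IsSmoothPlaneCurve

lemma exists_effective_divisor (hg : g.IsHomogeneous e) (hh : h.IsHomogeneous e) (hfg : ¬ f ∣ g)
    (hfh : ¬ f ∣ h) (hD : ∀ p, 0 ≤ (ordAt f p g : ℤ) - ordAt f p h + D p) :
    ∃ E : PlanePoint f →₀ ℕ, (∀ p, (E p : ℤ) = ordAt f p g - ordAt f p h + D p) ∧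
      (E.degree : ℤ) = D.degree := by
  have : Infinite k := IsAlgClosed.instInfinite
  obtain ⟨G, hG⟩ := exists_finsupp_eq_ord hg hfg
  obtain ⟨H, hH⟩ := exists_finsupp_eq_ord hh hfh
  let D' : PlanePoint f →₀ ℤ := G.mapRange Nat.cast Nat.cast_zero -
    H.mapRange Nat.cast Nat.cast_zero + D
  have hD' (p) : D' p = ordAt f p g - ordAt f p h + D p := by
    have hGp : G p = ordAt f p g := Nat.cast_injective ((hG p).trans (coe_ordAt hg hfg).symm)
    have hHp : H p = ordAt f p h := Nat.cast_injective ((hH p).trans (coe_ordAt hh hfh).symm)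
    simp [D', hGp, hHp]
  have hE : (D'.mapRange Int.toNat rfl).mapRange (Nat.cast : ℕ → ℤ) Nat.cast_zero = D' := by
    ext p
    simpa using (hD' p).symm ▸ hD p
  refine ⟨D'.mapRange Int.toNat rfl, fun p => (DFunLike.congr_fun hE p).trans (hD' p), ?_⟩
  rw [← degree_mapRange_natCast, hE, map_add, map_sub, degree_mapRange_natCast,
    degree_mapRange_natCast, degree_eq_totalDegree_mul hg hfg hG,
    degree_eq_totalDegree_mul hh hfh hH, sub_self, zero_add]

lemma exists_dvd_mul_sub_C_mul (hg : g.IsHomogeneous e) (hh : h.IsHomogeneous e) (hfg : ¬ f ∣ g)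
    (hfh : ¬ f ∣ h) (hD : ∀ p, 0 ≤ (ordAt f p g : ℤ) - ordAt f p h + D p)
    (hg' : g'.IsHomogeneous e') (hh' : h'.IsHomogeneous e') (hfg' : ¬ f ∣ g') (hfh' : ¬ f ∣ h')
    (hD' : ∀ p, 0 ≤ (ordAt f p g' : ℤ) - ordAt f p h' + D p)
    (hdeg : D.degree ≤ (f.totalDegree : ℤ) - 2) :
    ∃ c : k, f ∣ g' * h - h' * g * C c := by
  obtain ⟨E, hE, hEdeg⟩ := exists_effective_divisor hg hh hfg hfh hD
  have hord (p) : ord p (h' * g) ≤ ord p (g' * h) + E p := by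
    rw [AddValuation.map_mul, AddValuation.map_mul, ← coe_ordAt hg hfg, ← coe_ordAt hh hfh,
      ← coe_ordAt hg' hfg', ← coe_ordAt hh' hfh']
    norm_cast
    linarith [hE p, hD' p]
  obtain ⟨b, hb, hfb⟩ := exists_isHomogeneous_dvd_sub_mul_of_ord_le_add (m := 0)
    (by simpa using hg'.mul hh) (hh'.mul hg) (prime.not_dvd_mul hfh' hfg) hord (by lia)
  obtain ⟨c, rfl⟩ := exists_C_eq_of_isHomogeneous_zero hb
  exact ⟨c, hfb⟩

lemma algebraMap_mk_span_singleton_eq_zero_iff {R F : Type*} [CommRing R] [CommRing F] {f g : R}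
    [Algebra (R ⧸ Ideal.span {f}) F] [FaithfulSMul (R ⧸ Ideal.span {f}) F] :
    algebraMap _ F (Ideal.Quotient.mk (Ideal.span {f}) g) = 0 ↔ f ∣ g := by
  rw [FaithfulSMul.algebraMap_eq_zero_iff, Ideal.Quotient.eq_zero_iff_dvd]

variable {F : Type*} [Field F] [Algebra (MvPolynomial (Fin 3) k ⧸ Ideal.span {f}) F]
  [IsFractionRing (MvPolynomial (Fin 3) k ⧸ Ideal.span {f}) F]
  [Algebra k F] [IsScalarTower k (MvPolynomial (Fin 3) k ⧸ Ideal.span {f}) F]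

theorem exists_smul_eq_of_mem_RRspace (hdeg : D.degree ≤ (f.totalDegree : ℤ) - 2) {φ ψ : F}
    (hφ : φ ∈ RRspace F f D) (hφ0 : φ ≠ 0) (hψ : ψ ∈ RRspace F f D) : ∃ c : k, c • φ = ψ := by
  obtain ⟨e, g, h, hg, hh, hfg, hfh, hφgh, hD⟩ := hφ.resolve_left hφ0
  obtain rfl | ⟨e', g', h', hg', hh', hfg', hfh', hψgh, hD'⟩ := hψ
  · exact ⟨0, zero_smul k φ⟩
  obtain ⟨c, hc⟩ := exists_dvd_mul_sub_C_mul hg hh hfg hfh hD hg' hh' hfg' hfh' hD' hdeg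
  have hC : algebraMap _ F (Ideal.Quotient.mk (Ideal.span {f}) (C c)) = algebraMap k F c :=
    (IsScalarTower.algebraMap_apply k (MvPolynomial (Fin 3) k ⧸ Ideal.span {f}) F c).symm
  have hmk (x) : algebraMap _ F (Ideal.Quotient.mk (Ideal.span {f}) x) = 0 ↔ f ∣ x :=
    algebraMap_mk_span_singleton_eq_zero_iff
  rw [← hmk] at hc
  simp only [map_sub, map_mul, hC, ← hφgh, ← hψgh] at hc
  refine ⟨c, mul_right_cancel₀ (mul_ne_zero ((hmk h).not.2 hfh) ((hmk h').not.2 hfh')) ?_⟩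
  rw [Algebra.smul_def]
  linear_combination -hc

end RiemannRoch

lemma isSmoothPlaneCurve_of_isFractionRing {k : Type*} [Field k] {d : ℕ}
    {f : MvPolynomial (Fin 3) k} (hf : f.IsHomogeneous d)
    (hsm : ∀ v : Fin 3 → k, eval v f = 0 → (∀ i : Fin 3, eval v (pderiv i f) = 0) → v = 0)
    (F : Type*) [Field F] [Algebra (MvPolynomial (Fin 3) k ⧸ Ideal.span {f}) F]
    [IsFractionRing (MvPolynomial (Fin 3) k ⧸ Ideal.span {f}) F] :
    IsSmoothPlaneCurve f := by
  have hf0 : f ≠ 0 := by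
    rintro rfl
    exact one_ne_zero (hsm 1 (by simp) (by simp))
  have : IsDomain (MvPolynomial (Fin 3) k ⧸ Ideal.span {f}) :=
    (IsFractionRing.injective _ F).isDomain
  exact
    { prime := (Ideal.span_singleton_prime hf0).1 ((Ideal.Quotient.isDomain_iff_prime _).1 this)
      isHomogeneous := hf.totalDegree hf0 ▸ hf
      gradient_ne_zero := fun v hv hfv hgrad => hv (hsm v hfv fun i => congrFun hgrad i) }

end PlaneCurve

theorem no_g1m_of_degree_le_sub_two_general
    (k : Type*) [Field k] [IsAlgClosed k]
    (d : ℕ) (f : MvPolynomial (Fin 3) k) (hf : f.IsHomogeneous d)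
    (hsm : ∀ v : Fin 3 → k, MvPolynomial.eval v f = 0 →
      (∀ i : Fin 3, MvPolynomial.eval v (MvPolynomial.pderiv i f) = 0) → v = 0)
    (F : Type*) [Field F]
    [Algebra (MvPolynomial (Fin 3) k ⧸ Ideal.span {f}) F]
    [IsFractionRing (MvPolynomial (Fin 3) k ⧸ Ideal.span {f}) F]
    [Algebra k F] [IsScalarTower k (MvPolynomial (Fin 3) k ⧸ Ideal.span {f}) F]
    (D : PlanePoint f →₀ ℤ) (hdeg : D.sum (fun _ n => n) ≤ (d : ℤ) - 2) :
    h0 F f (fun q => D q) ≤ 1 := by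
  have hC := PlaneCurve.isSmoothPlaneCurve_of_isFractionRing hf hsm F
  rw [← hf.totalDegree hC.prime.ne_zero] at hdeg
  exact PlaneCurve.finrank_span_le_one fun φ hφ hφ0 ψ hψ =>
    PlaneCurve.exists_smul_eq_of_mem_RRspace hdeg hφ hφ0 hψ

/-- A smooth plane curve of degree `d ≥ 4` over an algebraically closed field has no `g¹_m`
for `m ≤ d - 2`: every divisor `D` on `C` of degree at most `d - 2` has `ℓ(D) ≤ 1`
(equivalently, every line bundle of degree at most `d - 2` has `h⁰ ≤ 1`). -/
theorem no_g1m_of_degree_le_sub_two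
    (k : Type*) [Field k] [IsAlgClosed k]
    (d : ℕ) (hd : 4 ≤ d) (f : MvPolynomial (Fin 3) k) (hf : f.IsHomogeneous d)
    (hsm : ∀ v : Fin 3 → k, MvPolynomial.eval v f = 0 →
      (∀ i : Fin 3, MvPolynomial.eval v (MvPolynomial.pderiv i f) = 0) → v = 0)
    (F : Type*) [Field F]
    [Algebra (MvPolynomial (Fin 3) k ⧸ Ideal.span {f}) F]
    [IsFractionRing (MvPolynomial (Fin 3) k ⧸ Ideal.span {f}) F]
    [Algebra k F] [IsScalarTower k (MvPolynomial (Fin 3) k ⧸ Ideal.span {f}) F]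
    (D : PlanePoint f →₀ ℤ) (hdeg : D.sum (fun _ n => n) ≤ (d : ℤ) - 2) :
    h0 F f (fun q => D q) ≤ 1 :=
  no_g1m_of_degree_le_sub_two_general k d f hf hsm F D hdeg
end

section
/- Let $k$ be an algebraically closed field and let $C \subset \mathbb{P}^2_k$ be a smooth plane curve of degree $d \geq 4$. Then every $g^1_{d-1}$ on $C$ is of the form $\mathcal{O}_C(1)(-p)$ for some point $p \in C$: that is, if $\mathcal{L}$ is a line bundle on $C$ of degree $d-1$ with $h^0(C, \mathcal{L}) \geq 2$, then there exists a point $p \in C$ such that $\mathcal{L} \cong \mathcal{O}_C(1) \otimes \mathcal{O}_C(-p)$. Equivalently, every divisor of degree $d-1$ on $C$ with $\ell(D) \geq 2$ is linearly equivalent to $H - p$ for some $p \in C$, where $H$ is the intersection divisor of $C$ with a line in $\mathbb{P}^2_k$. -/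
/-!
The local rings of `C` are discrete valuation rings, and vanishing along an effective divisor `n`
imposes exactly `deg n` conditions on the forms of degree at least `deg n`. Forms `a`, `b` of
degrees `α`, `β` without common factor span, in large degrees, a space of codimension `α β` (the
Koszul relations are the only ones), so a divisor `n ≤ div a, div b` on `C` has degree at most
`α β`; for `b = f` this gives `deg (div g) ≤ d e` for `g` of degree `e`. Equality holds because a
line cuts out at least `d` points and some multiple of `g` is congruent modulo `f` to a product of
lines.

A rational function `a / b` on `C`, with `a`, `b` of degree `m` and `div a - div b = D - E`, can be
rewritten as `u / v` with `u`, `v` of degree at most `d - 1`: as `div a` and `div b` have a common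
part of degree at least `m d - (d - 1)`, counting the remaining conditions for `u b - v a` to vanish
on `C` leaves a space of pairs `(u, v)` of dimension at least `d`. Once `u` and `v` are coprime, of
degree `n`, they share a divisor of degree at least `n d - (d - 1)`, which is at most `n ^ 2`. Hence
`n ≤ 1` or `n = d - 1`, and the latter is excluded by choosing `(u, v)` with a further common zero
outside `C`. If `n = 0` the function is constant; if `n = 1`, the lines `u` and `v` meet in one
point `p`, and `div u = p + D`.
-/

section PlaneCurves

open MvPolynomial IsDiscreteValuationRing
open scoped Matrix

section DiscreteValuationRing

variable {O : Type*} [CommRing O] [IsDomain O] [IsDiscreteValuationRing O]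

theorem natCast_le_addVal_iff_mem_maximalIdeal_pow (n : ℕ) (x : O) :
    (n : ℕ∞) ≤ addVal O x ↔ x ∈ IsLocalRing.maximalIdeal O ^ n := by
  obtain ⟨ϖ, hϖ⟩ := exists_irreducible O
  rw [hϖ.maximalIdeal_eq, Ideal.span_singleton_pow, Ideal.mem_span_singleton,
    ← addVal_le_iff_dvd, hϖ.addVal_pow]

theorem exists_succ_le_addVal_sub_algebraMap_mul {k : Type*} [CommRing k] [Algebra k O]
    (hk : Function.Surjective (algebraMap k (IsLocalRing.ResidueField O))) {n : ℕ} {a b : O}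
    (ha : addVal O a = n) (hb : (n : ℕ∞) ≤ addVal O b) :
    ∃ c : k, ((n + 1 : ℕ) : ℕ∞) ≤ addVal O (b - algebraMap k O c * a) := by
  obtain ⟨r, rfl⟩ := addVal_le_iff_dvd.1 (ha.le.trans hb)
  obtain ⟨c, hc⟩ := hk (IsLocalRing.residue O r)
  have hr : 1 ≤ addVal O (r - algebraMap k O c) := by
    rw [← Nat.cast_one, natCast_le_addVal_iff_mem_maximalIdeal_pow, pow_one,
      ← IsLocalRing.residue_eq_zero_iff, map_sub, ← hc, sub_eq_zero]
    rfl
  refine ⟨c, ?_⟩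
  rw [mul_comm a r, ← sub_mul, addVal_mul, ha, add_comm n, Nat.cast_add, Nat.cast_one]
  gcongr

theorem maximalIdeal_localization_eq_span_singleton {R : Type*} [CommRing R] [IsNoetherianRing R]
    {𝔪 : Ideal R} [𝔪.IsPrime] {s : R} (hs : s ∈ 𝔪) (h𝔪 : 𝔪 ≤ Ideal.span {s} ⊔ 𝔪 ^ 2) :
    IsLocalRing.maximalIdeal (Localization.AtPrime 𝔪) = Ideal.span {algebraMap R _ s} := by
  have hmax := IsLocalization.AtPrime.map_eq_maximalIdeal 𝔪 (Localization.AtPrime 𝔪)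
  apply le_antisymm
  · have : IsNoetherianRing (Localization.AtPrime 𝔪) :=
      IsLocalization.isNoetherianRing 𝔪.primeCompl _ inferInstance
    refine Submodule.le_of_le_smul_of_le_jacobson_bot
      (IsNoetherian.noetherian _) (IsLocalRing.maximalIdeal_le_jacobson _) ?_
    have h := Ideal.map_mono (f := algebraMap R (Localization.AtPrime 𝔪)) h𝔪
    rwa [Ideal.map_sup, Ideal.map_pow, hmax, Ideal.map_span, Set.image_singleton, pow_two] at h
  · rw [Ideal.span_singleton_le_iff_mem, ← hmax]
    exact Ideal.mem_map_of_mem _ hs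

theorem isDiscreteValuationRing_localization {R : Type*} [CommRing R] [IsDomain R]
    [IsNoetherianRing R] {𝔪 : Ideal R} [𝔪.IsPrime] {s : R} (hs : s ∈ 𝔪) (hs0 : s ≠ 0)
    (h𝔪 : 𝔪 ≤ Ideal.span {s} ⊔ 𝔪 ^ 2) : IsDiscreteValuationRing (Localization.AtPrime 𝔪) := by
  have hspan := maximalIdeal_localization_eq_span_singleton hs h𝔪
  have : IsNoetherianRing (Localization.AtPrime 𝔪) :=
    IsLocalization.isNoetherianRing 𝔪.primeCompl _ inferInstance
  have hfield : ¬ IsField (Localization.AtPrime 𝔪) := by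
    rw [IsLocalRing.isField_iff_maximalIdeal_eq, hspan, Ideal.span_singleton_eq_bot,
      map_eq_zero_iff _ (IsLocalization.injective _ 𝔪.primeCompl_le_nonZeroDivisors)]
    exact hs0
  have hprincipal : (IsLocalRing.maximalIdeal (Localization.AtPrime 𝔪)).IsPrincipal :=
    ⟨_, hspan⟩
  exact ((IsDiscreteValuationRing.TFAE _ hfield).out 0 4).2 hprincipal

theorem algebraMap_residueField_localization_surjective {k R : Type*} [CommRing k] [CommRing R]
    [Algebra k R] {𝔪 : Ideal R} [𝔪.IsMaximal]
    (hk : Function.Surjective (algebraMap k (R ⧸ 𝔪))) :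
    Function.Surjective
      (algebraMap k (IsLocalRing.ResidueField (Localization.AtPrime 𝔪))) := by
  have h := (Ideal.bijective_algebraMap_quotient_residueField 𝔪).surjective.comp hk
  rwa [← RingHom.coe_comp, ← IsScalarTower.algebraMap_eq] at h

end DiscreteValuationRing

universe u v

section Polynomials

variable {σ k : Type*} [Field k]

theorem aeval_mul_of_isHomogeneous {A : Type*} [CommRing A] [Algebra k A]
    {g : MvPolynomial σ k} {e : ℕ} (hg : g.IsHomogeneous e) (t : A) (y : σ → A) :
    aeval (fun j => t * y j) g = t ^ e * aeval y g := by
  simp only [aeval_def, eval₂_eq, Finset.mul_sum]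
  refine Finset.sum_congr rfl fun m hm => ?_
  have hdeg : ∑ i ∈ m.support, m i = e := (hg.degree_eq_sum_deg_support hm).symm
  simp only [mul_pow, Finset.prod_mul_distrib, Finset.prod_pow_eq_pow_sum, hdeg]
  ring

theorem not_dvd_of_isHomogeneous_of_lt {f g : MvPolynomial σ k} {d e : ℕ}
    (hf : f.IsHomogeneous d) (hg : g.IsHomogeneous e) (hg0 : g ≠ 0) (hlt : e < d) : ¬ f ∣ g := by
  intro h
  have hle := totalDegree_le_of_dvd_of_isDomain h hg0
  rw [hf.totalDegree (ne_zero_of_dvd_ne_zero hg0 h), hg.totalDegree hg0] at hle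
  omega

theorem exists_isHomogeneous_sub_mem_span {ℓ : MvPolynomial σ k} (hℓ : ℓ.IsHomogeneous 1)
    (w : MvPolynomial σ k) :
    ∃ (N : ℕ) (W : MvPolynomial σ k), W.IsHomogeneous N ∧ W - w ∈ Ideal.span {ℓ - 1} := by
  refine ⟨w.totalDegree, ∑ e ∈ Finset.range (w.totalDegree + 1),
    homogeneousComponent e w * ℓ ^ (w.totalDegree - e), ?_, ?_⟩
  · refine IsHomogeneous.sum _ _ _ fun e he => ?_
    convert! (homogeneousComponent_isHomogeneous e w).mul (hℓ.pow (w.totalDegree - e)) using 1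
    have := Finset.mem_range.1 he
    omega
  · rw [← sum_homogeneousComponent w, sum_homogeneousComponent w]
    nth_rw 4 [← sum_homogeneousComponent w]
    rw [← Finset.sum_sub_distrib]
    refine Ideal.sum_mem _ fun e _ => ?_
    rw [← mul_sub_one]
    refine Ideal.mul_mem_left _ _ (Ideal.mem_span_singleton.2 ?_)
    simpa using sub_dvd_pow_sub_pow ℓ 1 (w.totalDegree - e)

section Dehomogenize

variable {K : Type*} [Field K] [Algebra k K] {f ℓ : MvPolynomial σ k} {ψ : MvPolynomial σ k →ₐ[k] K}

/-- The dehomogenization `X_j ↦ ψ(X_j) / ψ(ℓ)` with respect to a form `ℓ` of degree one. It is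
applied to the projection `ψ` onto the function field of the cone `f = 0`, where it restricts
functions to the affine slice `{f = 0, ℓ = 1}`. -/
noncomputable def dehomogenize (ψ : MvPolynomial σ k →ₐ[k] K) (ℓ : MvPolynomial σ k) :
    MvPolynomial σ k →ₐ[k] K :=
  aeval fun j => (ψ ℓ)⁻¹ * ψ (X j)

theorem dehomogenize_of_isHomogeneous {g : MvPolynomial σ k} {e : ℕ} (hg : g.IsHomogeneous e) :
    dehomogenize ψ ℓ g = (ψ ℓ)⁻¹ ^ e * ψ g := by
  rw [dehomogenize, aeval_mul_of_isHomogeneous hg]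
  congr 1
  exact (DFunLike.congr_fun (aeval_unique ψ) g).symm

theorem dehomogenize_eq_zero_iff (hψ : RingHom.ker ψ = Ideal.span {f}) (hℓ : ¬ f ∣ ℓ)
    {g : MvPolynomial σ k} {e : ℕ} (hg : g.IsHomogeneous e) :
    dehomogenize ψ ℓ g = 0 ↔ f ∣ g := by
  have hker : ∀ w, ψ w = 0 ↔ f ∣ w := fun w => by
    rw [← Ideal.mem_span_singleton, ← hψ, RingHom.mem_ker]
  simp [dehomogenize_of_isHomogeneous hg, hker, hℓ]

theorem ker_dehomogenize (hψ : RingHom.ker ψ = Ideal.span {f}) (hℓ1 : ℓ.IsHomogeneous 1)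
    (hℓ : ¬ f ∣ ℓ) {d : ℕ} (hf : f.IsHomogeneous d) :
    RingHom.ker (dehomogenize ψ ℓ) = Ideal.span {f, ℓ - 1} := by
  have hℓker : dehomogenize ψ ℓ (ℓ - 1) = 0 := by
    have hψℓ : ψ ℓ ≠ 0 := fun h => hℓ (by rwa [← Ideal.mem_span_singleton, ← hψ])
    rw [map_sub, map_one, dehomogenize_of_isHomogeneous hℓ1, pow_one, inv_mul_cancel₀ hψℓ,
      sub_self]
  apply le_antisymm
  · intro w hw
    obtain ⟨N, W, hW, hWw⟩ := exists_isHomogeneous_sub_mem_span hℓ1 w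
    have hθW : dehomogenize ψ ℓ W = 0 := by
      obtain ⟨r, hr⟩ := Ideal.mem_span_singleton.1 hWw
      rw [← sub_add_cancel W w, map_add, hr, map_mul, hℓker, zero_mul, zero_add]
      exact hw
    have hfW : W ∈ Ideal.span {f, ℓ - 1} :=
      Ideal.mem_of_dvd _ ((dehomogenize_eq_zero_iff hψ hℓ hW).1 hθW)
        (Ideal.subset_span (Set.mem_insert _ _))
    rw [← sub_sub_cancel W w]
    exact sub_mem hfW (Ideal.span_mono (Set.subset_insert _ _) hWw)
  · rw [Ideal.span_le, Set.insert_subset_iff, Set.singleton_subset_iff]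
    exact ⟨(dehomogenize_eq_zero_iff hψ hℓ hf).2 dvd_rfl, hℓker⟩

end Dehomogenize

theorem exists_algHom_ker_eq_span_singleton {σ : Type u} {k : Type v} [Field k]
    {f : MvPolynomial σ k} (hf : Prime f) :
    ∃ (K : Type (max u v)) (_ : Field K) (_ : Algebra k K) (ψ : MvPolynomial σ k →ₐ[k] K),
      RingHom.ker ψ = Ideal.span {f} := by
  have : (Ideal.span {f}).IsPrime := (Ideal.span_singleton_prime hf.ne_zero).2 hf
  refine ⟨FractionRing (MvPolynomial σ k ⧸ Ideal.span {f}), inferInstance, inferInstance,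
    (IsScalarTower.toAlgHom k _ _).comp (Ideal.Quotient.mkₐ k (Ideal.span {f})), ?_⟩
  ext g
  simp [RingHom.mem_ker, Ideal.Quotient.eq_zero_iff_mem]

theorem isPrime_span_pair_sub_one {f ℓ : MvPolynomial σ k} {d : ℕ} (hf : f.IsHomogeneous d)
    (hfp : Prime f) (hℓ1 : ℓ.IsHomogeneous 1) (hℓ : ¬ f ∣ ℓ) :
    (Ideal.span {f, ℓ - 1}).IsPrime := by
  obtain ⟨K, _, _, ψ, hψ⟩ := exists_algHom_ker_eq_span_singleton hfp
  rw [← ker_dehomogenize hψ hℓ1 hℓ hf]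
  exact RingHom.ker_isPrime _

theorem mem_span_pair_sub_one_iff {f ℓ : MvPolynomial σ k} {d : ℕ} (hf : f.IsHomogeneous d)
    (hfp : Prime f) (hℓ1 : ℓ.IsHomogeneous 1) (hℓ : ¬ f ∣ ℓ) {g : MvPolynomial σ k} {e : ℕ}
    (hg : g.IsHomogeneous e) : g ∈ Ideal.span {f, ℓ - 1} ↔ f ∣ g := by
  obtain ⟨K, _, _, ψ, hψ⟩ := exists_algHom_ker_eq_span_singleton hfp
  rw [← ker_dehomogenize hψ hℓ1 hℓ hf]
  exact dehomogenize_eq_zero_iff hψ hℓ hg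

end Polynomials

section LinearForms

variable {σ k : Type*} [Field k]

/-- The gradient of `g` at `v`, with formal partial derivatives; it controls the tangent space at
`v` of the hypersurface `g = 0`. -/
noncomputable def gradientAt (v : σ → k) (g : MvPolynomial σ k) : σ → k :=
  fun j => eval v (pderiv j g)

theorem gradientAt_add (v : σ → k) (g h : MvPolynomial σ k) :
    gradientAt v (g + h) = gradientAt v g + gradientAt v h := by
  ext j
  simp [gradientAt]

theorem gradientAt_sub_one (v : σ → k) (g : MvPolynomial σ k) :
    gradientAt v (g - 1) = gradientAt v g := by
  ext j
  simp [gradientAt]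

theorem gradientAt_mul_X [DecidableEq σ] (v : σ → k) (g : MvPolynomial σ k) (i : σ) :
    gradientAt v (g * X i) = v i • gradientAt v g + Pi.single i (eval v g) := by
  ext j
  by_cases h : j = i
  · subst h
    simp [gradientAt, Derivation.leibniz, add_comm]
  · simp [gradientAt, Derivation.leibniz, pderiv_X, h, Ne.symm h]

variable [Fintype σ]

/-- The linear form with coefficient vector `b`, as a linear map in `b`; for three variables and
`b ≠ 0` it is the equation of a line in the plane. -/
noncomputable def linearForm : (σ → k) →ₗ[k] MvPolynomial σ k :=
  Fintype.linearCombination k X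

theorem linearForm_apply (b : σ → k) : linearForm b = ∑ j, C (b j) * X j := by
  simp only [linearForm, Fintype.linearCombination_apply, smul_eq_C_mul]

theorem isHomogeneous_linearForm (b : σ → k) : (linearForm b).IsHomogeneous 1 := by
  rw [linearForm_apply]
  exact IsHomogeneous.sum _ _ _ fun j _ => isHomogeneous_C_mul_X _ _

@[simp]
theorem eval_linearForm (b v : σ → k) : eval v (linearForm b) = b ⬝ᵥ v := by
  simp [linearForm_apply, dotProduct]

@[simp]
theorem linearForm_eq_zero_iff {b : σ → k} : linearForm b = 0 ↔ b = 0 := by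
  classical
  refine ⟨fun h => funext fun i => ?_, fun h => by rw [h, map_zero]⟩
  simpa using congrArg (eval (Pi.single i 1)) h

theorem gradientAt_linearForm (v b : σ → k) : gradientAt v (linearForm b) = b := by
  classical
  ext j
  simp [gradientAt, linearForm_apply, Derivation.leibniz, pderiv_X, Pi.single_apply]

theorem gradientAt_dotProduct_of_isHomogeneous {f : MvPolynomial σ k} {d : ℕ}
    (hf : f.IsHomogeneous d) (v : σ → k) : gradientAt v f ⬝ᵥ v = d • eval v f := by
  have h := congrArg (eval v) hf.sum_X_mul_pderiv
  simpa [dotProduct, gradientAt, mul_comm] using h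

theorem sub_sub_linearCombination_gradientAt_mem_ker_eval_sq (v : σ → k) (g : MvPolynomial σ k) :
    g - C (eval v g) - Fintype.linearCombination k (fun j => X j - C (v j)) (gradientAt v g) ∈
      RingHom.ker (eval v) ^ 2 := by
  classical
  induction g using MvPolynomial.induction_on with
  | C a => simp [gradientAt, Fintype.linearCombination_apply]
  | add p q hp hq =>
    convert! add_mem hp hq using 1
    rw [gradientAt_add]
    simp only [map_add]
    ring
  | mul_X p i hp =>
    have hsplit : p * X i - C (eval v (p * X i)) - Fintype.linearCombination k
          (fun j => X j - C (v j)) (gradientAt v (p * X i)) =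
        C (v i) * (p - C (eval v p) -
          Fintype.linearCombination k (fun j => X j - C (v j)) (gradientAt v p)) +
        (p - C (eval v p)) * (X i - C (v i)) := by
      rw [gradientAt_mul_X, map_add, map_smul, Fintype.linearCombination_apply_single]
      simp only [map_mul, eval_X, smul_eq_C_mul]
      ring
    rw [hsplit, pow_two]
    refine add_mem (Ideal.mul_mem_left _ _ (pow_two (RingHom.ker (eval v)) ▸ hp))
      (Ideal.mul_mem_mul ?_ ?_) <;> simp [RingHom.mem_ker]

end LinearForms

theorem ker_eval_le_of_span_gradientAt_eq_top {σ k : Type*} [Field k] [Finite σ] {v : σ → k}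
    {J : Ideal (MvPolynomial σ k)} (hJ : RingHom.ker (eval v) ^ 2 ≤ J) {S : Set (MvPolynomial σ k)}
    (hS : ∀ g ∈ S, g ∈ J ∧ eval v g = 0) (hspan : Submodule.span k (gradientAt v '' S) = ⊤) :
    RingHom.ker (eval v) ≤ J := by
  have := Fintype.ofFinite σ
  have hiff : ∀ g, eval v g = 0 → (g ∈ J ↔
      Fintype.linearCombination k (fun j => X j - C (v j)) (gradientAt v g) ∈ J) := by
    intro g hg
    have h := hJ (sub_sub_linearCombination_gradientAt_mem_ker_eval_sq v g)
    rw [hg, map_zero, sub_zero] at h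
    exact ⟨fun hgJ => (Submodule.sub_mem_iff_right _ hgJ).1 h,
      fun hΛ => (Submodule.sub_mem_iff_left _ hΛ).1 h⟩
  have hall : ∀ w, Fintype.linearCombination k (fun j => X j - C (v j)) w ∈ J := by
    intro w
    have htop : (⊤ : Submodule k (σ → k)) ≤ (J.restrictScalars k).comap
        (Fintype.linearCombination k (fun j => X j - C (v j))) := by
      rw [← hspan, Submodule.span_le]
      rintro _ ⟨g, hg, rfl⟩
      exact (hiff g (hS g hg).2).1 (hS g hg).1
    exact htop (Submodule.mem_top (x := w))
  exact fun g hg => (hiff g hg).2 (hall _)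

theorem exists_dual_eq_zero_span_eq_top {k V : Type*} [Field k] [AddCommGroup V] [Module k V]
    (hV : Module.finrank k V = 3) {δ : Module.Dual k V} {a e : V} (ha0 : a ≠ 0) (ha : δ a = 0)
    (he : δ e = 1) : ∃ b, b ≠ 0 ∧ δ b = 0 ∧ Submodule.span k {b, a, e} = ⊤ := by
  have : Module.Finite k V := Module.finite_of_finrank_pos (by omega)
  obtain ⟨b, hb⟩ : ∃ b, b ∉ Submodule.span k (Set.range ![a, e]) := by
    refine not_forall.1 fun h => ?_
    have hle := finrank_range_le_card (R := k) ![a, e]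
    rw [Set.finrank, Submodule.eq_top_iff'.2 h, finrank_top, hV, Fintype.card_fin] at hle
    omega
  have hmem : δ b • e ∈ Submodule.span k (Set.range ![a, e]) :=
    Submodule.smul_mem _ _ (Submodule.subset_span ⟨1, rfl⟩)
  have hb' : b - δ b • e ∉ Submodule.span k (Set.range ![a, e]) := fun h =>
    hb ((Submodule.sub_mem_iff_left _ hmem).1 h)
  have hae : LinearIndependent k ![a, e] := by
    rw [LinearIndependent.pair_iff' ha0]
    rintro t rfl
    simp [ha] at he
  have hbae : LinearIndependent k ![b - δ b • e, a, e] := linearIndependent_finCons.2 ⟨hae, hb'⟩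
  refine ⟨b - δ b • e, hbae.ne_zero 0, by simp [he], ?_⟩
  convert hbae.span_eq_top_of_card_eq_finrank (by simp [hV])
  simp only [Matrix.range_cons, Matrix.range_empty, Set.union_empty, Set.singleton_union]

section LocalRing

variable {k : Type*} [Field k] {f : MvPolynomial (Fin 3) k} {d : ℕ}

theorem exists_slicePoly_eq {v : Fin 3 → k} (hv : v ≠ 0) :
    ∃ e : Fin 3 → k, e ⬝ᵥ v = 1 ∧ slicePoly v = linearForm e - 1 := by
  have hex : ∃ i, v i ≠ 0 := Function.ne_iff.1 hv
  refine ⟨Pi.single hex.choose (v hex.choose)⁻¹, ?_, ?_⟩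
  · rw [single_dotProduct, inv_mul_cancel₀ hex.choose_spec]
  · rw [slicePoly, dif_pos hex, linearForm, Fintype.linearCombination_apply_single, smul_eq_C_mul]

/-- The ideal of the affine slice of the cone `f = 0` containing the representative of `q`. -/
noncomputable def affineIdeal (f : MvPolynomial (Fin 3) k) (q : PlanePoint f) :
    Ideal (MvPolynomial (Fin 3) k) :=
  Ideal.span {f, slicePoly q.1.rep}

/-- The maximal ideal of `q` in the coordinate ring of the affine slice containing it. -/
noncomputable def pointIdeal (f : MvPolynomial (Fin 3) k) (q : PlanePoint f) :
    Ideal (MvPolynomial (Fin 3) k ⧸ affineIdeal f q) :=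
  (RingHom.ker (eval q.1.rep)).map (Ideal.Quotient.mk _)

theorem mem_affineIdeal_of_dvd (q : PlanePoint f) {g : MvPolynomial (Fin 3) k} (h : f ∣ g) :
    g ∈ affineIdeal f q :=
  Ideal.mem_of_dvd _ h (Ideal.subset_span (Set.mem_insert _ _))

theorem affineIdeal_le_ker (q : PlanePoint f) :
    affineIdeal f q ≤ RingHom.ker (eval q.1.rep) := by
  obtain ⟨e, he, hslice⟩ := exists_slicePoly_eq q.1.rep_nonzero
  rw [affineIdeal, Ideal.span_le, Set.insert_subset_iff, Set.singleton_subset_iff, hslice]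
  exact ⟨q.2, by simp [RingHom.mem_ker, he]⟩

theorem mk_mem_pointIdeal_pow_iff (q : PlanePoint f) (n : ℕ) (g : MvPolynomial (Fin 3) k) :
    Ideal.Quotient.mk (affineIdeal f q) g ∈ pointIdeal f q ^ n ↔
      g ∈ affineIdeal f q + RingHom.ker (eval q.1.rep) ^ n := by
  rw [pointIdeal, ← Ideal.map_pow, Ideal.mem_quotient_iff_mem_sup, sup_comm, Submodule.add_eq_sup]

theorem mk_mem_pointIdeal_iff (q : PlanePoint f) (g : MvPolynomial (Fin 3) k) :
    Ideal.Quotient.mk (affineIdeal f q) g ∈ pointIdeal f q ↔ eval q.1.rep g = 0 := by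
  rw [pointIdeal, Ideal.mem_quotient_iff_mem (affineIdeal_le_ker q), RingHom.mem_ker]

instance pointIdeal_isMaximal (q : PlanePoint f) : (pointIdeal f q).IsMaximal := by
  have hker : (RingHom.ker (eval q.1.rep)).IsMaximal :=
    RingHom.ker_isMaximal_of_surjective _ fun a => ⟨C a, eval_C a⟩
  refine (Ideal.map_eq_top_or_isMaximal_of_surjective _ Ideal.Quotient.mk_surjective
    hker).resolve_left fun h => ?_
  have h1 : Ideal.Quotient.mk (affineIdeal f q) 1 ∈ pointIdeal f q := by
    rw [pointIdeal, h]
    trivial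
  rw [mk_mem_pointIdeal_iff, map_one] at h1
  exact one_ne_zero h1

/-- The local ring of the curve `f = 0` at `q`. -/
abbrev CurveLocalRing (f : MvPolynomial (Fin 3) k) (q : PlanePoint f) : Type _ :=
  Localization.AtPrime (pointIdeal f q)

/-- The germ at `q` of the restriction of a polynomial to the affine slice containing `q`. -/
noncomputable def germ (f : MvPolynomial (Fin 3) k) (q : PlanePoint f) :
    MvPolynomial (Fin 3) k →ₐ[k] CurveLocalRing f q :=
  (IsScalarTower.toAlgHom k _ _).comp (Ideal.Quotient.mkₐ k (affineIdeal f q))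

theorem germ_apply (q : PlanePoint f) (g : MvPolynomial (Fin 3) k) :
    germ f q g = algebraMap _ (CurveLocalRing f q) (Ideal.Quotient.mk (affineIdeal f q) g) :=
  rfl

theorem algebraMap_residueField_curveLocalRing_surjective (q : PlanePoint f) :
    Function.Surjective
      (algebraMap k (IsLocalRing.ResidueField (CurveLocalRing f q))) := by
  refine algebraMap_residueField_localization_surjective fun x => ?_
  obtain ⟨x, rfl⟩ := Ideal.Quotient.mk_surjective x
  obtain ⟨g, rfl⟩ := Ideal.Quotient.mk_surjective x
  refine ⟨eval q.1.rep g, ?_⟩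
  change Ideal.Quotient.mk (pointIdeal f q)
    (Ideal.Quotient.mk (affineIdeal f q) (C (eval q.1.rep g))) = _
  rw [Ideal.Quotient.eq, ← map_sub, mk_mem_pointIdeal_iff]
  simp

theorem germ_mem_maximalIdeal_pow_iff (q : PlanePoint f) (n : ℕ) (g : MvPolynomial (Fin 3) k) :
    germ f q g ∈ IsLocalRing.maximalIdeal (CurveLocalRing f q) ^ n ↔
      ∃ h, eval q.1.rep h ≠ 0 ∧
        h * g ∈ affineIdeal f q + RingHom.ker (eval q.1.rep) ^ n := by
  rw [← IsLocalization.AtPrime.map_eq_maximalIdeal (pointIdeal f q), ← Ideal.map_pow]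
  rw [germ_apply, IsLocalization.algebraMap_mem_map_algebraMap_iff (pointIdeal f q).primeCompl]
  simp only [Ideal.mem_primeCompl_iff, Ideal.Quotient.mk_surjective.exists,
    mk_mem_pointIdeal_iff, ← map_mul, mk_mem_pointIdeal_pow_iff]

end LocalRing

/-- `f = 0` is an integral smooth plane curve of degree `d ≥ 2`; smoothness is expressed by
the nonvanishing of the gradient of `f` away from the origin of the cone. -/
structure IsSmoothPlaneCurve {k : Type*} [Field k] (f : MvPolynomial (Fin 3) k) (d : ℕ) :
    Prop where
  isHomogeneous : f.IsHomogeneous d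
  two_le : 2 ≤ d
  prime : Prime f
  smooth : ∀ v, eval v f = 0 → gradientAt v f = 0 → v = 0

namespace IsSmoothPlaneCurve

variable {k : Type*} [Field k] {f : MvPolynomial (Fin 3) k} {d : ℕ}

theorem not_dvd_of_lt (hC : IsSmoothPlaneCurve f d) {e : ℕ} {g : MvPolynomial (Fin 3) k}
    (hg : g.IsHomogeneous e) (hg0 : g ≠ 0) (he : e < d) : ¬ f ∣ g :=
  not_dvd_of_isHomogeneous_of_lt hC.isHomogeneous hg hg0 he

theorem not_dvd_linearForm (hC : IsSmoothPlaneCurve f d) {b : Fin 3 → k} (hb : b ≠ 0) :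
    ¬ f ∣ linearForm b :=
  hC.not_dvd_of_lt (isHomogeneous_linearForm b) (mt linearForm_eq_zero_iff.1 hb) hC.two_le

theorem isPrime_affineIdeal (hC : IsSmoothPlaneCurve f d) (q : PlanePoint f) :
    (affineIdeal f q).IsPrime := by
  obtain ⟨e, he, hslice⟩ := exists_slicePoly_eq q.1.rep_nonzero
  have he0 : e ≠ 0 := by rintro rfl; simp at he
  rw [affineIdeal, hslice]
  exact isPrime_span_pair_sub_one hC.isHomogeneous hC.prime (isHomogeneous_linearForm e)
    (hC.not_dvd_linearForm he0)

theorem mem_affineIdeal_iff (hC : IsSmoothPlaneCurve f d) (q : PlanePoint f) {e : ℕ}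
    {g : MvPolynomial (Fin 3) k} (hg : g.IsHomogeneous e) : g ∈ affineIdeal f q ↔ f ∣ g := by
  obtain ⟨b, hb, hslice⟩ := exists_slicePoly_eq q.1.rep_nonzero
  have hb0 : b ≠ 0 := by rintro rfl; simp at hb
  rw [affineIdeal, hslice]
  exact mem_span_pair_sub_one_iff hC.isHomogeneous hC.prime (isHomogeneous_linearForm b)
    (hC.not_dvd_linearForm hb0) hg

theorem exists_linearForm_pointIdeal_le (hC : IsSmoothPlaneCurve f d) (q : PlanePoint f) :
    ∃ b : Fin 3 → k, b ≠ 0 ∧ b ⬝ᵥ q.1.rep = 0 ∧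
      pointIdeal f q ≤
        Ideal.span {Ideal.Quotient.mk _ (linearForm b)} ⊔ pointIdeal f q ^ 2 := by
  obtain ⟨e, he, hslice⟩ := exists_slicePoly_eq q.1.rep_nonzero
  have hgrad : gradientAt q.1.rep f ≠ 0 := fun h => q.1.rep_nonzero (hC.smooth _ q.2 h)
  have hEuler : gradientAt q.1.rep f ⬝ᵥ q.1.rep = 0 := by
    rw [gradientAt_dotProduct_of_isHomogeneous hC.isHomogeneous, q.2, smul_zero]
  obtain ⟨b, hb0, hbv, hspan⟩ := exists_dual_eq_zero_span_eq_top (k := k) (by simp)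
    (δ := (dotProductBilin k k).flip q.1.rep) hgrad hEuler he
  refine ⟨b, hb0, hbv, ?_⟩
  have hker : RingHom.ker (eval q.1.rep) ≤
      affineIdeal f q ⊔ (Ideal.span {linearForm b} ⊔ RingHom.ker (eval q.1.rep) ^ 2) := by
    refine ker_eval_le_of_span_gradientAt_eq_top (le_sup_right.trans le_sup_right)
      (S := {linearForm b, f, slicePoly q.1.rep}) ?_ ?_
    · rintro g (rfl | rfl | rfl)
      · exact ⟨Ideal.mem_sup_right (Ideal.mem_sup_left (Ideal.mem_span_singleton_self _)),
          by simpa using hbv⟩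
      · exact ⟨Ideal.mem_sup_left (mem_affineIdeal_of_dvd q dvd_rfl), q.2⟩
      · exact ⟨Ideal.mem_sup_left (Ideal.subset_span (Set.mem_insert_of_mem _ rfl)),
          by rw [hslice]; simp [he]⟩
    · rw [Set.image_insert_eq, Set.image_pair, hslice, gradientAt_linearForm,
        gradientAt_sub_one, gradientAt_linearForm]
      exact hspan
  have h := Ideal.map_mono (f := Ideal.Quotient.mk (affineIdeal f q)) hker
  rwa [Ideal.map_sup, Ideal.map_sup, Ideal.map_quotient_self, bot_sup_eq, Ideal.map_pow,
    Ideal.map_span, Set.image_singleton] at h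

theorem isDomain_curveLocalRing (hC : IsSmoothPlaneCurve f d) (q : PlanePoint f) :
    IsDomain (CurveLocalRing f q) := by
  have := hC.isPrime_affineIdeal q
  exact IsLocalization.isDomain_localization (pointIdeal f q).primeCompl_le_nonZeroDivisors

theorem germ_eq_zero_iff (hC : IsSmoothPlaneCurve f d) (q : PlanePoint f)
    (g : MvPolynomial (Fin 3) k) : germ f q g = 0 ↔ g ∈ affineIdeal f q := by
  have := hC.isPrime_affineIdeal q
  rw [germ_apply, ← Ideal.Quotient.eq_zero_iff_mem]
  exact map_eq_zero_iff _
    (IsLocalization.injective (CurveLocalRing f q)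
      (pointIdeal f q).primeCompl_le_nonZeroDivisors)

theorem isDiscreteValuationRing_curveLocalRing (hC : IsSmoothPlaneCurve f d) (q : PlanePoint f)
    [IsDomain (CurveLocalRing f q)] : IsDiscreteValuationRing (CurveLocalRing f q) := by
  have := hC.isPrime_affineIdeal q
  obtain ⟨b, hb, hbq, hle⟩ := hC.exists_linearForm_pointIdeal_le q
  refine isDiscreteValuationRing_localization
    ((mk_mem_pointIdeal_iff q _).2 (by simpa using hbq)) ?_ hle
  rw [Ne, Ideal.Quotient.eq_zero_iff_mem, hC.mem_affineIdeal_iff q (isHomogeneous_linearForm b)]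
  exact hC.not_dvd_linearForm hb

/-- The order of vanishing at `q` of the restriction of a polynomial to the affine slice of the
cone `f = 0` containing `q`, as a valuation; it is `⊤` on the polynomials vanishing identically
on the slice. -/
noncomputable def order (hC : IsSmoothPlaneCurve f d) (q : PlanePoint f) :
    AddValuation (MvPolynomial (Fin 3) k) ℕ∞ :=
  haveI := hC.isDomain_curveLocalRing q
  haveI := hC.isDiscreteValuationRing_curveLocalRing q
  (addVal (CurveLocalRing f q)).comap (germ f q)

variable (hC : IsSmoothPlaneCurve f d) (q : PlanePoint f)

theorem natCast_le_order_iff (n : ℕ) (g : MvPolynomial (Fin 3) k) :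
    (n : ℕ∞) ≤ hC.order q g ↔ ∃ h, eval q.1.rep h ≠ 0 ∧
      h * g ∈ affineIdeal f q + RingHom.ker (eval q.1.rep) ^ n := by
  have := hC.isDomain_curveLocalRing q
  have := hC.isDiscreteValuationRing_curveLocalRing q
  exact (natCast_le_addVal_iff_mem_maximalIdeal_pow n _).trans
    (germ_mem_maximalIdeal_pow_iff q n g)

theorem one_le_order_iff (g : MvPolynomial (Fin 3) k) :
    1 ≤ hC.order q g ↔ eval q.1.rep g = 0 := by
  rw [← Nat.cast_one, natCast_le_order_iff, pow_one, Submodule.add_eq_sup,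
    sup_eq_right.2 (affineIdeal_le_ker q)]
  constructor
  · rintro ⟨h, hh, hg⟩
    simpa [RingHom.mem_ker, hh] using hg
  · exact fun hg => ⟨1, by simp, by simpa [RingHom.mem_ker] using hg⟩

theorem order_eq_top_iff_mem (g : MvPolynomial (Fin 3) k) :
    hC.order q g = ⊤ ↔ g ∈ affineIdeal f q := by
  have := hC.isDomain_curveLocalRing q
  have := hC.isDiscreteValuationRing_curveLocalRing q
  rw [← hC.germ_eq_zero_iff]
  exact addVal_eq_top_iff

theorem order_eq_top_of_dvd {g : MvPolynomial (Fin 3) k} (h : f ∣ g) : hC.order q g = ⊤ :=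
  (hC.order_eq_top_iff_mem q g).2 (mem_affineIdeal_of_dvd q h)

theorem order_eq_top_iff {g : MvPolynomial (Fin 3) k} {e : ℕ} (hg : g.IsHomogeneous e) :
    hC.order q g = ⊤ ↔ f ∣ g := by
  rw [order_eq_top_iff_mem, hC.mem_affineIdeal_iff q hg]

theorem exists_succ_le_order_sub {n : ℕ} {a b : MvPolynomial (Fin 3) k}
    (ha : hC.order q a = n) (hb : (n : ℕ∞) ≤ hC.order q b) :
    ∃ c : k, ((n + 1 : ℕ) : ℕ∞) ≤ hC.order q (b - c • a) := by
  have := hC.isDomain_curveLocalRing q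
  have := hC.isDiscreteValuationRing_curveLocalRing q
  obtain ⟨c, hc⟩ := exists_succ_le_addVal_sub_algebraMap_mul
    (algebraMap_residueField_curveLocalRing_surjective q) ha hb
  refine ⟨c, ?_⟩
  change _ ≤ addVal _ (germ f q (b - c • a))
  rw [map_sub, map_smul, Algebra.smul_def]
  exact hc

theorem exists_linearForm_order_eq_one : ∃ b : Fin 3 → k, hC.order q (linearForm b) = 1 := by
  have := hC.isPrime_affineIdeal q
  have := hC.isDomain_curveLocalRing q
  have := hC.isDiscreteValuationRing_curveLocalRing q
  obtain ⟨b, -, hbq, hle⟩ := hC.exists_linearForm_pointIdeal_le q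
  refine ⟨b, addVal_uniformizer ((irreducible_iff_uniformizer _).2 ?_)⟩
  exact maximalIdeal_localization_eq_span_singleton
    ((mk_mem_pointIdeal_iff q _).2 (by simpa using hbq)) hle

theorem natCast_ordAt {g : MvPolynomial (Fin 3) k} (hg : hC.order q g ≠ ⊤) :
    (ordAt f q g : ℕ∞) = hC.order q g := by
  obtain ⟨N, hN⟩ := ENat.ne_top_iff_exists.1 hg
  rw [← hN, Nat.cast_inj, ordAt, ← csSup_Iic (a := N)]
  congr 1
  ext n
  rw [Set.mem_Iic, ← Nat.cast_le (α := ℕ∞), hN]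
  exact (hC.natCast_le_order_iff q n g).symm

end IsSmoothPlaneCurve

section Forms

variable {σ k : Type*} [Field k]

theorem isHomogeneous_of_totalDegree_le_order {p : MvPolynomial σ k}
    (h : (p.totalDegree : ℕ∞) ≤ (p : MvPowerSeries σ k).order) :
    p.IsHomogeneous p.totalDegree := by
  intro m hm
  change Finsupp.weight (fun _ => 1) m = _
  rw [← Finsupp.degree_eq_weight_one]
  refine le_antisymm (le_totalDegree (mem_support_iff.2 hm)) ?_
  exact_mod_cast h.trans (MvPowerSeries.order_le (by rwa [coeff_coe]))

theorem order_coe_le_totalDegree {p : MvPolynomial σ k} (hp : p ≠ 0) :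
    (p : MvPowerSeries σ k).order ≤ p.totalDegree := by
  obtain ⟨m, hm⟩ := support_nonempty.2 hp
  exact (MvPowerSeries.order_le (by simpa using hm)).trans (by exact_mod_cast le_totalDegree hm)

theorem le_order_coe_of_isHomogeneous {p : MvPolynomial σ k} {n : ℕ} (hp : p.IsHomogeneous n) :
    (n : ℕ∞) ≤ (p : MvPowerSeries σ k).order := by
  refine MvPowerSeries.le_order fun m hm => ?_
  rw [coeff_coe]
  exact hp.coeff_eq_zero (by exact_mod_cast hm.ne)

theorem exists_isHomogeneous_of_mul {p q : MvPolynomial σ k} {n : ℕ}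
    (h : (p * q).IsHomogeneous n) (h0 : p * q ≠ 0) :
    ∃ a b, p.IsHomogeneous a ∧ q.IsHomogeneous b ∧ a + b = n := by
  have hp := order_coe_le_totalDegree (left_ne_zero_of_mul h0)
  have hq := order_coe_le_totalDegree (right_ne_zero_of_mul h0)
  have hdeg : p.totalDegree + q.totalDegree = n := by
    rw [← totalDegree_mul_of_isDomain (left_ne_zero_of_mul h0) (right_ne_zero_of_mul h0),
      h.totalDegree h0]
  have horder := le_order_coe_of_isHomogeneous h
  rw [coe_mul, MvPowerSeries.order_mul] at horder
  obtain ⟨a, ha⟩ := ENat.ne_top_iff_exists.1 (ne_top_of_le_ne_top (ENat.natCast_ne_top _) hp)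
  obtain ⟨b, hb⟩ := ENat.ne_top_iff_exists.1 (ne_top_of_le_ne_top (ENat.natCast_ne_top _) hq)
  rw [← ha] at hp
  rw [← hb] at hq
  rw [← ha, ← hb] at horder
  norm_cast at hp hq horder
  refine ⟨_, _, isHomogeneous_of_totalDegree_le_order ?_,
    isHomogeneous_of_totalDegree_le_order ?_, hdeg⟩
  · rw [← ha]
    exact_mod_cast (by omega : p.totalDegree ≤ a)
  · rw [← hb]
    exact_mod_cast (by omega : q.totalDegree ≤ b)

theorem isHomogeneous_of_mul_right {p q : MvPolynomial σ k} {m n : ℕ}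
    (hp : p.IsHomogeneous m) (hp0 : p ≠ 0) (h : (p * q).IsHomogeneous (m + n)) :
    q.IsHomogeneous n := by
  rcases eq_or_ne q 0 with rfl | hq0
  · exact isHomogeneous_zero _ _ _
  · obtain ⟨a, b, ha, hb, hab⟩ := exists_isHomogeneous_of_mul h (mul_ne_zero hp0 hq0)
    obtain rfl : a = m := ha.inj_right hp hp0
    rwa [← Nat.add_left_cancel hab]

/-- The multiples of `a` by forms of degree `n`: for a form `a` of degree `α`, the part of degree
`α + n` of the ideal `(a)`. -/
noncomputable def formMultiples (a : MvPolynomial σ k) (n : ℕ) :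
    Submodule k (MvPolynomial σ k) :=
  (homogeneousSubmodule σ k n).map (LinearMap.mulLeft k a)

theorem mem_formMultiples {a x : MvPolynomial σ k} {n : ℕ} :
    x ∈ formMultiples a n ↔ ∃ y, y.IsHomogeneous n ∧ a * y = x := by
  simp only [formMultiples, Submodule.mem_map, mem_homogeneousSubmodule, LinearMap.mulLeft_apply]

theorem finrank_formMultiples {a : MvPolynomial σ k} (ha : a ≠ 0) (n : ℕ) :
    Module.finrank k (formMultiples a n) = Module.finrank k (homogeneousSubmodule σ k n) :=
  (Submodule.equivMapOfInjective _ (mul_right_injective₀ ha) _).symm.finrank_eq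

theorem formMultiples_inf_formMultiples {a b : MvPolynomial σ k} {α β : ℕ}
    (ha : a.IsHomogeneous α) (hb : b.IsHomogeneous β) (hb0 : b ≠ 0)
    (hab : IsRelPrime a b) (n : ℕ) :
    formMultiples a (β + n) ⊓ formMultiples b (α + n) = formMultiples (a * b) n := by
  ext x
  simp only [Submodule.mem_inf, mem_formMultiples]
  constructor
  · rintro ⟨⟨y, hy, rfl⟩, z, -, hzy⟩
    obtain ⟨t, rfl⟩ := hab.symm.dvd_of_dvd_mul_left ⟨z, hzy.symm⟩
    exact ⟨t, isHomogeneous_of_mul_right hb hb0 hy, mul_assoc a b t⟩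
  · rintro ⟨y, hy, rfl⟩
    exact ⟨⟨b * y, hb.mul hy, (mul_assoc a b y).symm⟩, a * y, ha.mul hy, by ring⟩

theorem formMultiples_le {a : MvPolynomial σ k} {α : ℕ} (ha : a.IsHomogeneous α) (n : ℕ) :
    formMultiples a n ≤ homogeneousSubmodule σ k (α + n) := by
  intro x hx
  obtain ⟨y, hy, rfl⟩ := mem_formMultiples.1 hx
  exact ha.mul hy

instance finite_homogeneousSubmodule [Finite σ] (n : ℕ) :
    Module.Finite k (homogeneousSubmodule σ k n) :=
  Module.Finite.iff_fg.2 (homogeneousSubmodule_fg _ _ n)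

instance finite_formMultiples [Finite σ] (a : MvPolynomial σ k) (n : ℕ) :
    Module.Finite k (formMultiples a n) :=
  Module.Finite.map _ _

theorem finrank_homogeneousSubmodule [Fintype σ] (n : ℕ) :
    Module.finrank k (homogeneousSubmodule σ k n) = (Fintype.card σ).multichoose n := by
  classical
  have hset : {m : σ →₀ ℕ | m.degree = n} =
      ((Finset.univ : Finset σ).finsuppAntidiag n : Set (σ →₀ ℕ)) := by
    ext m
    simp [Finset.mem_finsuppAntidiag, Finsupp.degree_eq_sum]
  rw [homogeneousSubmodule_eq_finsupp_supported, hset, LinearEquiv.finrank_eq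
    (AddMonoidAlgebra.supportedEquivFinsupp (R := k) (S := k) _), Module.finrank_finsupp_self,
    ← Finset.card_univ (α := σ), ← Finset.card_finsuppAntidiag_nat_eq_multichoose]
  simp

theorem finrank_homogeneousSubmodule_fin_two (n : ℕ) :
    Module.finrank k (homogeneousSubmodule (Fin 2) k n) = n + 1 := by
  rw [finrank_homogeneousSubmodule, Fintype.card_fin, Nat.multichoose_two]

theorem two_mul_finrank_homogeneousSubmodule_fin_three (n : ℕ) :
    2 * Module.finrank k (homogeneousSubmodule (Fin 3) k n) = (n + 2) * (n + 1) := by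
  rw [finrank_homogeneousSubmodule, Fintype.card_fin, Nat.multichoose_eq,
    show 3 + n - 1 = n + 2 by omega, Nat.choose_symm_add, Nat.choose_two_right,
    Nat.mul_div_cancel' (Nat.even_mul_pred_self (n + 2)).two_dvd,
    Nat.add_sub_cancel_right (n + 1) 1]

theorem finrank_formMultiples_sup {a b : MvPolynomial (Fin 3) k} {α β : ℕ}
    (ha : a.IsHomogeneous α) (hb : b.IsHomogeneous β) (ha0 : a ≠ 0) (hb0 : b ≠ 0)
    (hab : IsRelPrime a b) (n : ℕ) :
    Module.finrank k ↥(formMultiples a (β + n) ⊔ formMultiples b (α + n)) + α * β =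
      Module.finrank k (homogeneousSubmodule (Fin 3) k (α + β + n)) := by
  have hsum := Submodule.finrank_sup_add_finrank_inf_eq
    (formMultiples a (β + n)) (formMultiples b (α + n))
  rw [formMultiples_inf_formMultiples ha hb hb0 hab, finrank_formMultiples ha0,
    finrank_formMultiples hb0, finrank_formMultiples (mul_ne_zero ha0 hb0)] at hsum
  have hn := two_mul_finrank_homogeneousSubmodule_fin_three (k := k) n
  have hαn := two_mul_finrank_homogeneousSubmodule_fin_three (k := k) (α + n)
  have hβn := two_mul_finrank_homogeneousSubmodule_fin_three (k := k) (β + n)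
  have hαβn := two_mul_finrank_homogeneousSubmodule_fin_three (k := k) (α + β + n)
  nlinarith

theorem exists_homogenize_eq_prod_linearForm [IsAlgClosed k] (n : ℕ) :
    ∀ p : Polynomial k, p.natDegree ≤ n → ∃ (c : k) (L : Fin n → Fin 2 → k), (∀ i, L i ≠ 0) ∧
      p.homogenize n = C c * ∏ i, linearForm (L i) := by
  induction n with
  | zero =>
    intro p hp
    rw [Polynomial.eq_C_of_natDegree_le_zero hp]
    exact ⟨p.coeff 0, Fin.elim0, fun i => i.elim0, by simp⟩
  | succ n ih =>
    intro p hp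
    by_cases hconst : p.natDegree = 0
    · rw [Polynomial.eq_C_of_natDegree_eq_zero hconst]
      exact ⟨p.coeff 0, fun _ => ![0, 1], fun i h => by simpa using congrFun h 1,
        by simp [linearForm_apply]⟩
    obtain ⟨r, hr⟩ := IsAlgClosed.exists_root p
      (mt Polynomial.natDegree_eq_of_degree_eq_some hconst)
    obtain ⟨p', rfl⟩ := Polynomial.dvd_iff_isRoot.2 hr
    have hp0 : p' ≠ 0 := by rintro rfl; simp at hconst
    have hdeg : p'.natDegree ≤ n := by
      rw [Polynomial.natDegree_mul (Polynomial.X_sub_C_ne_zero r) hp0,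
        Polynomial.natDegree_X_sub_C] at hp
      omega
    obtain ⟨c, L, hL, hp'⟩ := ih p' hdeg
    have hfactor : (Polynomial.X - Polynomial.C r).homogenize 1 = linearForm ![1, -r] := by
      simp [linearForm_apply, Polynomial.homogenize_X, sub_eq_add_neg]
    refine ⟨c, Fin.cons ![1, -r] L, ?_, ?_⟩
    · exact Fin.cases (fun h => by simpa using congrFun h 0) hL
    · rw [mul_comm (Polynomial.X - Polynomial.C r), Polynomial.homogenize_mul _ _ hdeg
        (Polynomial.natDegree_X_sub_C_le r), hfactor, hp', mul_assoc, Fin.prod_univ_succ,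
        mul_comm (∏ i, _)]
      rfl

theorem exists_eq_C_mul_prod_linearForm [IsAlgClosed k] {n : ℕ} {g : MvPolynomial (Fin 2) k}
    (hg : g.IsHomogeneous n) : ∃ (c : k) (L : Fin n → Fin 2 → k), (∀ i, L i ≠ 0) ∧
      g = C c * ∏ i, linearForm (L i) := by
  have hdeg : (aeval ![Polynomial.X, 1] g : Polynomial k).natDegree ≤ n := by
    refine (aeval_natDegree_le g hg.totalDegree_le _ (n := 1) fun i => ?_).trans_eq (mul_one n)
    fin_cases i <;> simp
  rw [← Polynomial.homogenize_eq_of_isHomogeneous hg rfl]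
  exact exists_homogenize_eq_prod_linearForm n _ hdeg

theorem rename_linearForm_succAbove {n : ℕ} (i : Fin (n + 1)) (b : Fin n → k) :
    rename i.succAbove (linearForm b) =
      linearForm (i.insertNth 0 b : Fin (n + 1) → k) := by
  simp [linearForm_apply, Fin.sum_univ_succAbove _ i]

theorem exists_eq_rename_succAbove_add_linearForm_mul {n d : ℕ} {f : MvPolynomial (Fin (n + 1)) k}
    (hf : f.IsHomogeneous d) {b : Fin (n + 1) → k} {i : Fin (n + 1)} (hi : b i ≠ 0) :
    ∃ (g : MvPolynomial (Fin n) k) (w : MvPolynomial (Fin (n + 1)) k), g.IsHomogeneous d ∧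
      f = rename i.succAbove g + linearForm b * w := by
  let y : Fin (n + 1) → MvPolynomial (Fin n) k :=
    i.insertNth (linearForm (-(b i)⁻¹ • fun j => b (i.succAbove j))) X
  have hy : ∀ j, (y j).IsHomogeneous 1 := by
    rw [i.forall_iff_succAbove]
    simp only [y, Fin.insertNth_apply_same, Fin.insertNth_apply_succAbove]
    exact ⟨isHomogeneous_linearForm _, isHomogeneous_X k⟩
  have hmem : f - rename i.succAbove (aeval y f) ∈ Ideal.span {linearForm b} := by
    rw [← Ideal.Quotient.eq]
    change Ideal.Quotient.mkₐ k (Ideal.span {linearForm b}) f =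
      ((Ideal.Quotient.mkₐ k _).comp ((rename i.succAbove).comp (aeval y))) f
    congr 1
    refine algHom_ext (i.forall_iff_succAbove.2 ⟨?_, fun j => by simp [y]⟩)
    change Ideal.Quotient.mk _ (X i) = Ideal.Quotient.mk _ (rename i.succAbove (aeval y (X i)))
    rw [Ideal.Quotient.eq, Ideal.mem_span_singleton]
    refine ⟨C (b i)⁻¹, ?_⟩
    have hinv : (C (b i) * C (b i)⁻¹ : MvPolynomial (Fin (n + 1)) k) = 1 := by
      rw [← C_mul, mul_inv_cancel₀ hi, C_1]
    simp only [y, aeval_X, Fin.insertNth_apply_same, map_smul, smul_eq_C_mul, linearForm_apply,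
      Fin.sum_univ_succAbove _ i, map_sum, map_mul, map_neg, rename_C, rename_X]
    linear_combination (-X i) * hinv
  obtain ⟨w, hw⟩ := Ideal.mem_span_singleton.1 hmem
  exact ⟨aeval y f, w, by simpa using hf.aeval y hy, by rw [← hw]; ring⟩

theorem exists_eq_prod_linearForm_add_linearForm_mul [IsAlgClosed k] {d : ℕ}
    {f : MvPolynomial (Fin 3) k} (hf : f.IsHomogeneous d) {b : Fin 3 → k} (hb : b ≠ 0) :
    ∃ (c : k) (L : Fin d → Fin 3 → k) (w : MvPolynomial (Fin 3) k),
      f = C c * ∏ i, linearForm (L i) + linearForm b * w := by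
  obtain ⟨i, hi⟩ := Function.ne_iff.1 hb
  obtain ⟨g, w, hg, hfg⟩ := exists_eq_rename_succAbove_add_linearForm_mul hf hi
  obtain ⟨c, L, -, rfl⟩ := exists_eq_C_mul_prod_linearForm hg
  refine ⟨c, fun t => i.insertNth 0 (L t), w, hfg.trans ?_⟩
  simp only [map_mul, map_prod, rename_C, rename_linearForm_succAbove]

end Forms

theorem finsupp_nat_induction_single_one {α : Type*} {p : (α →₀ ℕ) → Prop} (zero : p 0)
    (add_single : ∀ n a, p n → p (n + Finsupp.single a 1)) (n : α →₀ ℕ) : p n := by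
  induction n using Finsupp.induction with
  | zero => exact zero
  | single_add a b n _ _ hn =>
    rw [add_comm]
    clear * - hn add_single
    induction b with
    | zero => simpa using hn
    | succ b hb =>
      rw [Finsupp.single_add, ← add_assoc]
      exact add_single _ _ hb

theorem exists_linearForm_eval_eq_zero_ne_zero {σ k : Type*} [Field k] [Fintype σ]
    {u v : σ → k} (h : v ∉ Submodule.span k {u}) :
    ∃ b : σ → k, eval u (linearForm b) = 0 ∧ eval v (linearForm b) ≠ 0 := by
  classical
  obtain ⟨φ, hφv, hφ⟩ := Submodule.exists_le_ker_of_notMem h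
  obtain ⟨b, rfl⟩ := (dotProductEquiv k σ).surjective φ
  simp only [eval_linearForm]
  exact ⟨b, hφ (Submodule.mem_span_singleton_self u), hφv⟩

section Representatives

variable {k : Type*} [Field k] {f : MvPolynomial (Fin 3) k}

theorem rep_notMem_span_rep {q r : PlanePoint f} (h : r ≠ q) :
    q.1.rep ∉ Submodule.span k {r.1.rep} := by
  intro hmem
  obtain ⟨a, ha⟩ := Submodule.mem_span_singleton.1 hmem
  refine h (Subtype.ext ?_)
  rw [← q.1.mk_rep, ← r.1.mk_rep]
  exact (Projectivization.mk_eq_mk_iff' _ _ _ _ _).2 ⟨a⁻¹, by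
    rw [← ha, inv_smul_smul₀]
    rintro rfl
    exact q.1.rep_nonzero (by rw [← ha, zero_smul])⟩

theorem eval_smul_of_isHomogeneous {σ : Type*} {g : MvPolynomial σ k} {e : ℕ}
    (hg : g.IsHomogeneous e) (a : k) (v : σ → k) : eval (a • v) g = a ^ e * eval v g := by
  exact aeval_mul_of_isHomogeneous hg a v

theorem notMem_span_rep_of_eval_ne_zero {d : ℕ} (hf : f.IsHomogeneous d) {v : Fin 3 → k}
    (hv : eval v f ≠ 0) (r : PlanePoint f) : v ∉ Submodule.span k {r.1.rep} := by
  intro hmem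
  obtain ⟨a, rfl⟩ := Submodule.mem_span_singleton.1 hmem
  exact hv (by rw [eval_smul_of_isHomogeneous hf, r.2, mul_zero])

theorem exists_isHomogeneous_eval_ne_zero {σ : Type*} {v : σ → k} (hv : v ≠ 0) (e : ℕ) :
    ∃ g : MvPolynomial σ k, g.IsHomogeneous e ∧ eval v g ≠ 0 := by
  obtain ⟨i, hi⟩ := Function.ne_iff.1 hv
  exact ⟨X i ^ e, isHomogeneous_X_pow i e, by simpa using fun h => absurd h hi⟩

end Representatives

namespace IsSmoothPlaneCurve

section VanishingConditions

variable {k : Type*} [Field k] {f : MvPolynomial (Fin 3) k} {d : ℕ}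
  (hC : IsSmoothPlaneCurve f d)

theorem order_eq_zero_iff (q : PlanePoint f) (g : MvPolynomial (Fin 3) k) :
    hC.order q g = 0 ↔ eval q.1.rep g ≠ 0 := by
  rw [Ne, ← hC.one_le_order_iff, Order.one_le_iff_ne_zero, not_not]

theorem order_le_order_mul_left (q : PlanePoint f) (g h : MvPolynomial (Fin 3) k) :
    hC.order q g ≤ hC.order q (g * h) := by
  rw [AddValuation.map_mul]
  exact le_self_add

theorem order_le_order_smul (q : PlanePoint f) (c : k) (g : MvPolynomial (Fin 3) k) :
    hC.order q g ≤ hC.order q (c • g) := by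
  rw [smul_eq_C_mul, mul_comm]
  exact hC.order_le_order_mul_left q g (C c)

/-- The polynomials vanishing to order at least `n` at `q`. -/
noncomputable def orderGE (q : PlanePoint f) (n : ℕ) : Submodule k (MvPolynomial (Fin 3) k) where
  carrier := {g | (n : ℕ∞) ≤ hC.order q g}
  add_mem' := (hC.order q).map_le_add
  zero_mem' := by simp
  smul_mem' c g hg := hg.trans (hC.order_le_order_smul q c g)

theorem mem_orderGE {q : PlanePoint f} {n : ℕ} {g : MvPolynomial (Fin 3) k} :
    g ∈ hC.orderGE q n ↔ (n : ℕ∞) ≤ hC.order q g :=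
  Iff.rfl

theorem orderGE_antitone (q : PlanePoint f) : Antitone (hC.orderGE q) :=
  fun _ _ h _ hg => (Nat.cast_le.2 h).trans (hC.mem_orderGE.1 hg)

theorem finrank_comap_orderGE_le_succ {V : Type*} [AddCommGroup V] [Module k V]
    [FiniteDimensional k V] (q : PlanePoint f) (T : V →ₗ[k] MvPolynomial (Fin 3) k) (n : ℕ) :
    Module.finrank k ((hC.orderGE q n).comap T) ≤
      Module.finrank k ((hC.orderGE q (n + 1)).comap T) + 1 := by
  by_cases hle : (hC.orderGE q n).comap T ≤ (hC.orderGE q (n + 1)).comap T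
  · exact (Submodule.finrank_mono hle).trans (Nat.le_succ _)
  obtain ⟨x, hx, hx'⟩ := SetLike.not_le_iff_exists.1 hle
  have hxn : hC.order q (T x) = n :=
    le_antisymm (Order.lt_add_one_iff_of_not_isMax (by simp) |>.1 <| by
      simpa [mem_orderGE] using hx') hx
  have hsup : (hC.orderGE q n).comap T ≤
      (hC.orderGE q (n + 1)).comap T ⊔ Submodule.span k {x} := by
    intro y hy
    obtain ⟨c, hc⟩ := hC.exists_succ_le_order_sub q hxn hy
    refine Submodule.mem_sup.2 ⟨y - c • x, ?_, c • x, ?_, sub_add_cancel _ _⟩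
    · rwa [Submodule.mem_comap, map_sub, map_smul]
    · exact Submodule.smul_mem _ _ (Submodule.mem_span_singleton_self x)
  calc Module.finrank k ((hC.orderGE q n).comap T)
      ≤ _ := Submodule.finrank_mono hsup
    _ ≤ _ := Submodule.finrank_add_le_finrank_add_finrank _ _
    _ ≤ _ := Nat.add_le_add_left (by simpa using finrank_span_le_card (R := k) {x}) _

theorem finrank_le_finrank_comap_orderGE_add {V : Type*} [AddCommGroup V] [Module k V]
    [FiniteDimensional k V] (q : PlanePoint f) (T : V →ₗ[k] MvPolynomial (Fin 3) k) {m : ℕ}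
    (hT : ∀ x, T x ∈ hC.orderGE q m) (n : ℕ) :
    Module.finrank k V ≤ Module.finrank k ((hC.orderGE q (m + n)).comap T) + n := by
  induction n with
  | zero =>
    rw [add_zero, add_zero, (Submodule.eq_top_iff'.2 hT : (hC.orderGE q m).comap T = ⊤),
      finrank_top]
  | succ n ih =>
    have := hC.finrank_comap_orderGE_le_succ q T (m + n)
    rw [add_assoc] at this
    omega

/-- The forms of degree `M` whose divisor on the curve is at least `n`. -/
noncomputable def vanishingForms (n : PlanePoint f →₀ ℕ) (M : ℕ) :
    Submodule k (MvPolynomial (Fin 3) k) :=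
  homogeneousSubmodule (Fin 3) k M ⊓ ⨅ q, hC.orderGE q (n q)

theorem mem_vanishingForms {n : PlanePoint f →₀ ℕ} {M : ℕ} {g : MvPolynomial (Fin 3) k} :
    g ∈ hC.vanishingForms n M ↔ g.IsHomogeneous M ∧ ∀ q, (n q : ℕ∞) ≤ hC.order q g := by
  simp only [vanishingForms, Submodule.mem_inf, Submodule.mem_iInf, mem_orderGE,
    mem_homogeneousSubmodule]

theorem vanishingForms_le (n : PlanePoint f →₀ ℕ) (M : ℕ) :
    hC.vanishingForms n M ≤ homogeneousSubmodule (Fin 3) k M :=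
  inf_le_left

theorem vanishingForms_antitone (M : ℕ) : Antitone fun n => hC.vanishingForms n M :=
  fun _ _ h => inf_le_inf_left _ (iInf_mono fun q => hC.orderGE_antitone q (h q))

instance finite_vanishingForms (n : PlanePoint f →₀ ℕ) (M : ℕ) :
    Module.Finite k (hC.vanishingForms n M) :=
  Submodule.finiteDimensional_of_le (hC.vanishingForms_le n M)

theorem mul_mem_vanishingForms {n : PlanePoint f →₀ ℕ} {M e : ℕ} {g h : MvPolynomial (Fin 3) k}
    (hg : g ∈ hC.vanishingForms n M) (hh : h.IsHomogeneous e) :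
    g * h ∈ hC.vanishingForms n (M + e) := by
  rw [mem_vanishingForms] at hg ⊢
  exact ⟨hg.1.mul hh, fun q => (hg.2 q).trans (hC.order_le_order_mul_left q g h)⟩

theorem mul_mem_vanishingForms_add_single {n : PlanePoint f →₀ ℕ} {M m : ℕ} {r : PlanePoint f}
    {g h : MvPolynomial (Fin 3) k} (hg : g ∈ hC.vanishingForms n M) (hh : h.IsHomogeneous m)
    (hr : (m : ℕ∞) ≤ hC.order r h) :
    g * h ∈ hC.vanishingForms (n + Finsupp.single r m) (M + m) := by
  classical
  rw [mem_vanishingForms] at hg ⊢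
  refine ⟨hg.1.mul hh, fun q => ?_⟩
  rw [Finsupp.add_apply, Nat.cast_add, AddValuation.map_mul]
  refine add_le_add (hg.2 q) ?_
  rcases eq_or_ne q r with rfl | hq
  · rwa [Finsupp.single_eq_same]
  · simp [Finsupp.single_eq_of_ne hq]

theorem exists_mem_vanishingForms_eval_ne_zero {n : PlanePoint f →₀ ℕ} {v : Fin 3 → k}
    (hv : ∀ r ∈ n.support, v ∉ Submodule.span k {r.1.rep}) :
    ∃ g ∈ hC.vanishingForms n n.degree, eval v g ≠ 0 := by
  induction n using finsupp_nat_induction_single_one with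
  | zero => exact ⟨1, by simp [mem_vanishingForms, isHomogeneous_one], by simp⟩
  | add_single n r ih =>
    have hmono : n.support ⊆ (n + Finsupp.single r 1).support :=
      Finsupp.support_mono le_self_add
    obtain ⟨g, hg, hgv⟩ := ih fun s hs => hv s (hmono hs)
    obtain ⟨b, hbr, hbv⟩ := exists_linearForm_eval_eq_zero_ne_zero (hv r (by simp))
    refine ⟨g * linearForm b, ?_, by rw [map_mul]; exact mul_ne_zero hgv hbv⟩
    rw [map_add, Finsupp.degree_single]
    exact hC.mul_mem_vanishingForms_add_single hg (isHomogeneous_linearForm b)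
      (by simpa only [Nat.cast_one] using (hC.one_le_order_iff r _).2 hbr)

theorem exists_mem_vanishingForms_order_eq (n : PlanePoint f →₀ ℕ) (q : PlanePoint f) :
    ∃ g ∈ hC.vanishingForms n n.degree, hC.order q g = n q := by
  classical
  obtain ⟨g, hg, hgq⟩ := hC.exists_mem_vanishingForms_eval_ne_zero (n := n.erase q)
    (v := q.1.rep) fun r hr => rep_notMem_span_rep (by simpa using (Finset.mem_erase.1 hr).1)
  obtain ⟨b, hb⟩ := hC.exists_linearForm_order_eq_one q
  have hpow : hC.order q (linearForm b ^ n q) = n q := by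
    rw [AddValuation.map_pow, hb, nsmul_one]
  have hmem := hC.mul_mem_vanishingForms_add_single hg
    (by simpa only [one_mul] using (isHomogeneous_linearForm b).pow (n q)) hpow.ge
  have hdeg : (n.erase q).degree + n q = n.degree := by
    rw [← Finsupp.degree_single q (n q), ← map_add, Finsupp.erase_add_single]
  rw [Finsupp.erase_add_single, hdeg] at hmem
  exact ⟨_, hmem, by rw [AddValuation.map_mul, (hC.order_eq_zero_iff q g).2 hgq, hpow, zero_add]⟩

theorem vanishingForms_add_single_lt {n : PlanePoint f →₀ ℕ} {M : ℕ} (hM : n.degree ≤ M)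
    (r : PlanePoint f) :
    hC.vanishingForms (n + Finsupp.single r 1) M < hC.vanishingForms n M := by
  refine SetLike.lt_iff_le_and_exists.2 ⟨hC.vanishingForms_antitone M le_self_add, ?_⟩
  obtain ⟨g, hg, hgr⟩ := hC.exists_mem_vanishingForms_order_eq n r
  obtain ⟨h, hh, hhr⟩ := exists_isHomogeneous_eval_ne_zero r.1.rep_nonzero (M - n.degree)
  have hmem := hC.mul_mem_vanishingForms hg hh
  rw [Nat.add_sub_cancel' hM] at hmem
  refine ⟨g * h, hmem, fun hlt => ?_⟩
  have hle := ((hC.mem_vanishingForms).1 hlt).2 r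
  rw [AddValuation.map_mul, hgr, (hC.order_eq_zero_iff r h).2 hhr, add_zero, Nat.cast_le] at hle
  simp at hle

theorem finrank_vanishingForms_add_degree_le {n : PlanePoint f →₀ ℕ} {M : ℕ}
    (hM : n.degree ≤ M) :
    Module.finrank k (hC.vanishingForms n M) + n.degree ≤
      Module.finrank k (homogeneousSubmodule (Fin 3) k M) := by
  induction n using finsupp_nat_induction_single_one with
  | zero => simpa using Submodule.finrank_mono (hC.vanishingForms_le 0 M)
  | add_single n r ih =>
    rw [map_add, Finsupp.degree_single] at hM ⊢
    have hn := ih (by omega)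
    have hlt := Submodule.finrank_lt_finrank_of_lt
      (hC.vanishingForms_add_single_lt (by omega : n.degree ≤ M) r)
    omega

theorem finrank_lt_of_le_vanishingForms_of_eval_eq_zero {n : PlanePoint f →₀ ℕ} {M : ℕ}
    (hM : n.degree ≤ M) {v : Fin 3 → k} (hv : eval v f ≠ 0) (hv0 : v ≠ 0)
    {W : Submodule k (MvPolynomial (Fin 3) k)} (hW : W ≤ hC.vanishingForms n M)
    (hWv : ∀ g ∈ W, eval v g = 0) :
    Module.finrank k W < Module.finrank k (hC.vanishingForms n M) := by
  refine Submodule.finrank_lt_finrank_of_lt (SetLike.lt_iff_le_and_exists.2 ⟨hW, ?_⟩)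
  obtain ⟨g, hg, hgv⟩ := hC.exists_mem_vanishingForms_eval_ne_zero (n := n) (v := v)
    fun r _ => notMem_span_rep_of_eval_ne_zero hC.isHomogeneous hv r
  obtain ⟨h, hh, hhv⟩ := exists_isHomogeneous_eval_ne_zero hv0 (M - n.degree)
  have hmem := hC.mul_mem_vanishingForms hg hh
  rw [Nat.add_sub_cancel' hM] at hmem
  refine ⟨g * h, hmem, fun hgh => mul_ne_zero hgv hhv ?_⟩
  rw [← map_mul, hWv _ hgh]

theorem formMultiples_le_vanishingForms {a : MvPolynomial (Fin 3) k} {α : ℕ}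
    {n : PlanePoint f →₀ ℕ} (ha : a ∈ hC.vanishingForms n α) (e : ℕ) :
    formMultiples a e ≤ hC.vanishingForms n (α + e) := by
  intro x hx
  obtain ⟨y, hy, rfl⟩ := mem_formMultiples.1 hx
  exact hC.mul_mem_vanishingForms ha hy

theorem formMultiples_sup_le_vanishingForms {a b : MvPolynomial (Fin 3) k} {α β : ℕ}
    {n : PlanePoint f →₀ ℕ} (ha : a ∈ hC.vanishingForms n α) (hb : b ∈ hC.vanishingForms n β)
    (e : ℕ) :
    formMultiples a (β + e) ⊔ formMultiples b (α + e) ≤ hC.vanishingForms n (α + β + e) := by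
  refine sup_le ?_ ?_
  · simpa only [add_assoc] using hC.formMultiples_le_vanishingForms ha (β + e)
  · simpa only [add_assoc, add_comm, add_left_comm] using
      hC.formMultiples_le_vanishingForms hb (α + e)

theorem degree_le_mul_of_isRelPrime {a b : MvPolynomial (Fin 3) k} {α β : ℕ}
    {n : PlanePoint f →₀ ℕ} (ha : a ∈ hC.vanishingForms n α) (hb : b ∈ hC.vanishingForms n β)
    (ha0 : a ≠ 0) (hb0 : b ≠ 0) (hab : IsRelPrime a b) : n.degree ≤ α * β := by
  have hsup := finrank_formMultiples_sup (hC.vanishingForms_le _ _ ha)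
    (hC.vanishingForms_le _ _ hb) ha0 hb0 hab n.degree
  have hcond := hC.finrank_vanishingForms_add_degree_le (Nat.le_add_left n.degree (α + β))
  have hmono := Submodule.finrank_mono (hC.formMultiples_sup_le_vanishingForms ha hb n.degree)
  omega

theorem degree_lt_mul_of_isRelPrime_of_eval_eq_zero {a b : MvPolynomial (Fin 3) k} {α β : ℕ}
    {n : PlanePoint f →₀ ℕ} (ha : a ∈ hC.vanishingForms n α) (hb : b ∈ hC.vanishingForms n β)
    (ha0 : a ≠ 0) (hb0 : b ≠ 0) (hab : IsRelPrime a b) {v : Fin 3 → k} (hv : eval v f ≠ 0)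
    (hv0 : v ≠ 0) (hav : eval v a = 0) (hbv : eval v b = 0) : n.degree < α * β := by
  have hsup := finrank_formMultiples_sup (hC.vanishingForms_le _ _ ha)
    (hC.vanishingForms_le _ _ hb) ha0 hb0 hab n.degree
  have hcond := hC.finrank_vanishingForms_add_degree_le (Nat.le_add_left n.degree (α + β))
  have hlt := hC.finrank_lt_of_le_vanishingForms_of_eval_eq_zero
    (Nat.le_add_left n.degree (α + β)) hv hv0
    (hC.formMultiples_sup_le_vanishingForms ha hb n.degree) fun g hg => by
      obtain ⟨x, hx, y, hy, rfl⟩ := Submodule.mem_sup.1 hg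
      obtain ⟨x, -, rfl⟩ := mem_formMultiples.1 hx
      obtain ⟨y, -, rfl⟩ := mem_formMultiples.1 hy
      simp [hav, hbv]
  omega

end VanishingConditions

end IsSmoothPlaneCurve

theorem exists_rename_mem_formMultiples_sup {k : Type*} [Field k] {a b : MvPolynomial (Fin 3) k}
    {α β : ℕ} (ha : a.IsHomogeneous α) (hb : b.IsHomogeneous β) (ha0 : a ≠ 0) (hb0 : b ≠ 0)
    (hab : IsRelPrime a b) (i : Fin 3) :
    ∃ x : MvPolynomial (Fin 2) k, x ≠ 0 ∧ x.IsHomogeneous (α + β + α * β) ∧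
      rename i.succAbove x ∈ formMultiples a (β + α * β) ⊔ formMultiples b (α + α * β) := by
  let ι : MvPolynomial (Fin 2) k →ₐ[k] MvPolynomial (Fin 3) k := rename i.succAbove
  have hι : Function.Injective ι := rename_injective _ Fin.succAbove_right_injective
  let M := α + β + α * β
  let binary := (homogeneousSubmodule (Fin 2) k M).map ι.toLinearMap
  let combinations := formMultiples a (β + α * β) ⊔ formMultiples b (α + α * β)
  have hbinary : Module.finrank k binary = M + 1 := by
    rw [← finrank_homogeneousSubmodule_fin_two (k := k)]
    exact (Submodule.equivMapOfInjective ι.toLinearMap hι _).finrank_eq.symm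
  have hle : binary ⊔ combinations ≤ homogeneousSubmodule (Fin 3) k M := by
    refine sup_le ?_ (sup_le ?_ ?_)
    · rintro _ ⟨x, hx, rfl⟩
      exact IsHomogeneous.rename_isHomogeneous hx
    · simpa only [M, add_assoc] using formMultiples_le ha (β + α * β)
    · simpa only [M, add_assoc, add_comm, add_left_comm] using formMultiples_le hb (α + α * β)
  have hinf : binary ⊓ combinations ≠ ⊥ := by
    intro hbot
    have hdim := Submodule.finrank_sup_add_finrank_inf_eq binary combinations
    have hsup : Module.finrank k combinations + α * β =
        Module.finrank k (homogeneousSubmodule (Fin 3) k M) :=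
      finrank_formMultiples_sup ha hb ha0 hb0 hab (α * β)
    have hmono := Submodule.finrank_mono hle
    rw [hbot, finrank_bot] at hdim
    omega
  obtain ⟨_, ⟨⟨x, hx, rfl⟩, hmem⟩, hne⟩ := Submodule.exists_mem_ne_zero_of_ne_bot hinf
  exact ⟨x, fun hx0 => hne (by rw [hx0, map_zero]), hx, hmem⟩

theorem exists_mul_add_mul_eq_prod_linearForm {k : Type*} [Field k] [IsAlgClosed k]
    {a b : MvPolynomial (Fin 3) k} {α β : ℕ} (ha : a.IsHomogeneous α) (hb : b.IsHomogeneous β)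
    (ha0 : a ≠ 0) (hb0 : b ≠ 0) (hab : IsRelPrime a b) :
    ∃ (n : ℕ) (L : Fin (α + β + n) → Fin 3 → k) (y z : MvPolynomial (Fin 3) k),
      (∀ i, L i ≠ 0) ∧ z.IsHomogeneous (α + n) ∧ a * y + b * z = ∏ i, linearForm (L i) := by
  obtain ⟨x, hx0, hx, hmem⟩ := exists_rename_mem_formMultiples_sup ha hb ha0 hb0 hab (Fin.last 2)
  obtain ⟨c, L, hL, rfl⟩ := exists_eq_C_mul_prod_linearForm hx
  have hc : c ≠ 0 := by
    rintro rfl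
    simp at hx0
  obtain ⟨_, hy, _, hz, hyz⟩ := Submodule.mem_sup.1 hmem
  obtain ⟨y, -, rfl⟩ := mem_formMultiples.1 hy
  obtain ⟨z, hzhom, rfl⟩ := mem_formMultiples.1 hz
  refine ⟨α * β, fun i => (Fin.last 2).insertNth 0 (L i), C c⁻¹ * y, C c⁻¹ * z, fun i h => hL i ?_,
    by simpa only [zero_add] using (isHomogeneous_C _ c⁻¹).mul hzhom, ?_⟩
  · exact funext fun j => by simpa using congrFun h ((Fin.last 2).succAbove j)
  · have hsplit : a * y + b * z = C c * ∏ i, linearForm ((Fin.last 2).insertNth 0 (L i)) := by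
      rw [hyz]
      simp only [map_mul, map_prod, rename_linearForm_succAbove, algHom_C, algebraMap_eq]
    calc a * (C c⁻¹ * y) + b * (C c⁻¹ * z) = C c⁻¹ * (a * y + b * z) := by ring
      _ = _ := by rw [hsplit, ← mul_assoc, ← C_mul, inv_mul_cancel₀ hc, C_1, one_mul]

theorem exists_ne_zero_dotProduct_eq_zero_and {k : Type*} [Field k] (a b : Fin 3 → k) :
    ∃ v : Fin 3 → k, v ≠ 0 ∧ a ⬝ᵥ v = 0 ∧ b ⬝ᵥ v = 0 := by
  have hker : (Matrix.mulVecLin ![a, b]).ker ≠ ⊥ :=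
    LinearMap.ker_ne_bot_of_finrank_lt (by simp)
  obtain ⟨v, hv, hv0⟩ := Submodule.exists_mem_ne_zero_of_ne_bot hker
  exact ⟨v, hv0, congrFun (LinearMap.mem_ker.1 hv) 0, congrFun (LinearMap.mem_ker.1 hv) 1⟩

/-- `g` is a form of degree `e` that does not vanish identically on the curve `f = 0`. -/
structure IsNonzeroFormOn {σ k : Type*} [Field k] (f g : MvPolynomial σ k) (e : ℕ) : Prop where
  isHomogeneous : g.IsHomogeneous e
  not_dvd : ¬ f ∣ g

namespace IsNonzeroFormOn

variable {σ k : Type*} [Field k] {f g h : MvPolynomial σ k} {e m : ℕ}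

theorem ne_zero (hg : IsNonzeroFormOn f g e) : g ≠ 0 :=
  fun h => hg.not_dvd (h ▸ dvd_zero f)

theorem isRelPrime (hf : Prime f) (hg : IsNonzeroFormOn f g e) : IsRelPrime f g :=
  hf.irreducible.isRelPrime_iff_not_dvd.2 hg.not_dvd

theorem mul (hf : Prime f) (hg : IsNonzeroFormOn f g e) (hh : IsNonzeroFormOn f h m) :
    IsNonzeroFormOn f (g * h) (e + m) :=
  ⟨hg.1.mul hh.1, fun hd => (hf.dvd_or_dvd hd).elim hg.2 hh.2⟩

theorem prod (hf : Prime f) {ι : Type*} {g : ι → MvPolynomial σ k} {e : ι → ℕ} (s : Finset ι)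
    (hg : ∀ i ∈ s, IsNonzeroFormOn f (g i) (e i)) :
    IsNonzeroFormOn f (∏ i ∈ s, g i) (∑ i ∈ s, e i) :=
  ⟨IsHomogeneous.prod s g e fun i hi => (hg i hi).1, fun hd => by
    obtain ⟨i, hi, hdi⟩ := (hf.dvd_finsetProd_iff g).1 hd
    exact (hg i hi).2 hdi⟩

end IsNonzeroFormOn

open Classical in
/-- The divisor cut out on the curve `f = 0` by a form `g`. The value `0` taken when the support
is infinite is never used: it occurs at most for the multiples of `f`. -/
noncomputable def intersectionDivisor {k : Type*} [Field k] (f g : MvPolynomial (Fin 3) k) :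
    PlanePoint f →₀ ℕ :=
  if h : (Function.support fun q => ordAt f q g).Finite then Finsupp.ofSupportFinite _ h else 0

theorem exists_planePoint_rep_eq_smul {k : Type*} [Field k] {f : MvPolynomial (Fin 3) k} {d : ℕ}
    (hf : f.IsHomogeneous d) {v : Fin 3 → k} (hv : v ≠ 0) (hfv : eval v f = 0) :
    ∃ (q : PlanePoint f) (a : k), q.1.rep = a • v := by
  obtain ⟨a, ha⟩ := Projectivization.exists_smul_eq_mk_rep k v hv
  have ha : (Projectivization.mk k v hv).rep = (a : k) • v := ha.symm
  have hrep : eval (Projectivization.mk k v hv).rep f = 0 := by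
    rw [ha, eval_smul_of_isHomogeneous hf, hfv, mul_zero]
  exact ⟨⟨_, hrep⟩, a, ha⟩

theorem gradientAt_mul_eq_zero {σ k : Type*} [Field k] {v : σ → k} {g h : MvPolynomial σ k}
    (hg : eval v g = 0) (hh : eval v h = 0) : gradientAt v (g * h) = 0 := by
  ext j
  simp [gradientAt, Derivation.leibniz, hg, hh]

namespace IsSmoothPlaneCurve

section Divisors

variable {k : Type*} [Field k] {f g h : MvPolynomial (Fin 3) k} {d e m : ℕ}
  (hC : IsSmoothPlaneCurve f d)

include hC

theorem natCast_ordAt_of_form (hg : IsNonzeroFormOn f g e) (q : PlanePoint f) :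
    (ordAt f q g : ℕ∞) = hC.order q g :=
  hC.natCast_ordAt q (mt (hC.order_eq_top_iff q hg.1).1 hg.2)

theorem self_mem_vanishingForms (n : PlanePoint f →₀ ℕ) : f ∈ hC.vanishingForms n d :=
  hC.mem_vanishingForms.2 ⟨hC.isHomogeneous, fun q => by
    rw [hC.order_eq_top_of_dvd q dvd_rfl]
    exact le_top⟩

theorem degree_le_mul_of_form (hg : IsNonzeroFormOn f g e) {n : PlanePoint f →₀ ℕ}
    (hn : ∀ q, (n q : ℕ∞) ≤ hC.order q g) : n.degree ≤ d * e :=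
  hC.degree_le_mul_of_isRelPrime (hC.self_mem_vanishingForms n)
    (hC.mem_vanishingForms.2 ⟨hg.1, hn⟩) hC.prime.ne_zero hg.ne_zero (hg.isRelPrime hC.prime)

theorem finite_support_ordAt (hg : IsNonzeroFormOn f g e) :
    (Function.support fun q => ordAt f q g).Finite := by
  classical
  by_contra hinf
  obtain ⟨s, hs, hcard⟩ := Set.Infinite.exists_subset_card_eq hinf (d * e + 1)
  have hle := hC.degree_le_mul_of_form hg (n := ∑ t ∈ s, Finsupp.single t 1) fun q => by
    simp only [Finsupp.finsetSum_apply, Finsupp.single_apply, Finset.sum_ite_eq']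
    rw [← hC.natCast_ordAt_of_form hg, Nat.cast_le]
    split_ifs with hq
    · exact Nat.one_le_iff_ne_zero.2 (hs hq)
    · exact Nat.zero_le _
  simp [hcard] at hle

theorem intersectionDivisor_apply (hg : IsNonzeroFormOn f g e) (q : PlanePoint f) :
    intersectionDivisor f g q = ordAt f q g := by
  rw [intersectionDivisor, dif_pos (hC.finite_support_ordAt hg)]
  rfl

theorem natCast_intersectionDivisor (hg : IsNonzeroFormOn f g e) (q : PlanePoint f) :
    (intersectionDivisor f g q : ℕ∞) = hC.order q g := by
  rw [hC.intersectionDivisor_apply hg, hC.natCast_ordAt_of_form hg]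

theorem le_intersectionDivisor_iff (hg : IsNonzeroFormOn f g e) {n : PlanePoint f →₀ ℕ} :
    n ≤ intersectionDivisor f g ↔ ∀ q, (n q : ℕ∞) ≤ hC.order q g := by
  simp only [Finsupp.le_def, ← hC.natCast_intersectionDivisor hg, Nat.cast_le]

theorem mem_vanishingForms_of_le (hg : IsNonzeroFormOn f g e) {n : PlanePoint f →₀ ℕ}
    (hn : n ≤ intersectionDivisor f g) : g ∈ hC.vanishingForms n e :=
  hC.mem_vanishingForms.2 ⟨hg.1, (hC.le_intersectionDivisor_iff hg).1 hn⟩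

theorem degree_intersectionDivisor_le (hg : IsNonzeroFormOn f g e) :
    (intersectionDivisor f g).degree ≤ d * e :=
  hC.degree_le_mul_of_form hg fun q => (hC.natCast_intersectionDivisor hg q).le

theorem intersectionDivisor_mul (hg : IsNonzeroFormOn f g e) (hh : IsNonzeroFormOn f h m) :
    intersectionDivisor f (g * h) = intersectionDivisor f g + intersectionDivisor f h := by
  ext q
  rw [← Nat.cast_inj (R := ℕ∞), hC.natCast_intersectionDivisor (hg.mul hC.prime hh),
    Finsupp.add_apply, Nat.cast_add, hC.natCast_intersectionDivisor hg,
    hC.natCast_intersectionDivisor hh, AddValuation.map_mul]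

theorem order_eq_of_dvd_sub (hgh : f ∣ g - h) (q : PlanePoint f) :
    hC.order q g = hC.order q h := by
  have hcongr : hC.order q (h + (g - h)) = hC.order q h :=
    AddValuation.map_add_supp _ _ (hC.order_eq_top_of_dvd q hgh)
  rwa [add_sub_cancel] at hcongr

theorem intersectionDivisor_eq_of_dvd_sub (hg : IsNonzeroFormOn f g e)
    (hh : IsNonzeroFormOn f h m) (hgh : f ∣ g - h) :
    intersectionDivisor f g = intersectionDivisor f h := by
  ext q
  rw [← Nat.cast_inj (R := ℕ∞), hC.natCast_intersectionDivisor hg,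
    hC.natCast_intersectionDivisor hh, hC.order_eq_of_dvd_sub hgh]

theorem isNonzeroFormOn_one : IsNonzeroFormOn f 1 0 :=
  ⟨isHomogeneous_one _ _, fun h => hC.prime.not_isUnit (isUnit_of_dvd_one h)⟩

theorem intersectionDivisor_one : intersectionDivisor f 1 = 0 := by
  ext q
  rw [← Nat.cast_inj (R := ℕ∞), hC.natCast_intersectionDivisor hC.isNonzeroFormOn_one]
  simp

theorem intersectionDivisor_prod {ι : Type*} {g : ι → MvPolynomial (Fin 3) k} {e : ι → ℕ}
    (s : Finset ι) (hg : ∀ i ∈ s, IsNonzeroFormOn f (g i) (e i)) :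
    intersectionDivisor f (∏ i ∈ s, g i) = ∑ i ∈ s, intersectionDivisor f (g i) := by
  classical
  induction s using Finset.induction_on with
  | empty => exact hC.intersectionDivisor_one
  | insert a s ha ih =>
    have hs : ∀ i ∈ s, IsNonzeroFormOn f (g i) (e i) := fun i hi =>
      hg i (Finset.mem_insert_of_mem hi)
    rw [Finset.prod_insert ha, Finset.sum_insert ha, hC.intersectionDivisor_mul
      (hg a (Finset.mem_insert_self a s)) (IsNonzeroFormOn.prod hC.prime s hs), ih hs]

theorem isNonzeroFormOn_linearForm {b : Fin 3 → k} (hb : b ≠ 0) :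
    IsNonzeroFormOn f (linearForm b) 1 :=
  ⟨isHomogeneous_linearForm b, hC.not_dvd_linearForm hb⟩

end Divisors

section Bezout

variable {k : Type*} [Field k] {f : MvPolynomial (Fin 3) k} {d : ℕ}
  (hC : IsSmoothPlaneCurve f d)

theorem natCast_card_le_order_prod {ι : Type*} (p : PlanePoint f)
    {g : ι → MvPolynomial (Fin 3) k} (s : Finset ι) (hg : ∀ i ∈ s, eval p.1.rep (g i) = 0) :
    (s.card : ℕ∞) ≤ hC.order p (∏ i ∈ s, g i) := by
  classical
  induction s using Finset.induction_on with
  | empty => simp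
  | insert a s ha ih =>
    rw [Finset.prod_insert ha, Finset.card_insert_of_notMem ha, AddValuation.map_mul, Nat.cast_add,
      Nat.cast_one, add_comm]
    exact add_le_add ((hC.one_le_order_iff p _).2 (hg a (Finset.mem_insert_self a s)))
      (ih fun i hi => hg i (Finset.mem_insert_of_mem hi))

include hC

-- Otherwise the gradient of `f` would vanish at `p`.
theorem eval_ne_zero_of_eq_mul_add_mul {x y l w : MvPolynomial (Fin 3) k} (p : PlanePoint f)
    (hf : f = x * y + l * w) (hx : eval p.1.rep x = 0) (hy : eval p.1.rep y = 0)
    (hl : eval p.1.rep l = 0) : eval p.1.rep w ≠ 0 := by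
  intro hw
  refine p.1.rep_nonzero (hC.smooth _ p.2 ((congrArg (gradientAt p.1.rep) hf).trans ?_))
  rw [gradientAt_add, gradientAt_mul_eq_zero hx hy, gradientAt_mul_eq_zero hl hw, add_zero]

theorem natCast_card_le_order_of_eq_prod_add_mul {ι : Type*} [Fintype ι] (p : PlanePoint f)
    {g : ι → MvPolynomial (Fin 3) k} {l w : MvPolynomial (Fin 3) k} {c : k}
    (hf : f = C c * ∏ i, g i + l * w) (s : Finset ι) (hl : s.Nonempty → eval p.1.rep l = 0)
    (hg : ∀ i ∈ s, eval p.1.rep (g i) = 0) : (s.card : ℕ∞) ≤ hC.order p l := by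
  classical
  rcases Nat.lt_or_ge 1 s.card with hs | hs
  · obtain ⟨i, hi, j, hj, hij⟩ := Finset.one_lt_card.1 hs
    have hw : hC.order p w = 0 := (hC.order_eq_zero_iff p w).2 <|
      hC.eval_ne_zero_of_eq_mul_add_mul p
        (x := g i) (y := g j * (C c * ∏ t ∈ (Finset.univ.erase i).erase j, g t))
        (by
          rw [hf, ← Finset.mul_prod_erase _ g (Finset.mem_univ i),
            ← Finset.mul_prod_erase _ g (Finset.mem_erase.2 ⟨hij.symm, Finset.mem_univ j⟩)]
          ring)
        (hg i hi) (by rw [map_mul, hg j hj, zero_mul]) (hl ⟨i, hi⟩)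
    have hcongr : hC.order p (-(C c * ∏ i, g i)) = hC.order p (l * w) :=
      hC.order_eq_of_dvd_sub ⟨-1, by linear_combination hf⟩ p
    rw [AddValuation.map_neg, AddValuation.map_mul _ l, hw, add_zero] at hcongr
    calc (s.card : ℕ∞) ≤ hC.order p (∏ i ∈ s, g i) := hC.natCast_card_le_order_prod p s hg
      _ ≤ hC.order p ((∏ i ∈ s, g i) * (C c * ∏ i ∈ sᶜ, g i)) := hC.order_le_order_mul_left p _ _
      _ = hC.order p (C c * ∏ i, g i) := by rw [← Finset.prod_mul_prod_compl s g, mul_left_comm]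
      _ = hC.order p l := hcongr
  · rcases s.eq_empty_or_nonempty with rfl | hne
    · simp
    · calc (s.card : ℕ∞) ≤ 1 := by exact_mod_cast hs
        _ ≤ hC.order p l := (hC.one_le_order_iff p l).2 (hl hne)

theorem le_degree_intersectionDivisor_linearForm [IsAlgClosed k] {b : Fin 3 → k} (hb : b ≠ 0) :
    d ≤ (intersectionDivisor f (linearForm b)).degree := by
  classical
  obtain ⟨c, L, w, hf⟩ := exists_eq_prod_linearForm_add_linearForm_mul hC.isHomogeneous hb
  have hpoint : ∀ i, ∃ q : PlanePoint f, eval q.1.rep (linearForm b) = 0 ∧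
      eval q.1.rep (linearForm (L i)) = 0 := fun i => by
    obtain ⟨v, hv, hbv, hLv⟩ := exists_ne_zero_dotProduct_eq_zero_and b (L i)
    have hfv : eval v f = 0 := by
      rw [hf, map_add, map_mul, map_mul, map_prod, eval_linearForm, hbv,
        Finset.prod_eq_zero (Finset.mem_univ i) (by rw [eval_linearForm, hLv])]
      ring
    obtain ⟨q, a, hq⟩ := exists_planePoint_rep_eq_smul hC.isHomogeneous hv hfv
    exact ⟨q, by simp [hq, hbv], by simp [hq, hLv]⟩
  choose q hqb hqL using hpoint
  have hle : ∑ i, Finsupp.single (q i) 1 ≤ intersectionDivisor f (linearForm b) := by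
    refine (hC.le_intersectionDivisor_iff (hC.isNonzeroFormOn_linearForm hb)).2 fun p => ?_
    have hcount : (∑ i, Finsupp.single (q i) 1 : PlanePoint f →₀ ℕ) p =
        (Finset.univ.filter fun i => q i = p).card := by
      simp only [Finsupp.finsetSum_apply, Finsupp.single_apply, Finset.sum_boole, Nat.cast_id]
    rw [hcount]
    refine hC.natCast_card_le_order_of_eq_prod_add_mul p hf _ ?_ fun i hi => ?_
    · rintro ⟨i, hi⟩
      rw [← (Finset.mem_filter.1 hi).2, hqb]
    · rw [← (Finset.mem_filter.1 hi).2, hqL]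
  simpa using Finsupp.degree_mono hle

theorem mul_le_degree_intersectionDivisor_prod_linearForm [IsAlgClosed k] {n : ℕ}
    {L : Fin n → Fin 3 → k} (hL : ∀ i, L i ≠ 0) :
    d * n ≤ (intersectionDivisor f (∏ i, linearForm (L i))).degree := by
  rw [hC.intersectionDivisor_prod _ fun i _ => hC.isNonzeroFormOn_linearForm (hL i), map_sum]
  calc d * n = ∑ _i : Fin n, d := by simp [mul_comm]
    _ ≤ _ := Finset.sum_le_sum fun i _ => hC.le_degree_intersectionDivisor_linearForm (hL i)

-- `g` times a form is congruent to a product of lines modulo `f`, and lines have degree `≥ d`.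
theorem degree_intersectionDivisor [IsAlgClosed k] {g : MvPolynomial (Fin 3) k} {e : ℕ}
    (hg : IsNonzeroFormOn f g e) : (intersectionDivisor f g).degree = d * e := by
  obtain ⟨n, L, y, z, hL, hz, hyz⟩ := exists_mul_add_mul_eq_prod_linearForm hC.isHomogeneous
    hg.1 hC.prime.ne_zero hg.ne_zero (hg.isRelPrime hC.prime)
  have hprod : IsNonzeroFormOn f (∏ i, linearForm (L i)) (∑ _i : Fin (d + e + n), 1) :=
    IsNonzeroFormOn.prod hC.prime _ fun i _ => hC.isNonzeroFormOn_linearForm (hL i)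
  have hz : IsNonzeroFormOn f z (d + n) := ⟨hz, fun hd =>
    hprod.2 (hyz ▸ dvd_add (dvd_mul_right f y) (dvd_mul_of_dvd_right hd g))⟩
  have hdiv : intersectionDivisor f (∏ i, linearForm (L i)) = intersectionDivisor f (g * z) :=
    hC.intersectionDivisor_eq_of_dvd_sub hprod (hg.mul hC.prime hz)
      ⟨y, by rw [← hyz]; ring⟩
  have hlower := hC.mul_le_degree_intersectionDivisor_prod_linearForm hL
  rw [hdiv, hC.intersectionDivisor_mul hg hz, map_add] at hlower
  have hupper_g := hC.degree_intersectionDivisor_le hg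
  have hupper_z := hC.degree_intersectionDivisor_le hz
  have hring : d * (d + e + n) = d * e + d * (d + n) := by ring
  omega

end Bezout

end IsSmoothPlaneCurve

theorem le_inf_add_of_add_eq_add {α : Type*} {x y D E : α →₀ ℕ} (h : y + D = x + E) :
    x ≤ x ⊓ y + D := by
  intro q
  have hq := DFunLike.congr_fun h q
  simp only [Finsupp.add_apply, Finsupp.inf_apply] at hq ⊢
  omega

theorem exists_eq_single_one_of_degree_eq_one {α : Type*} {n : α →₀ ℕ} (h : n.degree = 1) :
    ∃ p, n = Finsupp.single p 1 := by
  have hmem : n ∈ Set.range fun p : α => Finsupp.single p 1 := by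
    rwa [Finsupp.range_single_one]
  exact hmem.imp fun _ => Eq.symm

theorem exists_eq_C_of_isHomogeneous_zero {σ R : Type*} [CommSemiring R] {g : MvPolynomial σ R}
    (hg : g.IsHomogeneous 0) : ∃ c, g = C c :=
  ⟨_, totalDegree_eq_zero_iff_eq_C.1 ((totalDegree_zero_iff_isHomogeneous _).2 hg)⟩

theorem exists_eval_ne_zero {σ k : Type*} [Field k] [Infinite k] {g : MvPolynomial σ k}
    (hg : g ≠ 0) : ∃ v : σ → k, eval v g ≠ 0 := by
  by_contra! h
  exact hg (MvPolynomial.funext fun v => by rw [h v, map_zero])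

section FormRelations

variable {σ k : Type*} [Field k]

/-- The map `(u, v) ↦ u b - v a` on pairs of forms of degree `e`, whose value is a multiple of `f`
when `a / b = u / v` on the curve `f = 0`. -/
noncomputable def crossMul (a b : MvPolynomial σ k) (e : ℕ) :
    homogeneousSubmodule σ k e × homogeneousSubmodule σ k e →ₗ[k] MvPolynomial σ k :=
  (LinearMap.mulRight k b ∘ₗ Submodule.subtype _).coprod
    (-(LinearMap.mulRight k a ∘ₗ Submodule.subtype _))

@[simp]
theorem crossMul_apply (a b : MvPolynomial σ k) (e : ℕ)
    (x : homogeneousSubmodule σ k e × homogeneousSubmodule σ k e) :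
    crossMul a b e x = x.1.1 * b - x.2.1 * a := by
  simp [crossMul, sub_eq_add_neg]

/-- The pairs `(u, v)` of forms of degree `e` with `u b ≡ v a` modulo `f`, that is, with
`a / b = u / v` as functions on the curve `f = 0` when neither denominator vanishes on it. -/
noncomputable def formRelations (f a b : MvPolynomial σ k) (e : ℕ) :
    Submodule k (homogeneousSubmodule σ k e × homogeneousSubmodule σ k e) :=
  ((Ideal.span {f}).restrictScalars k).comap (crossMul a b e)

theorem mem_formRelations {f a b : MvPolynomial σ k} {e : ℕ}
    {x : homogeneousSubmodule σ k e × homogeneousSubmodule σ k e} :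
    x ∈ formRelations f a b e ↔ f ∣ x.1.1 * b - x.2.1 * a := by
  rw [formRelations, Submodule.mem_comap, Submodule.restrictScalars_mem,
    Ideal.mem_span_singleton, crossMul_apply]

/-- Evaluation of a pair of forms at a vector; its kernel consists of the pairs with a common zero
there. -/
noncomputable def evalPair (v : σ → k) (e : ℕ) :
    homogeneousSubmodule σ k e × homogeneousSubmodule σ k e →ₗ[k] k × k :=
  let evalAt := (aeval v).toLinearMap ∘ₗ (homogeneousSubmodule σ k e).subtype
  evalAt.prodMap evalAt

end FormRelations

namespace IsSmoothPlaneCurve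

section Pencils

variable {k : Type*} [Field k] {f a b u v : MvPolynomial (Fin 3) k} {d m n : ℕ}
  {D E Z : PlanePoint f →₀ ℕ} (hC : IsSmoothPlaneCurve f d)

include hC

theorem order_crossMul (ha : ∀ q, (Z q : ℕ∞) ≤ hC.order q a) (hb : ∀ q, (Z q : ℕ∞) ≤ hC.order q b)
    (q : PlanePoint f) (e : ℕ)
    (x : homogeneousSubmodule (Fin 3) k e × homogeneousSubmodule (Fin 3) k e) :
    (Z q : ℕ∞) ≤ hC.order q (crossMul a b e x) := by
  rw [crossMul_apply, mul_comm x.1.1, mul_comm x.2.1]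
  exact (hC.order q).map_le_sub ((hb q).trans (hC.order_le_order_mul_left q b _))
    ((ha q).trans (hC.order_le_order_mul_left q a _))

-- Forms of degree `d - 1 + m` vanishing on `Z + d² q` vanish on the curve, by Bézout.
theorem comap_orderGE_crossMul_le_formRelations (ha : a.IsHomogeneous m) (hb : b.IsHomogeneous m)
    (hZa : ∀ q, (Z q : ℕ∞) ≤ hC.order q a) (hZb : ∀ q, (Z q : ℕ∞) ≤ hC.order q b)
    (hZ : d * m ≤ Z.degree + (d - 1)) (q : PlanePoint f) :
    (hC.orderGE q (Z q + d * d)).comap (crossMul a b (d - 1)) ≤ formRelations f a b (d - 1) := by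
  classical
  intro x hx
  by_contra hnd
  rw [mem_formRelations, ← crossMul_apply] at hnd
  have hhom : (crossMul a b (d - 1) x).IsHomogeneous (d - 1 + m) := by
    rw [crossMul_apply]
    exact (x.1.2.mul hb).sub (x.2.2.mul ha)
  have hle := hC.degree_le_mul_of_form ⟨hhom, hnd⟩ (n := Z + Finsupp.single q (d * d)) fun r => by
    rw [Finsupp.add_apply]
    rcases eq_or_ne r q with rfl | hr
    · rw [Finsupp.single_eq_same]
      exact hx
    · rw [Finsupp.single_eq_of_ne hr, add_zero]
      exact hC.order_crossMul hZa hZb r _ x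
  rw [map_add, Finsupp.degree_single, mul_add] at hle
  obtain ⟨t, rfl⟩ : ∃ t, d = t + 1 := ⟨d - 1, by have := hC.two_le; omega⟩
  rw [Nat.add_sub_cancel] at hle hZ
  nlinarith

theorem le_finrank_formRelations (ha : a.IsHomogeneous m) (hb : b.IsHomogeneous m)
    (hZa : ∀ q, (Z q : ℕ∞) ≤ hC.order q a) (hZb : ∀ q, (Z q : ℕ∞) ≤ hC.order q b)
    (hZ : d * m ≤ Z.degree + (d - 1)) (q : PlanePoint f) :
    d ≤ Module.finrank k (formRelations f a b (d - 1)) := by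
  have hcond := hC.finrank_le_finrank_comap_orderGE_add q (crossMul a b (d - 1))
    (hC.order_crossMul hZa hZb q (d - 1)) (d * d)
  have hmono := Submodule.finrank_mono
    (hC.comap_orderGE_crossMul_le_formRelations ha hb hZa hZb hZ q)
  have hforms := two_mul_finrank_homogeneousSubmodule_fin_three (k := k) (d - 1)
  rw [Module.finrank_prod, ← two_mul, hforms] at hcond
  obtain ⟨t, rfl⟩ : ∃ t, d = t + 1 := ⟨d - 1, by have := hC.two_le; omega⟩
  rw [Nat.add_sub_cancel] at hcond hmono ⊢
  nlinarith

theorem isNonzeroFormOn_of_lt {g : MvPolynomial (Fin 3) k} {e : ℕ} (hg : g.IsHomogeneous e)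
    (hg0 : g ≠ 0) (he : e < d) : IsNonzeroFormOn f g e :=
  ⟨hg, hC.not_dvd_of_lt hg hg0 he⟩

theorem ne_zero_of_dvd_mul_sub_mul (ha : IsNonzeroFormOn f a m) (hb : IsNonzeroFormOn f b m)
    (hu : u.IsHomogeneous n) (hv : v.IsHomogeneous n) (hn : n < d) (huv : u ≠ 0 ∨ v ≠ 0)
    (hrel : f ∣ u * b - v * a) : u ≠ 0 ∧ v ≠ 0 := by
  constructor
  · rintro rfl
    rw [zero_mul, zero_sub, dvd_neg] at hrel
    exact ((hC.isNonzeroFormOn_of_lt hv (huv.resolve_left (· rfl)) hn).mul hC.prime ha).2 hrel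
  · rintro rfl
    rw [zero_mul, sub_zero] at hrel
    exact ((hC.isNonzeroFormOn_of_lt hu (huv.resolve_right (· rfl)) hn).mul hC.prime hb).2 hrel

theorem exists_isRelPrime_of_dvd_mul_sub_mul (hu : u.IsHomogeneous m) (hv : v.IsHomogeneous m)
    (hm : m < d) (hu0 : u ≠ 0) (hv0 : v ≠ 0) (hrel : f ∣ u * b - v * a) :
    ∃ (e n : ℕ) (c u' v' : MvPolynomial (Fin 3) k), e + n = m ∧ c ≠ 0 ∧ c.IsHomogeneous e ∧
      u = c * u' ∧ v = c * v' ∧ IsNonzeroFormOn f u' n ∧ IsNonzeroFormOn f v' n ∧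
      IsRelPrime u' v' ∧ f ∣ u' * b - v' * a := by
  obtain ⟨u', v', c, hrp, rfl, rfl⟩ := UniqueFactorizationMonoid.exists_reduced_factors u hu0 v
  obtain ⟨e, n, hce, hun, rfl⟩ := exists_isHomogeneous_of_mul hu hu0
  have hc0 : c ≠ 0 := left_ne_zero_of_mul hu0
  have hvn : v'.IsHomogeneous n := isHomogeneous_of_mul_right hce hc0 hv
  have hfc : ¬ f ∣ c := hC.not_dvd_of_lt hce hc0 (by omega)
  refine ⟨e, n, c, u', v', rfl, hc0, hce, rfl, rfl,
    hC.isNonzeroFormOn_of_lt hun (right_ne_zero_of_mul hu0) (by omega),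
    hC.isNonzeroFormOn_of_lt hvn (right_ne_zero_of_mul hv0) (by omega), hrp, ?_⟩
  rw [mul_assoc, mul_assoc, ← mul_sub] at hrel
  exact (hC.prime.dvd_or_dvd hrel).resolve_left hfc

theorem inf_intersectionDivisor_mem_vanishingForms (ha : IsNonzeroFormOn f a m)
    (hb : IsNonzeroFormOn f b n) :
    a ∈ hC.vanishingForms (intersectionDivisor f a ⊓ intersectionDivisor f b) m ∧
      b ∈ hC.vanishingForms (intersectionDivisor f a ⊓ intersectionDivisor f b) n :=
  ⟨hC.mem_vanishingForms_of_le ha inf_le_left, hC.mem_vanishingForms_of_le hb inf_le_right⟩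

-- The pairs `(a, b)` and `(u, v)` define the same rational function on the curve.
theorem intersectionDivisor_add_eq_of_dvd (ha : IsNonzeroFormOn f a m)
    (hb : IsNonzeroFormOn f b m) (hu : IsNonzeroFormOn f u n) (hv : IsNonzeroFormOn f v n)
    (hrel : f ∣ u * b - v * a) (hDE : intersectionDivisor f b + D = intersectionDivisor f a + E) :
    intersectionDivisor f v + D = intersectionDivisor f u + E := by
  have hdiv := hC.intersectionDivisor_eq_of_dvd_sub (hu.mul hC.prime hb) (hv.mul hC.prime ha) hrel
  rw [hC.intersectionDivisor_mul hu hb, hC.intersectionDivisor_mul hv ha] at hdiv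
  refine add_left_cancel (a := intersectionDivisor f a) ?_
  rw [← add_assoc, add_comm _ (intersectionDivisor f v), ← hdiv, add_assoc, hDE, add_left_comm]

variable [IsAlgClosed k]

theorem mul_le_degree_inf_add (ha : IsNonzeroFormOn f a m)
    (hDE : intersectionDivisor f b + D = intersectionDivisor f a + E) :
    d * m ≤ (intersectionDivisor f a ⊓ intersectionDivisor f b).degree + D.degree := by
  rw [← hC.degree_intersectionDivisor ha, ← map_add]
  exact Finsupp.degree_mono (le_inf_add_of_add_eq_add hDE)

theorem le_finrank_formRelations_of_add_eq_add (ha : IsNonzeroFormOn f a m)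
    (hb : IsNonzeroFormOn f b m) (hD : D.degree = d - 1)
    (hDE : intersectionDivisor f b + D = intersectionDivisor f a + E) :
    d ≤ Module.finrank k (formRelations f a b (d - 1)) := by
  obtain ⟨q, -⟩ : ∃ q, D q ≠ 0 := by
    by_contra! h
    have h2 := hC.two_le
    rw [(Finsupp.ext h : D = 0), map_zero] at hD
    omega
  obtain ⟨hZa, hZb⟩ := hC.inf_intersectionDivisor_mem_vanishingForms ha hb
  exact hC.le_finrank_formRelations ha.1 hb.1 (hC.mem_vanishingForms.1 hZa).2
    (hC.mem_vanishingForms.1 hZb).2 (hD ▸ hC.mul_le_degree_inf_add ha hDE) q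

theorem exists_mem_formRelations_ne_zero (ha : IsNonzeroFormOn f a m)
    (hb : IsNonzeroFormOn f b m) (hD : D.degree = d - 1)
    (hDE : intersectionDivisor f b + D = intersectionDivisor f a + E) (P : Fin 3 → k) :
    ∃ x ∈ formRelations f a b (d - 1), x ≠ 0 ∧ (3 ≤ d → evalPair P (d - 1) x = 0) := by
  have hdim := hC.le_finrank_formRelations_of_add_eq_add ha hb hD hDE
  have h2 := hC.two_le
  rcases Nat.lt_or_ge 2 d with hd | hd
  · let evalAt : formRelations f a b (d - 1) →ₗ[k] k × k := (evalPair P (d - 1)).domRestrict _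
    have hpair : Module.finrank k (k × k) = 2 := by simp
    have hker : LinearMap.ker evalAt ≠ ⊥ :=
      LinearMap.ker_ne_bot_of_finrank_lt (V := formRelations f a b (d - 1)) (V₂ := k × k) (by omega)
    obtain ⟨x, hx, hx0⟩ := Submodule.exists_mem_ne_zero_of_ne_bot hker
    exact ⟨x, x.2, fun h => hx0 (Subtype.ext h), fun _ => hx⟩
  · have hne : formRelations f a b (d - 1) ≠ ⊥ := by
      intro hbot
      rw [hbot, finrank_bot] at hdim
      omega
    obtain ⟨x, hx, hx0⟩ := Submodule.exists_mem_ne_zero_of_ne_bot hne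
    exact ⟨x, hx, hx0, fun hd' => absurd hd' (by omega)⟩

-- Among the degrees below `d`, the bound `n d ≤ n² + d - 1` leaves `n ≤ 1` and `n = d - 1`; in the
-- last case equality holds, so that `P` cannot be an additional common zero.
theorem degree_le_one_of_isRelPrime {P : Fin 3 → k} (hP : eval P f ≠ 0) (hP0 : P ≠ 0)
    (hu : IsNonzeroFormOn f u n) (hv : IsNonzeroFormOn f v n) (hn : n < d)
    (huv : IsRelPrime u v) (hD : D.degree = d - 1)
    (hDE : intersectionDivisor f v + D = intersectionDivisor f u + E)
    (hPuv : 3 ≤ d → n = d - 1 → eval P u = 0 ∧ eval P v = 0) : n ≤ 1 := by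
  obtain ⟨hZu, hZv⟩ := hC.inf_intersectionDivisor_mem_vanishingForms hu hv
  have hlower := hC.mul_le_degree_inf_add hu hDE
  have hupper := hC.degree_le_mul_of_isRelPrime hZu hZv hu.ne_zero hv.ne_zero huv
  rw [hD] at hlower
  by_contra! hn1
  obtain ⟨t, rfl⟩ : ∃ t, n = t + 2 := ⟨n - 2, by omega⟩
  obtain ⟨s, rfl⟩ : ∃ s, d = t + 3 + s := ⟨d - (t + 3), by omega⟩
  rw [show t + 3 + s - 1 = t + 2 + s by omega] at hlower hPuv
  have hs : s = 0 := by nlinarith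
  subst hs
  obtain ⟨hPu, hPv⟩ := hPuv (by omega) rfl
  have hstrict := hC.degree_lt_mul_of_isRelPrime_of_eval_eq_zero hZu hZv hu.ne_zero hv.ne_zero huv
    hP hP0 hPu hPv
  nlinarith

theorem exists_isRelPrime_dvd_mul_sub_mul (ha : IsNonzeroFormOn f a m)
    (hb : IsNonzeroFormOn f b m) (hD : D.degree = d - 1)
    (hDE : intersectionDivisor f b + D = intersectionDivisor f a + E) :
    ∃ n ≤ 1, ∃ u v : MvPolynomial (Fin 3) k, IsNonzeroFormOn f u n ∧ IsNonzeroFormOn f v n ∧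
      IsRelPrime u v ∧ f ∣ u * b - v * a := by
  have := IsAlgClosed.instInfinite (K := k)
  have h2 := hC.two_le
  obtain ⟨P, hP⟩ := exists_eval_ne_zero hC.prime.ne_zero
  have hP0 : P ≠ 0 := by
    rintro rfl
    refine hP ?_
    rw [← zero_smul k 0, eval_smul_of_isHomogeneous hC.isHomogeneous, zero_pow (by omega), zero_mul]
  obtain ⟨⟨⟨u, hu⟩, ⟨v, hv⟩⟩, hrel, hne, hPx⟩ := hC.exists_mem_formRelations_ne_zero ha hb hD hDE P
  rw [mem_formRelations] at hrel
  have huv : u ≠ 0 ∨ v ≠ 0 := by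
    by_contra! h
    exact hne (Prod.ext (Subtype.ext h.1) (Subtype.ext h.2))
  obtain ⟨hu0, hv0⟩ := hC.ne_zero_of_dvd_mul_sub_mul ha hb hu hv (by omega) huv hrel
  obtain ⟨e, n, c, u', v', hen, hc0, hc, rfl, rfl, hu', hv', hrp, hrel'⟩ :=
    hC.exists_isRelPrime_of_dvd_mul_sub_mul hu hv (by omega) hu0 hv0 hrel
  refine ⟨n, ?_, u', v', hu', hv', hrp, hrel'⟩
  refine hC.degree_le_one_of_isRelPrime hP hP0 hu' hv' (by omega) hrp hD
    (hC.intersectionDivisor_add_eq_of_dvd ha hb hu' hv' hrel' hDE) fun hd hn => ?_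
  obtain rfl : e = 0 := by omega
  obtain ⟨c, rfl⟩ := exists_eq_C_of_isHomogeneous_zero hc
  have hc : c ≠ 0 := by simpa using hc0
  simpa [evalPair, aeval_eq_eval, hc] using hPx hd

theorem exists_intersectionDivisor_eq_single_add (hu : IsNonzeroFormOn f u 1)
    (hv : IsNonzeroFormOn f v 1) (huv : IsRelPrime u v) (hD : D.degree = d - 1)
    (hDE : intersectionDivisor f v + D = intersectionDivisor f u + E) :
    ∃ p, intersectionDivisor f u = Finsupp.single p 1 + D := by
  obtain ⟨hZu, hZv⟩ := hC.inf_intersectionDivisor_mem_vanishingForms hu hv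
  have hupper := hC.degree_le_mul_of_isRelPrime hZu hZv hu.ne_zero hv.ne_zero huv
  have hdeg := hC.degree_intersectionDivisor hu
  have h2 := hC.two_le
  obtain ⟨R, hR⟩ := exists_add_of_le (le_inf_add_of_add_eq_add hDE)
  have hRdeg := congrArg Finsupp.degree hR
  rw [map_add, map_add, hdeg, hD] at hRdeg
  obtain ⟨p, hp⟩ := exists_eq_single_one_of_degree_eq_one
    (show (intersectionDivisor f u ⊓ intersectionDivisor f v).degree = 1 by omega)
  rw [(Finsupp.degree_eq_zero_iff R).1 (by omega), add_zero, hp] at hR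
  exact ⟨p, hR.symm⟩

theorem dvd_sub_or_exists_intersectionDivisor_eq_single_add (ha : IsNonzeroFormOn f a m)
    (hb : IsNonzeroFormOn f b m) (hD : D.degree = d - 1)
    (hDE : intersectionDivisor f b + D = intersectionDivisor f a + E) :
    (∃ c₁ c₂ : k, c₁ ≠ 0 ∧ f ∣ C c₁ * b - C c₂ * a) ∨
      ∃ l p, IsNonzeroFormOn f l 1 ∧ intersectionDivisor f l = Finsupp.single p 1 + D := by
  obtain ⟨n, hn, u, v, hu, hv, huv, hrel⟩ := hC.exists_isRelPrime_dvd_mul_sub_mul ha hb hD hDE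
  obtain rfl | rfl := Nat.le_one_iff_eq_zero_or_eq_one.1 hn
  · left
    obtain ⟨c₁, rfl⟩ := exists_eq_C_of_isHomogeneous_zero hu.1
    obtain ⟨c₂, rfl⟩ := exists_eq_C_of_isHomogeneous_zero hv.1
    exact ⟨c₁, c₂, by simpa using hu.ne_zero, hrel⟩
  · right
    obtain ⟨p, hp⟩ := hC.exists_intersectionDivisor_eq_single_add hu hv huv hD
      (hC.intersectionDivisor_add_eq_of_dvd ha hb hu hv hrel hDE)
    exact ⟨u, p, hu, hp⟩

end Pencils

end IsSmoothPlaneCurve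

/-- A divisor with natural number coefficients, regarded as one with integer coefficients. -/
noncomputable def intDivisor {α : Type*} : (α →₀ ℕ) →+ (α →₀ ℤ) :=
  Finsupp.mapRange.addMonoidHom (Nat.castAddMonoidHom ℤ)

section IntDivisor

variable {α : Type*}

@[simp]
theorem intDivisor_apply (n : α →₀ ℕ) (q : α) : intDivisor n q = n q := rfl

theorem intDivisor_injective : Function.Injective (intDivisor : (α →₀ ℕ) → (α →₀ ℤ)) :=
  Finsupp.mapRange_injective _ Nat.cast_zero Nat.cast_injective

theorem degree_intDivisor (n : α →₀ ℕ) : (intDivisor n).degree = n.degree := by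
  have hcomp : (Finsupp.degree : (α →₀ ℤ) →+ ℤ).comp intDivisor =
      (Nat.castAddMonoidHom ℤ).comp Finsupp.degree := by
    ext q
    simp [intDivisor]
  exact DFunLike.congr_fun hcomp n

theorem exists_intDivisor_eq {X : α →₀ ℤ} (hX : ∀ q, 0 ≤ X q) : ∃ n, intDivisor n = X :=
  ⟨X.mapRange Int.toNat rfl, Finsupp.ext fun q => by simp [hX q]⟩

end IntDivisor

theorem exists_ne_zero_exists_notMem_span_singleton {K V : Type*} [Field K] [AddCommGroup V]
    [Module K V] {s : Set V} (h : 2 ≤ Module.finrank K (Submodule.span K s)) :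
    ∃ x ∈ s, x ≠ 0 ∧ ∃ y ∈ s, y ∉ Submodule.span K {x} := by
  obtain ⟨x, hx, hx0⟩ : ∃ x ∈ s, x ≠ 0 := by
    by_contra! h0
    rw [Submodule.span_eq_bot.2 h0, finrank_bot] at h
    omega
  refine ⟨x, hx, hx0, ?_⟩
  by_contra! hspan
  have hle := Submodule.finrank_mono (Submodule.span_le.2 hspan)
  rw [finrank_span_singleton hx0] at hle
  omega

/-- The restriction of a polynomial to the curve `f = 0`, as an element of the fraction field `F`
of the homogeneous coordinate ring. -/
noncomputable def toFractionField {σ k : Type*} [Field k] (f : MvPolynomial σ k) (F : Type*)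
    [CommRing F] [Algebra (MvPolynomial σ k ⧸ Ideal.span {f}) F] : MvPolynomial σ k →+* F :=
  (algebraMap (MvPolynomial σ k ⧸ Ideal.span {f}) F).comp (Ideal.Quotient.mk (Ideal.span {f}))

section ToFractionField

variable {σ k : Type*} [Field k] {f : MvPolynomial σ k} {F : Type*} [Field F]
  [Algebra (MvPolynomial σ k ⧸ Ideal.span {f}) F]

theorem toFractionField_C [Algebra k F]
    [IsScalarTower k (MvPolynomial σ k ⧸ Ideal.span {f}) F] (c : k) :
    toFractionField f F (C c) = algebraMap k F c :=
  (IsScalarTower.algebraMap_apply k (MvPolynomial σ k ⧸ Ideal.span {f}) F c).symm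

variable [IsFractionRing (MvPolynomial σ k ⧸ Ideal.span {f}) F]

theorem toFractionField_eq_zero_iff {g : MvPolynomial σ k} :
    toFractionField f F g = 0 ↔ f ∣ g := by
  rw [toFractionField, RingHom.comp_apply, IsFractionRing.to_map_eq_zero_iff,
    Ideal.Quotient.eq_zero_iff_mem, Ideal.mem_span_singleton]

theorem mem_span_singleton_of_dvd_sub [Algebra k F]
    [IsScalarTower k (MvPolynomial σ k ⧸ Ideal.span {f}) F] {φ₁ φ₂ : F}
    {g₁ h₁ g₂ h₂ : MvPolynomial σ k} (hh₁ : ¬ f ∣ h₁) (hh₂ : ¬ f ∣ h₂)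
    (hφ₁ : φ₁ * toFractionField f F h₁ = toFractionField f F g₁)
    (hφ₂ : φ₂ * toFractionField f F h₂ = toFractionField f F g₂) {c₁ c₂ : k} (hc₁ : c₁ ≠ 0)
    (hdvd : f ∣ C c₁ * (g₂ * h₁) - C c₂ * (h₂ * g₁)) : φ₂ ∈ Submodule.span k {φ₁} := by
  rw [← toFractionField_eq_zero_iff (F := F)] at hdvd hh₁ hh₂
  simp only [map_sub, map_mul, toFractionField_C] at hdvd
  have hprop : algebraMap k F c₁ * φ₂ = algebraMap k F c₂ * φ₁ := by
    apply mul_right_cancel₀ (mul_ne_zero hh₁ hh₂)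
    linear_combination hdvd - algebraMap k F c₂ * toFractionField f F h₂ * hφ₁
      + algebraMap k F c₁ * toFractionField f F h₁ * hφ₂
  refine Submodule.mem_span_singleton.2 ⟨c₁⁻¹ * c₂, ?_⟩
  rw [mul_smul, Algebra.smul_def c₂, ← hprop, ← Algebra.smul_def, inv_smul_smul₀ hc₁]

end ToFractionField

theorem prime_of_isFractionRing {σ k : Type*} [Field k] {f : MvPolynomial σ k} (hf0 : f ≠ 0)
    (F : Type*) [Field F] [Algebra (MvPolynomial σ k ⧸ Ideal.span {f}) F]
    [IsFractionRing (MvPolynomial σ k ⧸ Ideal.span {f}) F] : Prime f := by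
  have hdomain : IsDomain (MvPolynomial σ k ⧸ Ideal.span {f}) :=
    (IsFractionRing.injective (MvPolynomial σ k ⧸ Ideal.span {f}) F).isDomain (algebraMap _ F)
  rwa [Ideal.Quotient.isDomain_iff_prime, Ideal.span_singleton_prime hf0] at hdomain

theorem isSmoothPlaneCurve_of_isFractionRing {k : Type*} [Field k] {f : MvPolynomial (Fin 3) k}
    {d : ℕ} (hf : f.IsHomogeneous d) (hd : 2 ≤ d)
    (hsm : ∀ v : Fin 3 → k, eval v f = 0 → (∀ i : Fin 3, eval v (pderiv i f) = 0) → v = 0)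
    (F : Type*) [Field F] [Algebra (MvPolynomial (Fin 3) k ⧸ Ideal.span {f}) F]
    [IsFractionRing (MvPolynomial (Fin 3) k ⧸ Ideal.span {f}) F] : IsSmoothPlaneCurve f d where
  isHomogeneous := hf
  two_le := hd
  prime := by
    refine prime_of_isFractionRing ?_ F
    rintro rfl
    exact one_ne_zero (congrFun (hsm 1 (by simp) (by simp)) 0)
  smooth v hv hgrad := hsm v hv (congrFun hgrad)

namespace IsSmoothPlaneCurve

section Sections

variable {k : Type*} [Field k] {f : MvPolynomial (Fin 3) k} {d : ℕ} (hC : IsSmoothPlaneCurve f d)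
  {F : Type*} [CommRing F] [Algebra (MvPolynomial (Fin 3) k ⧸ Ideal.span {f}) F]

include hC

theorem exists_intDivisor_of_mem_RRspace {D : PlanePoint f →₀ ℤ} {φ : F}
    (hφ : φ ∈ RRspace F f D) (hφ0 : φ ≠ 0) :
    ∃ (e : ℕ) (g h : MvPolynomial (Fin 3) k) (E : PlanePoint f →₀ ℕ),
      IsNonzeroFormOn f g e ∧ IsNonzeroFormOn f h e ∧
      φ * toFractionField f F h = toFractionField f F g ∧
      D + intDivisor (intersectionDivisor f g) = intDivisor (intersectionDivisor f h + E) := by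
  obtain ⟨e, g, h, hg, hh, hfg, hfh, heq, hnonneg⟩ := hφ.resolve_left hφ0
  obtain ⟨E, hE⟩ := exists_intDivisor_eq (X := D + intDivisor (intersectionDivisor f g) -
    intDivisor (intersectionDivisor f h)) fun q => by
      have hq := hnonneg q
      rw [← hC.intersectionDivisor_apply ⟨hg, hfg⟩, ← hC.intersectionDivisor_apply ⟨hh, hfh⟩] at hq
      simp only [Finsupp.sub_apply, Finsupp.add_apply, intDivisor_apply]
      omega
  refine ⟨e, g, h, E, ⟨hg, hfg⟩, ⟨hh, hfh⟩, heq, ?_⟩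
  rw [map_add, hE, add_sub_cancel]

theorem degree_eq_of_add_intDivisor_eq [IsAlgClosed k] {D : PlanePoint f →₀ ℤ}
    {E : PlanePoint f →₀ ℕ} {g h : MvPolynomial (Fin 3) k} {e : ℕ} (hg : IsNonzeroFormOn f g e)
    (hh : IsNonzeroFormOn f h e)
    (hE : D + intDivisor (intersectionDivisor f g) = intDivisor (intersectionDivisor f h + E)) :
    (E.degree : ℤ) = D.degree := by
  have hdeg := congrArg Finsupp.degree hE
  simp only [map_add, degree_intDivisor, hC.degree_intersectionDivisor hg,
    hC.degree_intersectionDivisor hh] at hdeg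
  linarith

theorem intersectionDivisor_mul_add_eq {D : PlanePoint f →₀ ℤ} {E₁ E₂ : PlanePoint f →₀ ℕ}
    {g₁ h₁ g₂ h₂ : MvPolynomial (Fin 3) k} {e₁ e₂ : ℕ} (hg₁ : IsNonzeroFormOn f g₁ e₁)
    (hh₁ : IsNonzeroFormOn f h₁ e₁) (hg₂ : IsNonzeroFormOn f g₂ e₂)
    (hh₂ : IsNonzeroFormOn f h₂ e₂)
    (hE₁ : D + intDivisor (intersectionDivisor f g₁) = intDivisor (intersectionDivisor f h₁ + E₁))
    (hE₂ : D + intDivisor (intersectionDivisor f g₂) = intDivisor (intersectionDivisor f h₂ + E₂)) :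
    intersectionDivisor f (g₂ * h₁) + E₁ = intersectionDivisor f (h₂ * g₁) + E₂ := by
  apply intDivisor_injective
  rw [hC.intersectionDivisor_mul hg₂ hh₁, hC.intersectionDivisor_mul hh₂ hg₁]
  simp only [map_add] at hE₁ hE₂ ⊢
  linear_combination (norm := module) hE₂ - hE₁

end Sections

theorem exists_add_intDivisor_eq_of_two_le_h0 {k : Type*} [Field k] [IsAlgClosed k]
    {f : MvPolynomial (Fin 3) k} {d : ℕ} (hC : IsSmoothPlaneCurve f d) {F : Type*} [Field F]
    [Algebra (MvPolynomial (Fin 3) k ⧸ Ideal.span {f}) F]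
    [IsFractionRing (MvPolynomial (Fin 3) k ⧸ Ideal.span {f}) F]
    [Algebra k F] [IsScalarTower k (MvPolynomial (Fin 3) k ⧸ Ideal.span {f}) F]
    {D : PlanePoint f →₀ ℤ} (hdeg : D.degree = (d : ℤ) - 1) (h2 : 2 ≤ h0 F f (fun q => D q)) :
    ∃ (p : PlanePoint f) (l g h : MvPolynomial (Fin 3) k) (e : ℕ),
      IsNonzeroFormOn f l 1 ∧ IsNonzeroFormOn f g e ∧ IsNonzeroFormOn f h e ∧
      D + intDivisor (Finsupp.single p 1 + intersectionDivisor f h) =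
        intDivisor (intersectionDivisor f l + intersectionDivisor f g) := by
  obtain ⟨φ₁, hφ₁, hφ₁0, φ₂, hφ₂, hspan⟩ := exists_ne_zero_exists_notMem_span_singleton h2
  have hφ₂0 : φ₂ ≠ 0 := fun h => hspan (h ▸ Submodule.zero_mem _)
  obtain ⟨e₁, g₁, h₁, E₁, hg₁, hh₁, heq₁, hE₁⟩ := hC.exists_intDivisor_of_mem_RRspace hφ₁ hφ₁0
  obtain ⟨e₂, g₂, h₂, E₂, hg₂, hh₂, heq₂, hE₂⟩ := hC.exists_intDivisor_of_mem_RRspace hφ₂ hφ₂0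
  have hdegE₁ : (E₁.degree : ℤ) = d - 1 :=
    (hC.degree_eq_of_add_intDivisor_eq hg₁ hh₁ hE₁).trans hdeg
  rcases hC.dvd_sub_or_exists_intersectionDivisor_eq_single_add (hh₂.mul hC.prime hg₁)
    (hg₂.mul hC.prime hh₁) (by omega)
    (hC.intersectionDivisor_mul_add_eq hg₁ hh₁ hg₂ hh₂ hE₁ hE₂) with
    ⟨c₁, c₂, hc₁, hdvd⟩ | ⟨l, p, hl, hdiv⟩
  · exact absurd (mem_span_singleton_of_dvd_sub hh₁.2 hh₂.2 heq₁ heq₂ hc₁ hdvd) hspan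
  · refine ⟨p, l, h₁, g₁, e₁, hl, hh₁, hg₁, ?_⟩
    rw [hdiv, map_add, add_left_comm, hE₁]
    simp only [map_add]
    abel

end IsSmoothPlaneCurve

end PlaneCurves

open Classical in
theorem g1_d_sub_one_is_line_section_minus_point_general
    (k : Type*) [Field k] [IsAlgClosed k]
    (d : ℕ) (hd : 2 ≤ d) (f : MvPolynomial (Fin 3) k) (hf : f.IsHomogeneous d)
    (hsm : ∀ v : Fin 3 → k, MvPolynomial.eval v f = 0 →
      (∀ i : Fin 3, MvPolynomial.eval v (MvPolynomial.pderiv i f) = 0) → v = 0)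
    (F : Type*) [Field F]
    [Algebra (MvPolynomial (Fin 3) k ⧸ Ideal.span {f}) F]
    [IsFractionRing (MvPolynomial (Fin 3) k ⧸ Ideal.span {f}) F]
    [Algebra k F] [IsScalarTower k (MvPolynomial (Fin 3) k ⧸ Ideal.span {f}) F]
    (D : PlanePoint f →₀ ℤ) (hdeg : D.sum (fun _ n => n) = (d : ℤ) - 1)
    (h2 : 2 ≤ h0 F f (fun q => D q)) :
    ∃ (p : PlanePoint f) (l g h : MvPolynomial (Fin 3) k) (e : ℕ),
      l.IsHomogeneous 1 ∧ l ≠ 0 ∧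
      g.IsHomogeneous e ∧ h.IsHomogeneous e ∧ ¬ f ∣ g ∧ ¬ f ∣ h ∧
      ∀ q : PlanePoint f,
        (D q : ℤ) - (ordAt f q l : ℤ) + (if q = p then 1 else 0)
          = (ordAt f q g : ℤ) - (ordAt f q h : ℤ) := by
  have hC := isSmoothPlaneCurve_of_isFractionRing hf hd hsm F
  obtain ⟨p, l, g, h, e, hl, hg, hh, hdiv⟩ := hC.exists_add_intDivisor_eq_of_two_le_h0 hdeg h2
  refine ⟨p, l, g, h, e, hl.1, hl.ne_zero, hg.1, hh.1, hg.2, hh.2, fun q => ?_⟩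
  have hq := DFunLike.congr_fun hdiv q
  simp only [Finsupp.add_apply, intDivisor_apply, hC.intersectionDivisor_apply hl,
    hC.intersectionDivisor_apply hg, hC.intersectionDivisor_apply hh, Finsupp.single_apply,
    eq_comm (a := p)] at hq
  push_cast at hq
  linarith

open Classical in
/-- On a smooth plane curve `C ⊆ ℙ²_k` of degree `d ≥ 4` over an algebraically closed field,
every `g¹_{d-1}` is of the form `O_C(1)(-p)`: every divisor `D` of degree `d - 1` with
`ℓ(D) ≥ 2` is linearly equivalent to `H - p` for some point `p ∈ C`, where `H` is the
intersection divisor of `C` with a line (i.e. `D - (H - p)` is the divisor of a rational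
function `g/h` on `C`). -/
theorem g1_d_sub_one_is_line_section_minus_point
    (k : Type*) [Field k] [IsAlgClosed k]
    (d : ℕ) (hd : 4 ≤ d) (f : MvPolynomial (Fin 3) k) (hf : f.IsHomogeneous d)
    (hsm : ∀ v : Fin 3 → k, MvPolynomial.eval v f = 0 →
      (∀ i : Fin 3, MvPolynomial.eval v (MvPolynomial.pderiv i f) = 0) → v = 0)
    (F : Type*) [Field F]
    [Algebra (MvPolynomial (Fin 3) k ⧸ Ideal.span {f}) F]
    [IsFractionRing (MvPolynomial (Fin 3) k ⧸ Ideal.span {f}) F]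
    [Algebra k F] [IsScalarTower k (MvPolynomial (Fin 3) k ⧸ Ideal.span {f}) F]
    (D : PlanePoint f →₀ ℤ) (hdeg : D.sum (fun _ n => n) = (d : ℤ) - 1)
    (h2 : 2 ≤ h0 F f (fun q => D q)) :
    ∃ (p : PlanePoint f) (l g h : MvPolynomial (Fin 3) k) (e : ℕ),
      l.IsHomogeneous 1 ∧ l ≠ 0 ∧
      g.IsHomogeneous e ∧ h.IsHomogeneous e ∧ ¬ f ∣ g ∧ ¬ f ∣ h ∧
      ∀ q : PlanePoint f,
        (D q : ℤ) - (ordAt f q l : ℤ) + (if q = p then 1 else 0)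
          = (ordAt f q g : ℤ) - (ordAt f q h : ℤ) :=
  g1_d_sub_one_is_line_section_minus_point_general k d (by omega) f hf hsm F D hdeg h2
end
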